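/- arXiv:1511.06808 — 2 statements merged into one kernel-verified Lean document; each statement's English description precedes it below -/
import Mathlib

section
/- Let D be a hereditarily convex good drawing of K_n in the sphere, with chosen convex discs Δ_T for each 3-cycle T. Then for every 3-cycle T and every edge uv of T, there exists a 3-cycle T′ containing the edge uv such that Δ_{T′} ⊆ Δ_T and the interior of Δ_{T′} is an empty triangle of D. -/
open Set Topology

noncomputable section

abbrev Plane : Type := EuclideanSpace ℝ (Fin 2)

abbrev SpherePt : Type := ↥(Metric.sphere (0 : EuclideanSpace ℝ (Fin 3)) 1)

/-- `γ` crosses the curve `σ` at `p`: `p` lies on both sets, and in every neighbourhood of `p`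
there is a smaller neighbourhood `V` such that `V \ σ` splits into two connected "sides",
both of which meet `γ`. -/
def CrossesAt {X : Type*} [TopologicalSpace X] (σ γ : Set X) (p : X) : Prop :=
  p ∈ σ ∧ p ∈ γ ∧ ∀ U ∈ nhds p, ∃ V ∈ nhds p, V ⊆ U ∧
    ∃ C₁ C₂ : Set X, V \ σ = C₁ ∪ C₂ ∧ Disjoint C₁ C₂ ∧
      IsPreconnected C₁ ∧ IsPreconnected C₂ ∧ (γ ∩ C₁).Nonempty ∧ (γ ∩ C₂).Nonempty

/-- `Δ` is one of the closed regions ("closed discs") bounded by the curve `C`: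
it is the union of `C` with a connected component of the complement of `C`. -/
def IsClosedSide {X : Type*} [TopologicalSpace X] (C Δ : Set X) : Prop :=
  ∃ q, q ∉ C ∧ Δ = connectedComponentIn Cᶜ q ∪ C

/-- `Δ` is one of the open regions ("open discs") bounded by the curve `C`. -/
def IsOpenSide {X : Type*} [TopologicalSpace X] (C Δ : Set X) : Prop :=
  ∃ q, q ∉ C ∧ Δ = connectedComponentIn Cᶜ q

/-- `G` is a face (a connected component of the complement) of the point set `A`. -/
def IsFaceOf {X : Type*} [TopologicalSpace X] (A G : Set X) : Prop :=
  ∃ q, q ∉ A ∧ G = connectedComponentIn Aᶜ q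

/-- A good drawing of the complete graph `K_n` in the space `X`. -/
structure GoodDrawing (n : ℕ) (X : Type*) [TopologicalSpace X] where
  vtx : Fin n → X
  arc : Fin n → Fin n → Set X
  vtx_inj : Function.Injective vtx
  arc_symm : ∀ u v, arc u v = arc v u
  isArc : ∀ u v, u ≠ v → ∃ f : ℝ → X, ContinuousOn f (Set.Icc 0 1) ∧
    Set.InjOn f (Set.Icc 0 1) ∧ f 0 = vtx u ∧ f 1 = vtx v ∧ arc u v = f '' Set.Icc 0 1
  vtx_not_mem : ∀ u v w, u ≠ v → w ≠ u → w ≠ v → vtx w ∉ arc u v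
  adj_arcs : ∀ u v w, u ≠ v → u ≠ w → v ≠ w → arc u v ∩ arc u w = {vtx u}
  indep_arcs : ∀ u v x y : Fin n, u ≠ v → x ≠ y → u ≠ x → u ≠ y → v ≠ x → v ≠ y →
    (arc u v ∩ arc x y).Subsingleton ∧
      ∀ p ∈ arc u v ∩ arc x y,
        CrossesAt (arc u v) (arc x y) p ∧ CrossesAt (arc x y) (arc u v) p
  no_triple_pt : ∀ p : X, p ∉ Set.range vtx → ∀ u v x y s t : Fin n,
    u ≠ v → x ≠ y → s ≠ t →
    ({u, v} : Finset (Fin n)) ≠ {x, y} → ({u, v} : Finset (Fin n)) ≠ {s, t} →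
    ({x, y} : Finset (Fin n)) ≠ {s, t} →
    ¬(p ∈ arc u v ∧ p ∈ arc x y ∧ p ∈ arc s t)

namespace GoodDrawing

variable {n : ℕ} {X : Type*} [TopologicalSpace X]

/-- The point set of the subdrawing induced by the set `W` of vertices. -/
def image (D : GoodDrawing n X) (W : Set (Fin n)) : Set X :=
  (D.vtx '' W) ∪ ⋃ u ∈ W, ⋃ v ∈ W, ⋃ (_ : u ≠ v), D.arc u v

/-- The simple closed curve that is the drawing of the 3-cycle on `a`, `b`, `c`. -/
def tri (D : GoodDrawing n X) (a b c : Fin n) : Set X :=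
  D.arc a b ∪ D.arc b c ∪ D.arc a c

/-- `Δ` is convex: it contains the arc between any two vertex points it contains. -/
def ConvexDisc (D : GoodDrawing n X) (Δ : Set X) : Prop :=
  ∀ x y : Fin n, x ≠ y → D.vtx x ∈ Δ → D.vtx y ∈ Δ → D.arc x y ⊆ Δ

/-- `F` is a face of the drawing `D`. -/
def IsFace (D : GoodDrawing n X) (F : Set X) : Prop :=
  IsFaceOf (D.image Set.univ) F

/-- `D` is face-convex with outer face `F`. -/
def FaceConvex (D : GoodDrawing n X) (F : Set X) : Prop :=
  D.IsFace F ∧ ∀ a b c : Fin n, a ≠ b → a ≠ c → b ≠ c →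
    ∀ Δ : Set X, IsClosedSide (D.tri a b c) Δ → ¬F ⊆ Δ → D.ConvexDisc Δ

/-- `D` is a convex drawing: every 3-cycle has at least one convex closed side. -/
def IsConvex (D : GoodDrawing n X) : Prop :=
  ∀ a b c : Fin n, a ≠ b → a ≠ c → b ≠ c →
    ∃ Δ : Set X, IsClosedSide (D.tri a b c) Δ ∧ D.ConvexDisc Δ

/-- The closed curve drawn by the cycle `c 0, c 1, …, c (m-1), c 0` of `K_n`. -/
def cycCurve (D : GoodDrawing n X) {m : ℕ} [NeZero m] (c : Fin m → Fin n) : Set X :=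
  ⋃ i : Fin m, D.arc (c i) (c (i + 1))

/-- `Δ` is the convex hull `Δ_W` of the vertex set `W` (relative to the outer face `F`):
the face of the subdrawing `D[W]` containing `F` is bounded by a cycle `C_W` on vertices
of `W`, and `Δ` is the closed disc bounded by `D[C_W]` disjoint from `F`. -/
def IsHull (D : GoodDrawing n X) (F : Set X) (W : Set (Fin n)) (Δ : Set X) : Prop :=
  ∃ (m : ℕ) (c : Fin (m + 3) → Fin n), Function.Injective c ∧ (∀ i, c i ∈ W) ∧
    (∃ G : Set X, IsFaceOf (D.image W) G ∧ F ⊆ G ∧ frontier G = D.cycCurve c) ∧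
    IsClosedSide (D.cycCurve c) Δ ∧ Disjoint F Δ

/-- The data of the two local sides `C 0`, `C 1` of the arc `D[uv]` at an interior
point `p` of the arc. -/
def LocalSides (D : GoodDrawing n X) (u v : Fin n) (p : X) (C : Fin 2 → Set X) : Prop :=
  p ∈ D.arc u v ∧ p ≠ D.vtx u ∧ p ≠ D.vtx v ∧
    ∃ V ∈ nhds p, C 0 ∪ C 1 = V \ D.arc u v ∧ Disjoint (C 0) (C 1) ∧
      IsPreconnected (C 0) ∧ IsPreconnected (C 1) ∧ (C 0).Nonempty ∧ (C 1).Nonempty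

/-- Relative to the outer face `F` and the local sides `C` of `D[uv]` at `p`, the
vertex `w` is on side `i` of `uv`: the closed disc bounded by `D[{u,v,w}]` not
containing `F` lies locally on side `i` of `D[uv]`. -/
def OnSide (D : GoodDrawing n X) (F : Set X) (u v : Fin n) (p : X) (C : Fin 2 → Set X)
    (i : Fin 2) (w : Fin n) : Prop :=
  w ≠ u ∧ w ≠ v ∧ ∃ Δ : Set X, IsClosedSide (D.tri u v w) Δ ∧ ¬F ⊆ Δ ∧
    ∃ V ∈ nhds p, C i ∩ V ⊆ Δ

/-- `Side(uv, i)`: the set consisting of `u`, `v` and all vertices on side `i` of `uv`. -/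
def SideSet (D : GoodDrawing n X) (F : Set X) (u v : Fin n) (p : X) (C : Fin 2 → Set X)
    (i : Fin 2) : Set (Fin n) :=
  {u, v} ∪ {w : Fin n | D.OnSide F u v p C i w}

/-- The edge-arcs `D[uv]` and `D[xy]` cross: they share a non-vertex point. -/
def Crosses (D : GoodDrawing n X) (u v x y : Fin n) : Prop :=
  ∃ p : X, p ∈ D.arc u v ∩ D.arc x y ∧ p ∉ Set.range D.vtx

/-- The set of empty triangles of `D`: pairs of a 3-set of vertices together with an
open disc bounded by the corresponding triangle containing no vertex point. -/
def emptyTriangles (D : GoodDrawing n X) : Set (Finset (Fin n) × Set X) :=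
  {T | ∃ a b c : Fin n, a ≠ b ∧ a ≠ c ∧ b ≠ c ∧ T.1 = {a, b, c} ∧
    IsOpenSide (D.tri a b c) T.2 ∧ ∀ i, D.vtx i ∉ T.2}

end GoodDrawing

/-- A pseudoline in the plane. -/
def IsPseudoline (σ : Set Plane) : Prop :=
  IsClosed σ ∧ Nonempty (↥σ ≃ₜ ℝ) ∧ ¬IsPreconnected σᶜ

/-- An arrangement of pseudolines: any two distinct members meet in exactly one
point, at which they cross. -/
def IsArrangement (A : Finset (Set Plane)) : Prop :=
  (∀ σ ∈ A, IsPseudoline σ) ∧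
    ∀ σ ∈ A, ∀ τ ∈ A, σ ≠ τ →
      ∃ p : Plane, σ ∩ τ = {p} ∧ CrossesAt σ τ p ∧ CrossesAt τ σ p

/-- A planar good drawing of `K_n` is pseudolinear if some arrangement of pseudolines
contains, for each edge, a distinct pseudoline containing that edge-arc. -/
def GoodDrawing.Pseudolinear {n : ℕ} (D : GoodDrawing n Plane) : Prop :=
  ∃ (A : Finset (Set Plane)) (L : Fin n → Fin n → Set Plane), IsArrangement A ∧
    (∀ u v, u ≠ v → L u v ∈ A ∧ D.arc u v ⊆ L u v) ∧
    (∀ u v, L u v = L v u) ∧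
    ∀ u v x y : Fin n, u ≠ v → x ≠ y →
      ({u, v} : Finset (Fin n)) ≠ {x, y} → L u v ≠ L x y


theorem jc_exp_lift {A : Type*} [TopologicalSpace A] (H : unitInterval × A → ℂ)
    (hH : Continuous H) (h0 : ∀ x, H x ≠ 0) (f : A → ℂ) (hf : Continuous f)
    (hf0 : ∀ a, Complex.exp (f a) = H (0, a)) :
    ∃ L : unitInterval × A → ℂ, Continuous L ∧ ∀ x, Complex.exp (L x) = H x := by
  let H' : C(unitInterval × A, {z : ℂ // z ≠ 0}) := ⟨fun x => ⟨H x, h0 x⟩, by fun_prop⟩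
  have key := Complex.isCoveringMap_exp.liftHomotopy_lifts H' ⟨f, hf⟩
    (fun a => Subtype.ext (hf0 a).symm)
  exact ⟨_, ContinuousMap.continuous _, fun x => congrArg Subtype.val (congrFun key x)⟩

theorem jc_exp_locInj : IsLocallyInjective Complex.exp := by
  intro x
  obtain ⟨U, hU, hx, hinj⟩ := Complex.isCoveringMap_exp.isLocalHomeomorph.isLocallyInjective x
  exact ⟨U, hU, hx, fun a ha b hb h => hinj ha hb (Subtype.ext h)⟩

theorem jc_const {A : Type*} [TopologicalSpace A] {s : Set A} (hs : IsPreconnected s) (g : A → ℂ)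
    (hg : ContinuousOn g s) (c : ℂ) (hc : ∀ a ∈ s, Complex.exp (g a) = c) :
    ∀ a ∈ s, ∀ a' ∈ s, g a = g a' := by
  intro a ha a' ha'
  exact T2Space.isSeparatedMap _ |>.constOn_of_comp jc_exp_locInj hs hg
    (fun a ha b hb => by rw [hc a ha, hc b hb]) ha ha'

theorem jc_no_log (L : Circle → ℂ) (hL : Continuous L) (c : ℂ)
    (h : ∀ w : Circle, Complex.exp (L w) = c * w) : False := by
  have hc := jc_const (s := (univ : Set ℝ)) isPreconnected_univ
    (fun t => L (Circle.exp t) - t * Complex.I) (by fun_prop) c (by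
      intro t _
      rw [Complex.exp_sub, h, Circle.coe_exp]
      field_simp) 0 trivial (2 * Real.pi) trivial
  simp only [Circle.exp_two_pi, Circle.exp_zero, Complex.ofReal_zero, zero_mul, sub_zero] at hc
  have : (Real.pi : ℂ) ≠ 0 := by exact_mod_cast Real.pi_ne_zero
  rw [eq_comm, sub_eq_self] at hc
  push_cast at hc
  simp [this] at hc

def JCLog {X : Type*} [TopologicalSpace X] (K : Set X) : Prop :=
  ∀ F : X → ℂ, ContinuousOn F K → (∀ x ∈ K, F x ≠ 0) →
    ∃ g : X → ℂ, ContinuousOn g K ∧ ∀ x ∈ K, Complex.exp (g x) = F x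

theorem JCLog.union {X : Type*} [TopologicalSpace X] {K M : Set X} (hK : JCLog K) (hM : JCLog M)
    (cK : IsClosed K) (cM : IsClosed M) (x : X) (hx : K ∩ M = {x}) : JCLog (K ∪ M) := by
  classical
  intro F hF h0
  obtain ⟨g, hg, hgF⟩ := hK F (hF.mono subset_union_left) fun y hy => h0 y (.inl hy)
  obtain ⟨k, hk, hkF⟩ := hM F (hF.mono subset_union_right) fun y hy => h0 y (.inr hy)
  have hxK : x ∈ K ∩ M := hx ▸ rfl
  let G : X → ℂ := fun y => if y ∈ K then g y else k y + (g x - k x)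
  have e1 : EqOn G g K := fun y hy => by simp [G, hy]
  have e2 : EqOn G (fun y => k y + (g x - k x)) M := fun y hy => by
    by_cases hyK : y ∈ K
    · have : y ∈ K ∩ M := ⟨hyK, hy⟩
      rw [hx] at this
      obtain rfl : y = x := this
      simp [G, hyK]
    · simp [G, hyK]
  refine ⟨G, ?_, ?_⟩
  · exact (hg.congr e1).union_of_isClosed ((hk.add continuousOn_const).congr e2) cK cM
  · rintro y (hy | hy)
    · rw [e1 hy, hgF y hy]
    · rw [e2 hy]
      simp only
      rw [Complex.exp_add, Complex.exp_sub, hkF y hy, hgF x hxK.1, hkF x hxK.2,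
        div_self (h0 x (.inl hxK.1)), mul_one]

theorem jc_log_arc {X : Type*} [TopologicalSpace X] [T2Space X] (f : unitInterval → X)
    (hf : Continuous f) (hi : Function.Injective f) : JCLog (range f) := by
  intro F hF h0
  obtain ⟨L, hL, hLF⟩ := jc_exp_lift (A := Unit) (fun x => F (f x.1))
    (hF.comp_continuous (by fun_prop) (fun x => mem_range_self _)) (fun x => h0 _ (mem_range_self _))
    (fun _ => Complex.log (F (f 0))) (by fun_prop)
    (fun _ => Complex.exp_log (h0 _ (mem_range_self _)))
  have hemb := hf.isClosedEmbedding hi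
  refine ⟨fun x => L (Function.invFun f x, ()), ?_, ?_⟩
  · rw [continuousOn_iff_continuous_domRestrict]
    let e := hemb.isEmbedding.toHomeomorph
    have : (range f).domRestrict (fun x => L (Function.invFun f x, ())) =
        fun y => L (e.symm y, ()) := by
      funext y
      obtain ⟨t, rfl⟩ := e.surjective y
      rw [Homeomorph.symm_apply_apply]
      change L (Function.invFun f (f t), ()) = _
      rw [Function.leftInverse_invFun hi t]
    rw [this]
    fun_prop
  · rintro _ ⟨t, rfl⟩
    simp only [Function.leftInverse_invFun hi t, hLF]

theorem jc_log_Icc {X : Type*} [TopologicalSpace X] [T2Space X] (f : ℝ → X) (s t : ℝ) (hst : s < t)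
    (hf : ContinuousOn f (Icc s t)) (hi : InjOn f (Icc s t)) : JCLog (f '' Icc s t) := by
  have hm : ∀ r : unitInterval, s + r * (t - s) ∈ Icc s t := fun r => by
    have := r.2.1; have := r.2.2
    constructor <;> nlinarith
  have := jc_log_arc (fun r : unitInterval => f (s + r * (t - s)))
    (hf.comp_continuous (by fun_prop) hm) (fun r r' h => by
      have := hi (hm r) (hm r') h
      have h2 : t - s ≠ 0 := by linarith
      exact Subtype.ext (mul_right_cancel₀ h2 (add_left_cancel this)))
  convert this using 1
  ext x
  constructor
  · rintro ⟨y, hy, rfl⟩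
    have h2 : 0 < t - s := by linarith
    refine ⟨⟨(y - s) / (t - s), ?_, ?_⟩, ?_⟩
    · exact div_nonneg (by linarith [hy.1]) h2.le
    · rw [div_le_one h2]; linarith [hy.2]
    · simp only
      congr 1
      field_simp
      ring
  · rintro ⟨r, rfl⟩
    exact ⟨_, hm r, rfl⟩

open OnePoint in
theorem jc_A {K U V : Set (OnePoint ℂ)} (hK : IsClosed K) (hlog : JCLog K) (hU : IsOpen U)
    (hV : IsOpen V) (hUV : Disjoint U V) (hc : Kᶜ = U ∪ V) (hinf : ∞ ∈ V) (p : ℂ)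
    (hp : (p : OnePoint ℂ) ∈ U) : False := by
  classical
  have hKU : Disjoint K U := by
    rw [← subset_compl_iff_disjoint_left, hc]; exact subset_union_left
  have hKV : Disjoint K V := by
    rw [← subset_compl_iff_disjoint_left, hc]; exact subset_union_right
  have hKi : ∀ x ∈ K, x ≠ ∞ := fun x hx h => hKV.ne_of_mem hx hinf h
  obtain ⟨g, hg, hgF⟩ := hlog (fun x => x.elim 0 fun z => z - p) (by
    intro x hx
    obtain ⟨z, rfl⟩ := OnePoint.ne_infty_iff_exists.1 (hKi x hx)
    refine ContinuousAt.continuousWithinAt ?_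
    rw [OnePoint.continuousAt_coe]
    change ContinuousAt (fun z => z - p) z
    fun_prop) (by
    intro x hx
    obtain ⟨z, rfl⟩ := OnePoint.ne_infty_iff_exists.1 (hKi x hx)
    simp only [elim_some]
    intro h
    rw [sub_eq_zero.1 h] at hx
    exact hKU.ne_of_mem hx hp rfl)
  obtain ⟨G, hG⟩ := ContinuousMap.exists_restrict_eq hK (⟨K.domRestrict g, hg.domRestrict⟩ : C(K, ℂ))
  have hGg : ∀ x ∈ K, G x = g x := fun x hx => congrArg (fun f => f ⟨x, hx⟩) hG
  let h : ℂ → ℂ := fun z => if (z : OnePoint ℂ) ∈ U then Complex.exp (G z) else z - p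
  have hcont : Continuous h := by
    refine Continuous.if ?_ (Complex.continuous_exp.comp (G.continuous.comp OnePoint.continuous_coe)) (by fun_prop)
    intro z hz
    have hUo : IsOpen {z : ℂ | (z : OnePoint ℂ) ∈ U} := hU.preimage OnePoint.continuous_coe
    have hVo : IsOpen {z : ℂ | (z : OnePoint ℂ) ∈ V} := hV.preimage OnePoint.continuous_coe
    rw [hUo.frontier_eq] at hz
    have hzV : (z : OnePoint ℂ) ∉ V := by
      intro hzV
      obtain ⟨y, hy1, hy2⟩ := mem_closure_iff.1 hz.1 _ hVo hzV
      exact hUV.ne_of_mem hy2 hy1 rfl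
    have hzK : (z : OnePoint ℂ) ∈ K := by
      by_contra hzK
      rw [← mem_compl_iff, hc] at hzK
      exact hzK.elim hz.2 hzV
    rw [hGg _ hzK, hgF _ hzK]
    rfl
  have hne : ∀ z, h z ≠ 0 := by
    intro z
    by_cases hz : (z : OnePoint ℂ) ∈ U
    · simp [h, hz, Complex.exp_ne_zero]
    · simp only [h, hz, if_false]
      intro h'
      rw [sub_eq_zero.1 h'] at hz
      exact hz hp
  have hR : ∃ R : ℝ, 0 < R ∧ ∀ w : Circle, ((p + R * w : ℂ) : OnePoint ℂ) ∈ V := by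
    have h1 : ∀ᶠ z in Bornology.cobounded ℂ, ((z : ℂ) : OnePoint ℂ) ∈ V := by
      have := OnePoint.tendsto_coe_infty (X := ℂ) (hV.mem_nhds hinf)
      rw [Filter.coclosedCompact_eq_cocompact, ← Metric.cobounded_eq_cocompact] at this
      exact this
    rw [← comap_norm_atTop, Filter.eventually_comap] at h1
    obtain ⟨R, hR⟩ := Filter.eventually_atTop.1 h1
    refine ⟨max R 0 + ‖p‖ + 1, by positivity, fun w => hR _ ?_ _ rfl⟩
    have h2 := norm_sub_norm_le ((max R 0 + ‖p‖ + 1 : ℝ) * (w : ℂ)) (-p)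
    rw [norm_mul, Circle.norm_coe, Complex.norm_real, Real.norm_of_nonneg (by positivity),
      norm_neg, sub_neg_eq_add, add_comm _ p] at h2
    have := le_max_left R 0
    linarith
  obtain ⟨R, hR0, hR⟩ := hR
  obtain ⟨L, hL, hLH⟩ := jc_exp_lift (A := Circle) (fun x => h (p + (x.1 : ℝ) * R * x.2))
    (by fun_prop) (fun x => hne _) (fun _ => Complex.log (h p)) (by fun_prop)
    (fun a => by simp [Complex.exp_log (hne p)])
  refine jc_no_log (fun w => L (1, w)) (by fun_prop) R (fun w => ?_)
  rw [hLH]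
  have : ((p + R * w : ℂ) : OnePoint ℂ) ∉ U := fun hu => hUV.ne_of_mem hu (hR w) rfl
  have e : p + ((1 : unitInterval) : ℝ) * R * w = p + R * (w : ℂ) := by simp
  simp only [h]
  rw [e, if_neg this]
  ring

open OnePoint in
theorem jc_half (b : ℂ) (α : Path (b : OnePoint ℂ) ∞) (b0 : ℂ) (hb0 : (b0 : OnePoint ℂ) ∉ range α) :
    ∃ L : ℂ → ℂ, ContinuousOn L {z : ℂ | (z : OnePoint ℂ) ∉ range α} ∧ ∃ c : ℂ, c ≠ 0 ∧
      ∀ z : ℂ, (z : OnePoint ℂ) ∉ range α → Complex.exp (L z) = c * (z - b) := by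
  classical
  let m : OnePoint ℂ → ℂ := fun x => x.elim 0 fun z => (b0 - z)⁻¹
  have hm : ∀ x ≠ (b0 : OnePoint ℂ), ContinuousAt m x := by
    intro x hx
    induction x using OnePoint.rec with
    | infty =>
      rw [OnePoint.continuousAt_infty']
      rw [Filter.coclosedCompact_eq_cocompact, ← Metric.cobounded_eq_cocompact]
      change Filter.Tendsto (fun z => (b0 - z)⁻¹) _ (𝓝 0)
      exact Filter.tendsto_inv₀_cobounded.comp (by
        rw [← tendsto_norm_atTop_iff_cobounded]
        refine Filter.tendsto_atTop_mono (f := fun z => ‖z‖ - ‖b0‖) (fun z => ?_) ?_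
        · rw [norm_sub_rev]; exact norm_sub_norm_le _ _
        · exact Filter.tendsto_atTop_add_const_right _ _ tendsto_norm_cobounded_atTop)
    | coe z =>
      rw [OnePoint.continuousAt_coe]
      change ContinuousAt (fun z => (b0 - z)⁻¹) z
      have : b0 - z ≠ 0 := fun h => hx (by rw [sub_eq_zero.1 h])
      fun_prop (disch := assumption)
  have hmα : Continuous fun s => m (α s) := continuous_iff_continuousAt.2 fun s =>
    ContinuousAt.comp (hm _ fun h => hb0 ⟨s, h⟩) α.continuous.continuousAt
  obtain ⟨L, hL, hLH⟩ := jc_exp_lift (A := {z : ℂ // (z : OnePoint ℂ) ∉ range α})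
    (fun x => 1 + (x.2 - b0) * m (α.symm x.1)) (by
      have : Continuous fun s => m (α.symm s) := hmα.comp (by fun_prop : Continuous unitInterval.symm)
      have h2 := this.comp (continuous_fst (X := unitInterval) (Y := {z : ℂ // (z : OnePoint ℂ) ∉ range α}))
      exact continuous_const.add (((continuous_subtype_val.comp continuous_snd).sub
        continuous_const).mul h2)) (by
      rintro ⟨s, z, hz⟩
      simp only
      have h1 : α.symm s ≠ z := fun h => hz ⟨_, h⟩
      have h2 : α.symm s ≠ b0 := fun h => hb0 ⟨_, h⟩
      generalize α.symm s = y at *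
      induction y using OnePoint.rec with
      | infty => simp [m]
      | coe y =>
        have h1 : y ≠ z := fun h => h1 (by rw [h])
        have h2 : b0 - y ≠ 0 := fun h => h2 (by rw [sub_eq_zero.1 h])
        simp only [m, elim_some]
        intro h
        apply h1
        have h3 : (1 + (z - b0) * (b0 - y)⁻¹) * (b0 - y) = z - y := by
          field_simp
          ring
        rw [h, zero_mul] at h3
        linear_combination h3) (fun _ => 0) (by fun_prop) (fun z => by simp [m])
  have hbb : b0 - b ≠ 0 := fun h => hb0 ⟨0, by simp [sub_eq_zero.1 h]⟩
  refine ⟨fun z => if hz : (z : OnePoint ℂ) ∉ range α then L (1, ⟨z, hz⟩) else 0, ?_,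
    (b0 - b)⁻¹, inv_ne_zero hbb, ?_⟩
  · rw [continuousOn_iff_continuous_domRestrict]
    have : Continuous fun z : {z : ℂ // (z : OnePoint ℂ) ∉ range α} => L (1, z) := by fun_prop
    refine this.congr fun z => ?_
    have hz : ((z : ℂ) : OnePoint ℂ) ∉ range α := z.2
    simp only [domRestrict_apply, dif_pos hz]
  · intro z hz
    simp only [dif_pos hz, hLH]
    simp [m]
    field_simp
    ring

open OnePoint in
theorem jc_B (b : ℂ) (α β : Path (b : OnePoint ℂ) ∞) (hαβ : range α ∩ range β ⊆ {(b : OnePoint ℂ), ∞})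
    (a0 b0 : ℂ) (ha0 : (a0 : OnePoint ℂ) ∉ range α) (hb0 : (b0 : OnePoint ℂ) ∉ range β) :
    ¬ IsPreconnected (range α ∪ range β)ᶜ := by
  classical
  intro hpre
  obtain ⟨L, hL, c, hc, hLe⟩ := jc_half b α a0 ha0
  obtain ⟨M, hM, d, hd, hMe⟩ := jc_half b β b0 hb0
  let P : Set ℂ := {z : ℂ | (z : OnePoint ℂ) ∉ range α}
  let Q : Set ℂ := {z : ℂ | (z : OnePoint ℂ) ∉ range β}
  have hPo : IsOpen P := (isCompact_range α.continuous).isClosed.isOpen_compl.preimage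
    OnePoint.continuous_coe
  have hQo : IsOpen Q := (isCompact_range β.continuous).isClosed.isOpen_compl.preimage
    OnePoint.continuous_coe
  have hPQ : IsPreconnected (P ∩ Q) := by
    have h1 : (range α ∪ range β)ᶜ = ((↑) : ℂ → OnePoint ℂ) '' (P ∩ Q) := by
      ext x
      induction x using OnePoint.rec with
      | infty => simp
      | coe z =>
        rw [Function.Injective.mem_set_image OnePoint.coe_injective]
        simp only [P, Q, mem_compl_iff, mem_union, not_or, mem_inter_iff, mem_ofPred_eq]
    rw [h1] at hpre
    exact (OnePoint.isOpenEmbedding_coe.isInducing.isPreconnected_image).1 hpre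
  have hne : ∀ z ∈ P, z - b ≠ 0 := fun z hz h => hz ⟨0, by simp [sub_eq_zero.1 h]⟩
  have hconst := jc_const hPQ (fun z => L z - M z)
    ((hL.mono inter_subset_left).sub (hM.mono inter_subset_right)) (c / d) (by
      rintro z ⟨hz, hz'⟩
      rw [Complex.exp_sub, hLe z hz, hMe z hz']
      have := hne z hz
      field_simp)
  have hk : ∃ k : ℂ, Complex.exp k = c / d ∧ ∀ z ∈ P ∩ Q, L z - M z = k := by
    by_cases hn : (P ∩ Q).Nonempty
    · obtain ⟨z, hz⟩ := hn
      refine ⟨L z - M z, ?_, fun y hy => hconst y hy z hz⟩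
      rw [Complex.exp_sub, hLe z hz.1, hMe z hz.2]
      have := hne z hz.1
      field_simp
    · exact ⟨Complex.log (c / d), Complex.exp_log (div_ne_zero hc hd),
        fun z hz => (hn ⟨z, hz⟩).elim⟩
  obtain ⟨k, hk, hkc⟩ := hk
  let N : ℂ → ℂ := fun z => if z ∈ P then L z else M z + k
  have e1 : EqOn N L P := fun z hz => by simp [N, hz]
  have e2 : EqOn N (fun z => M z + k) Q := fun z hz => by
    by_cases hzP : z ∈ P
    · simp only [N, hzP, if_true]
      rw [← hkc z ⟨hzP, hz⟩]; ring
    · simp [N, hzP]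
  have hN : ContinuousOn N (P ∪ Q) :=
    (hL.congr e1).union_of_isOpen ((hM.add continuousOn_const).congr e2) hPo hQo
  have hcov : ∀ w : Circle, b + (w : ℂ) ∈ P ∪ Q := by
    intro w
    by_contra hw
    simp only [P, Q, mem_union, mem_ofPred_eq, not_or, not_not] at hw
    have := hαβ hw
    rw [mem_insert_iff, OnePoint.coe_eq_coe] at this
    simp at this
  refine jc_no_log (fun w => N (b + w)) (hN.comp_continuous (by fun_prop) hcov) c (fun w => ?_)
  rcases hcov w with h | h
  · rw [e1 h, hLe _ h]; ring
  · rw [e2 h]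
    simp only
    rw [Complex.exp_add, hMe _ h, hk]
    field_simp
    ring

theorem jc_homeo (q : SpherePt) : ∃ e : OnePoint ℂ ≃ₜ SpherePt, e OnePoint.infty = q := by
  have hv : ‖(q : EuclideanSpace ℝ (Fin 3))‖ = 1 := norm_eq_of_mem_sphere q
  have hv₀ : (q : EuclideanSpace ℝ (Fin 3)) ≠ 0 := fun h => by simp [h] at hv
  have : Fact (Module.finrank ℝ (EuclideanSpace ℝ (Fin 3)) = Module.finrank ℝ ℂ + 1) :=
    ⟨by simp [Complex.finrank_real_complex]⟩
  have hV : Module.finrank ℝ ℂ = Module.finrank ℝ (ℝ ∙ (q : EuclideanSpace ℝ (Fin 3)))ᗮ :=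
    (Submodule.finrank_orthogonal_span_singleton hv₀).symm
  let e : ℂ ≃ₜ (ℝ ∙ (q : EuclideanSpace ℝ (Fin 3)))ᗮ :=
    (FiniteDimensional.nonempty_continuousLinearEquiv_of_finrank_eq hV).some.toHomeomorph
  exact ⟨e.onePointCongr.trans (onePointHyperplaneHomeoUnitSphere hv), rfl⟩

theorem jc_A' {K : Set SpherePt} (hK : IsClosed K) (hlog : JCLog K) {U V : Set SpherePt}
    (hU : IsOpen U) (hV : IsOpen V) (hUV : Disjoint U V) (hc : Kᶜ = U ∪ V) (hUn : U.Nonempty)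
    (hVn : V.Nonempty) : False := by
  obtain ⟨x, hx⟩ := hUn
  obtain ⟨y, hy⟩ := hVn
  obtain ⟨e, he⟩ := jc_homeo y
  have hxe : e.symm x ≠ OnePoint.infty := by
    intro h
    have : x = y := by rw [← he, ← h, e.apply_symm_apply]
    exact hUV.ne_of_mem hx hy this
  obtain ⟨p, hp⟩ := OnePoint.ne_infty_iff_exists.1 hxe
  refine jc_A (K := e ⁻¹' K) (U := e ⁻¹' U) (V := e ⁻¹' V) (hK.preimage e.continuous) ?_
    (hU.preimage e.continuous) (hV.preimage e.continuous) (hUV.preimage e) ?_ ?_ p ?_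
  · intro F hF h0
    obtain ⟨g, hg, hgF⟩ := hlog (F ∘ e.symm)
      (hF.comp e.symm.continuous.continuousOn (fun z hz => by simpa using hz))
      (fun z hz => h0 _ (by simpa using hz))
    refine ⟨g ∘ e, hg.comp e.continuous.continuousOn (fun z hz => hz), fun z hz => ?_⟩
    simp [hgF _ hz]
  · rw [← preimage_compl, hc, preimage_union]
  · rw [mem_preimage, he]; exact hy
  · rw [mem_preimage, hp, e.apply_symm_apply]; exact hx

theorem jc_B' {x y : SpherePt} (hxy : x ≠ y) (α β : Path x y) (hαβ : range α ∩ range β ⊆ {x, y})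
    (a0 b0 : SpherePt) (ha0 : a0 ∉ range α) (hb0 : b0 ∉ range β) :
    ¬ IsPreconnected (range α ∪ range β)ᶜ := by
  intro hpre
  obtain ⟨e, he⟩ := jc_homeo y
  have hfin : ∀ z, z ≠ y → ∃ p : ℂ, (p : OnePoint ℂ) = e.symm z := by
    intro z hz
    refine OnePoint.ne_infty_iff_exists.1 fun h => hz ?_
    rw [← he, ← h, e.apply_symm_apply]
  obtain ⟨b, hb⟩ := hfin x hxy
  obtain ⟨p, hp⟩ := hfin a0 (fun h => ha0 ⟨1, by simp [h]⟩)
  obtain ⟨r, hr⟩ := hfin b0 (fun h => hb0 ⟨1, by simp [h]⟩)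
  have hy : OnePoint.infty = e.symm y := by rw [← he, e.symm_apply_apply]
  have hrange : ∀ γ : Path x y, range ((γ.map e.symm.continuous).cast hb hy) = e ⁻¹' (range γ) := by
    intro γ
    ext z
    constructor
    · rintro ⟨t, rfl⟩
      exact ⟨t, by simp⟩
    · rintro ⟨t, ht⟩
      exact ⟨t, by simp [ht]⟩
  refine jc_B b ((α.map e.symm.continuous).cast hb hy) ((β.map e.symm.continuous).cast hb hy)
    ?_ p r ?_ ?_ ?_
  · rw [hrange, hrange, ← preimage_inter]
    intro z hz
    rcases hαβ hz with h | h
    · left; rw [hb, ← h, e.symm_apply_apply]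
    · right; rw [mem_singleton_iff, hy, ← mem_singleton_iff.1 h, e.symm_apply_apply]
  · rw [hrange, mem_preimage, hp, e.apply_symm_apply]; exact ha0
  · rw [hrange, mem_preimage, hr, e.apply_symm_apply]; exact hb0
  · rw [hrange, hrange, ← preimage_union, ← preimage_compl, ← e.image_symm]
    exact hpre.image _ e.symm.continuous.continuousOn

section
variable {n : ℕ} (D : GoodDrawing n SpherePt)

theorem jc_path (u v : Fin n) (h : u ≠ v) :
    ∃ γ : Path (D.vtx u) (D.vtx v), range γ = D.arc u v := by
  obtain ⟨f, hf, -, h0, h1, hr⟩ := D.isArc u v h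
  refine ⟨⟨⟨fun t => f t, hf.comp_continuous (by fun_prop) fun t => t.2⟩, by simpa, by simpa⟩, ?_⟩
  rw [hr]
  ext z
  constructor
  · rintro ⟨t, rfl⟩
    exact ⟨t, t.2, rfl⟩
  · rintro ⟨t, ht, rfl⟩
    exact ⟨⟨t, ht⟩, rfl⟩

theorem jc_left_mem (u v : Fin n) (h : u ≠ v) : D.vtx u ∈ D.arc u v := by
  obtain ⟨f, hf, -, h0, h1, hr⟩ := D.isArc u v h
  exact hr ▸ ⟨0, by simp, h0⟩

theorem jc_right_mem (u v : Fin n) (h : u ≠ v) : D.vtx v ∈ D.arc u v := by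
  rw [D.arc_symm]; exact jc_left_mem D v u h.symm

theorem jc_arc_closed (u v : Fin n) (h : u ≠ v) : IsClosed (D.arc u v) := by
  obtain ⟨f, hf, -, h0, h1, hr⟩ := D.isArc u v h
  exact hr ▸ (isCompact_Icc.image_of_continuousOn hf).isClosed

theorem jc_tri_closed (a b c : Fin n) (hab : a ≠ b) (hac : a ≠ c) (hbc : b ≠ c) :
    IsClosed (D.tri a b c) :=
  ((jc_arc_closed D a b hab).union (jc_arc_closed D b c hbc)).union (jc_arc_closed D a c hac)

theorem jc_tri_sep (a b c : Fin n) (hab : a ≠ b) (hac : a ≠ c) (hbc : b ≠ c) :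
    ¬ IsPreconnected (D.tri a b c)ᶜ := by
  obtain ⟨α, hα⟩ := jc_path D a b hab
  obtain ⟨β, hβ⟩ := jc_path D a c hac
  obtain ⟨γ, hγ⟩ := jc_path D c b hbc.symm
  obtain ⟨f, hf, hi, h0, h1, hr⟩ := D.isArc a b hab
  have hr2 : range (β.trans γ) = D.arc a c ∪ D.arc c b := by rw [Path.trans_range, hβ, hγ]
  have hA := D.adj_arcs a b c hab hac hbc
  have hB := D.adj_arcs b a c hab.symm hbc hac
  rw [D.arc_symm b a, D.arc_symm b c] at hB
  have hm : f (1 / 2) ∈ D.arc a b := hr ▸ ⟨1 / 2, by norm_num, rfl⟩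
  have := jc_B' (fun h => hab (D.vtx_inj h)) α (β.trans γ) (by
      rw [hα, hr2]
      rintro z ⟨hz, hz' | hz'⟩
      · left; exact hA.subset ⟨hz, hz'⟩
      · right; exact hB.subset ⟨hz, hz'⟩) (D.vtx c) (f (1 / 2))
    (hα ▸ D.vtx_not_mem a b c hab hac.symm hbc.symm) (by
      rw [hr2]
      rintro (h | h)
      · have h2 : f (1 / 2) = D.vtx a := hA.subset ⟨hm, h⟩
        rw [← h0] at h2
        have := hi (by norm_num) (by norm_num) h2
        norm_num at this
      · have h2 : f (1 / 2) = D.vtx b := hB.subset ⟨hm, h⟩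
        rw [← h1] at h2
        have := hi (by norm_num) (by norm_num) h2
        norm_num at this)
  rw [hα, hr2] at this
  convert this using 2
  rw [GoodDrawing.tri, D.arc_symm c b, union_assoc, union_comm (D.arc b c)]

theorem jc_key (a b c : Fin n) (hab : a ≠ b) (hac : a ≠ c) (hbc : b ≠ c) (U W N : Set SpherePt)
    (hU : IsOpen U) (hW : IsOpen W) (hUW : Disjoint U W) (hc : (D.tri a b c)ᶜ = U ∪ W)
    (hUn : U.Nonempty) (hWn : W.Nonempty) (hN : IsOpen N) (hNs : N ⊆ U ∪ D.tri a b c)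
    (hNn : (N ∩ D.arc a b).Nonempty) : False := by
  obtain ⟨f, hf, hi, h0, h1, hr⟩ := D.isArc a b hab
  have hA := D.adj_arcs a b c hab hac hbc
  have hB := D.adj_arcs b a c hab.symm hbc hac
  have hC := D.adj_arcs c a b hac.symm hbc.symm hab
  rw [D.arc_symm b a] at hB
  rw [D.arc_symm c a, D.arc_symm c b] at hC
  have hs : ∃ s t : ℝ, 0 < s ∧ s < t ∧ t < 1 ∧ ∀ r ∈ Ioo s t, f r ∈ N := by
    obtain ⟨z, hzN, hz⟩ := hNn
    rw [hr] at hz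
    obtain ⟨t, ht, rfl⟩ := hz
    have h3 := hf t ht (hN.mem_nhds hzN)
    rw [Filter.mem_map, Metric.mem_nhdsWithin_iff] at h3
    obtain ⟨ε, hε, hs⟩ := h3
    have hlt : max (t - ε) 0 < min (t + ε) 1 := by
      have := ht.1; have := ht.2
      rw [max_lt_iff, lt_min_iff, lt_min_iff]
      refine ⟨⟨?_, ?_⟩, ?_, ?_⟩ <;> linarith
    have g1 := le_max_left (t - ε) 0
    have g2 := le_max_right (t - ε) 0
    have g3 := min_le_left (t + ε) 1
    have g4 := min_le_right (t + ε) 1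
    generalize max (t - ε) 0 = l at *
    generalize min (t + ε) 1 = m at *
    refine ⟨(2 * l + m) / 3, (l + 2 * m) / 3, by linarith, by linarith, by linarith, ?_⟩
    rintro r ⟨hr1, hr2⟩
    refine hs ⟨?_, ?_, ?_⟩
    · rw [Metric.mem_ball, Real.dist_eq, abs_lt]
      constructor <;> linarith
    · linarith
    · linarith
  obtain ⟨s, t, hs0, hst, ht1, hsN⟩ := hs
  have sub1 : Icc 0 s ⊆ Icc (0 : ℝ) 1 := Icc_subset_Icc le_rfl (by linarith)
  have sub2 : Icc t 1 ⊆ Icc (0 : ℝ) 1 := Icc_subset_Icc (by linarith) le_rfl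
  have cl1 : IsClosed (f '' Icc 0 s) := (isCompact_Icc.image_of_continuousOn (hf.mono sub1)).isClosed
  have cl2 : IsClosed (f '' Icc t 1) := (isCompact_Icc.image_of_continuousOn (hf.mono sub2)).isClosed
  have s1 : f '' Icc 0 s ⊆ D.arc a b := hr ▸ image_mono sub1
  have s2 : f '' Icc t 1 ⊆ D.arc a b := hr ▸ image_mono sub2
  have l1 : JCLog (f '' Icc 0 s) := jc_log_Icc f 0 s hs0 (hf.mono sub1) (hi.mono sub1)
  have l2 : JCLog (f '' Icc t 1) := jc_log_Icc f t 1 ht1 (hf.mono sub2) (hi.mono sub2)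
  have larc : ∀ u v, u ≠ v → JCLog (D.arc u v) := by
    intro u v huv
    obtain ⟨f, hf, hi, -, -, hr⟩ := D.isArc u v huv
    exact hr ▸ jc_log_Icc f 0 1 one_pos hf hi
  have va1 : D.vtx a ∈ f '' Icc 0 s := ⟨0, ⟨le_rfl, hs0.le⟩, h0⟩
  have vb2 : D.vtx b ∈ f '' Icc t 1 := ⟨1, ⟨ht1.le, le_rfl⟩, h1⟩
  have d12 : ∀ z ∈ f '' Icc 0 s, z ∉ f '' Icc t 1 := by
    rintro _ ⟨r, hr, rfl⟩ ⟨r', hr', h⟩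
    have := hi (sub2 hr') (sub1 hr) h
    linarith [hr.2, hr'.1]
  have L1 : JCLog (f '' Icc 0 s ∪ D.arc a c) :=
    l1.union (larc a c hac) cl1 (jc_arc_closed D a c hac) (D.vtx a) (by
      apply Subset.antisymm
      · rintro z ⟨hz, hz'⟩
        exact hA.subset ⟨s1 hz, hz'⟩
      · rintro _ rfl
        exact ⟨va1, jc_left_mem D a c hac⟩)
  have c1 := cl1.union (jc_arc_closed D a c hac)
  have L2 : JCLog (f '' Icc 0 s ∪ D.arc a c ∪ D.arc b c) :=
    L1.union (larc b c hbc) c1 (jc_arc_closed D b c hbc) (D.vtx c) (by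
      apply Subset.antisymm
      · rintro z ⟨hz | hz, hz'⟩
        · have : z = D.vtx b := hB.subset ⟨s1 hz, hz'⟩
          exact (d12 z hz (this ▸ vb2)).elim
        · exact hC.subset ⟨hz, hz'⟩
      · rintro _ rfl
        exact ⟨.inr (jc_right_mem D a c hac), jc_right_mem D b c hbc⟩)
  have c2 := c1.union (jc_arc_closed D b c hbc)
  have L3 : JCLog (f '' Icc 0 s ∪ D.arc a c ∪ D.arc b c ∪ f '' Icc t 1) :=
    L2.union l2 c2 cl2 (D.vtx b) (by
      apply Subset.antisymm
      · rintro z ⟨(hz | hz) | hz, hz'⟩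
        · exact (d12 z hz hz').elim
        · have : z = D.vtx a := hA.subset ⟨s2 hz', hz⟩
          exact (d12 z (this ▸ va1) hz').elim
        · exact hB.subset ⟨s2 hz', hz⟩
      · rintro _ rfl
        exact ⟨.inr (jc_left_mem D b c hbc), vb2⟩)
  have c3 := c2.union cl2
  generalize hKd : f '' Icc 0 s ∪ D.arc a c ∪ D.arc b c ∪ f '' Icc t 1 = K at L3 c3
  have hKC : K ⊆ D.tri a b c := by
    rw [← hKd]
    rintro z (((hz | hz) | hz) | hz)
    · exact .inl (.inl (s1 hz))
    · exact .inr hz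
    · exact .inl (.inr hz)
    · exact .inl (.inl (s2 hz))
  have hCK : ∀ z ∈ D.tri a b c, z ∉ K → z ∈ N := by
    rintro z ((hz | hz) | hz) hzK
    · rw [hr] at hz
      obtain ⟨r, hr, rfl⟩ := hz
      apply hsN
      constructor
      · by_contra hh
        exact hzK (hKd ▸ .inl (.inl (.inl ⟨r, ⟨hr.1, not_lt.1 hh⟩, rfl⟩)))
      · by_contra hh
        exact hzK (hKd ▸ .inr ⟨r, ⟨not_lt.1 hh, hr.2⟩, rfl⟩)
    · exact (hzK (hKd ▸ .inl (.inr hz))).elim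
    · exact (hzK (hKd ▸ .inl (.inl (.inr hz)))).elim
  have hUC : ∀ z ∈ U, z ∉ D.tri a b c := fun z hz => by
    rw [← mem_compl_iff, hc]; exact .inl hz
  have hWC : ∀ z ∈ W, z ∉ D.tri a b c := fun z hz => by
    rw [← mem_compl_iff, hc]; exact .inr hz
  refine jc_A' c3 L3 (U := (U ∪ N) \ K) (V := W) ((hU.union hN).sdiff c3) hW ?_ ?_ ?_ hWn
  · rw [Set.disjoint_left]
    rintro z ⟨hz | hz, -⟩ hzW
    · exact hUW.ne_of_mem hz hzW rfl
    · rcases hNs hz with h | h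
      · exact hUW.ne_of_mem h hzW rfl
      · exact hWC z hzW h
  · ext z
    constructor
    · intro hz
      by_cases hzC : z ∈ D.tri a b c
      · exact .inl ⟨.inr (hCK z hzC hz), hz⟩
      · rw [← mem_compl_iff, hc] at hzC
        exact hzC.elim (fun h => .inl ⟨.inl h, hz⟩) .inr
    · rintro (hz | hz)
      · exact hz.2
      · exact fun h => hWC z hz (hKC h)
  · obtain ⟨z, hz⟩ := hUn
    exact ⟨z, .inl hz, fun h => hUC z hz (hKC h)⟩

theorem jc_tri_perm1 (a b c : Fin n) : D.tri a b c = D.tri b c a := by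
  simp only [GoodDrawing.tri, D.arc_symm c a, D.arc_symm b a]
  ext z; simp only [mem_union]; tauto

theorem jc_tri_perm2 (a b c : Fin n) : D.tri a b c = D.tri a c b := by
  simp only [GoodDrawing.tri, D.arc_symm c b]
  ext z; simp only [mem_union]; tauto

instance jc_locConn : LocallyConnectedSpace SpherePt :=
  ChartedSpace.locallyConnectedSpace (EuclideanSpace ℝ (Fin 2)) _

theorem jc_interior (a b c : Fin n) (hab : a ≠ b) (hac : a ≠ c) (hbc : b ≠ c) (q : SpherePt)
    (hq : q ∉ D.tri a b c) :
    interior (connectedComponentIn (D.tri a b c)ᶜ q ∪ D.tri a b c) =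
      connectedComponentIn (D.tri a b c)ᶜ q := by
  have hCo : IsOpen (D.tri a b c)ᶜ := (jc_tri_closed D a b c hab hac hbc).isOpen_compl
  have hU : IsOpen (connectedComponentIn (D.tri a b c)ᶜ q) := hCo.connectedComponentIn
  have hqU := mem_connectedComponentIn (F := (D.tri a b c)ᶜ) (x := q) hq
  have hUs := connectedComponentIn_subset (D.tri a b c)ᶜ q
  have hpre := isPreconnected_connectedComponentIn (F := (D.tri a b c)ᶜ) (x := q)
  have hW : IsOpen ((D.tri a b c)ᶜ \ connectedComponentIn (D.tri a b c)ᶜ q) := by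
    rw [isOpen_iff_mem_nhds]
    rintro z ⟨hz, hzU⟩
    filter_upwards [(hCo.connectedComponentIn (x := z)).mem_nhds (mem_connectedComponentIn hz)]
      with y hy
    refine ⟨connectedComponentIn_subset _ _ hy, fun hyU => hzU ?_⟩
    rw [connectedComponentIn_eq hyU, ← connectedComponentIn_eq hy]
    exact mem_connectedComponentIn hz
  have hsep := jc_tri_sep D a b c hab hac hbc
  generalize connectedComponentIn (D.tri a b c)ᶜ q = U at *
  apply Subset.antisymm
  · intro z hz
    rcases interior_subset hz with h | h
    · exact h
    exfalso
    have key : ∀ a' b' c' : Fin n, a' ≠ b' → a' ≠ c' → b' ≠ c' → D.tri a b c = D.tri a' b' c' →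
        z ∈ D.arc a' b' → False := by
      intro a' b' c' h1 h2 h3 h4 h5
      rw [h4] at hW hz hUs hsep
      refine jc_key D a' b' c' h1 h2 h3 U ((D.tri a' b' c')ᶜ \ U) _ hU hW disjoint_sdiff_right
        (union_sdiff_cancel hUs).symm ⟨q, hqU⟩ ?_ isOpen_interior interior_subset ⟨z, hz, h5⟩
      by_contra hne
      rw [not_nonempty_iff_eq_empty, sdiff_eq_empty] at hne
      exact hsep (hUs.antisymm hne ▸ hpre)
    rcases h with (h | h) | h
    · exact key a b c hab hac hbc rfl h
    · exact key b c a hbc hab.symm hac.symm (jc_tri_perm1 D a b c) h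
    · exact key a c b hac hab hbc.symm (jc_tri_perm2 D a b c) h
  · exact interior_maximal subset_union_left hU

end

/-- In a hereditarily convex drawing with chosen convex discs `Δch`, every edge `uv` of
every 3-cycle `(a,b,c)` lies in a 3-cycle `(u,v,w)` whose chosen disc is contained in
`Δch a b c` and whose interior is an empty triangle. -/
theorem empty_triangle_in_convex_side (n : ℕ) (D : GoodDrawing n SpherePt)
    (Δch : Fin n → Fin n → Fin n → Set SpherePt)
    (hside : ∀ a b c : Fin n, a ≠ b → a ≠ c → b ≠ c →
      IsClosedSide (D.tri a b c) (Δch a b c) ∧ D.ConvexDisc (Δch a b c))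
    (hsymm : ∀ a b c : Fin n, Δch a b c = Δch b a c ∧ Δch a b c = Δch a c b)
    (hher : ∀ a b c a' b' c' : Fin n, a ≠ b → a ≠ c → b ≠ c →
      a' ≠ b' → a' ≠ c' → b' ≠ c' →
      D.tri a' b' c' ⊆ Δch a b c → Δch a' b' c' ⊆ Δch a b c)
    (a b c : Fin n) (hab : a ≠ b) (hac : a ≠ c) (hbc : b ≠ c)
    (u v : Fin n) (hu : u ∈ ({a, b, c} : Set (Fin n))) (hv : v ∈ ({a, b, c} : Set (Fin n)))
    (huv : u ≠ v) :
    ∃ w : Fin n, w ≠ u ∧ w ≠ v ∧ Δch u v w ⊆ Δch a b c ∧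
      IsOpenSide (D.tri u v w) (interior (Δch u v w)) ∧
      ∀ i : Fin n, D.vtx i ∉ interior (Δch u v w) := by
  have hJ : ∀ x y z : Fin n, x ≠ y → x ≠ z → y ≠ z →
      IsOpenSide (D.tri x y z) (interior (Δch x y z)) ∧
      Δch x y z = interior (Δch x y z) ∪ D.tri x y z ∧
      ∀ p ∈ interior (Δch x y z), p ∉ D.tri x y z := by
    intro x y z hxy hxz hyz
    obtain ⟨⟨q, hq, hΔ⟩, -⟩ := hside x y z hxy hxz hyz
    have := jc_interior D x y z hxy hxz hyz q hq
    rw [← hΔ] at this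
    refine ⟨⟨q, hq, this⟩, by rw [this, ← hΔ], fun p hp => ?_⟩
    rw [this] at hp
    exact connectedComponentIn_subset _ _ hp
  have main : ∀ k : ℕ, ∀ w : Fin n, w ≠ u → w ≠ v → Δch u v w ⊆ Δch a b c →
      {i : Fin n | D.vtx i ∈ Δch u v w}.ncard = k →
      ∃ w : Fin n, w ≠ u ∧ w ≠ v ∧ Δch u v w ⊆ Δch a b c ∧
      IsOpenSide (D.tri u v w) (interior (Δch u v w)) ∧
      ∀ i : Fin n, D.vtx i ∉ interior (Δch u v w) := by
    intro k
    induction k using Nat.strong_induction_on with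
    | _ k ih =>
    intro w hwu hwv hsub hk
    obtain ⟨h1, h2, h3⟩ := hJ u v w huv hwu.symm hwv.symm
    by_cases hemp : ∀ i : Fin n, D.vtx i ∉ interior (Δch u v w)
    · exact ⟨w, hwu, hwv, hsub, h1, hemp⟩
    push Not at hemp
    obtain ⟨x, hx⟩ := hemp
    have mu : D.vtx u ∈ D.tri u v w := .inl (.inl (jc_left_mem D u v huv))
    have mv : D.vtx v ∈ D.tri u v w := .inl (.inl (jc_right_mem D u v huv))
    have mw : D.vtx w ∈ D.tri u v w := .inl (.inr (jc_right_mem D v w hwv.symm))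
    have hxu : x ≠ u := by rintro rfl; exact h3 _ hx mu
    have hxv : x ≠ v := by rintro rfl; exact h3 _ hx mv
    have hxw : x ≠ w := by rintro rfl; exact h3 _ hx mw
    have hT : D.tri u v w ⊆ Δch u v w := by rw [h2]; exact subset_union_right
    have hxΔ := interior_subset hx
    have hconv := (hside u v w huv hwu.symm hwv.symm).2
    have hsub2 : Δch u v x ⊆ Δch u v w := by
      refine hher u v w u v x huv hwu.symm hwv.symm huv hxu.symm hxv.symm ?_
      rintro z ((hz | hz) | hz)
      · exact hconv u v huv (hT mu) (hT mv) hz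
      · exact hconv v x hxv.symm (hT mv) hxΔ hz
      · exact hconv u x hxu.symm (hT mu) hxΔ hz
    have hw : D.vtx w ∉ Δch u v x := by
      obtain ⟨-, g2, -⟩ := hJ u v x huv hxu.symm hxv.symm
      rw [g2]
      rintro (h | (h | h) | h)
      · exact h3 _ (interior_mono hsub2 h) mw
      · exact D.vtx_not_mem u v w huv hwu hwv h
      · exact D.vtx_not_mem v x w hxv.symm hwv hxw.symm h
      · exact D.vtx_not_mem u x w hxu.symm hwu hxw.symm h
    refine ih _ ?_ x hxu hxv (hsub2.trans hsub) rfl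
    rw [← hk]
    refine Set.ncard_lt_ncard ⟨fun i hi => hsub2 hi, fun h => hw (h (hT mw))⟩ (Set.toFinite _)
  have hstart : ∃ w : Fin n, w ≠ u ∧ w ≠ v ∧ Δch u v w = Δch a b c := by
    have e1 : Δch a b c = Δch b a c := (hsymm a b c).1
    have e2 : Δch a b c = Δch a c b := (hsymm a b c).2
    have e3 : Δch a c b = Δch c a b := (hsymm a c b).1
    have e4 : Δch b a c = Δch b c a := (hsymm b a c).2
    have e5 : Δch c a b = Δch c b a := (hsymm c a b).2
    rcases hu with rfl | rfl | rfl <;> rcases hv with rfl | rfl | rfl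
    · exact (huv rfl).elim
    · exact ⟨c, hac.symm, hbc.symm, rfl⟩
    · exact ⟨b, hab.symm, hbc, e2.symm⟩
    · exact ⟨c, hbc.symm, hac.symm, e1.symm⟩
    · exact (huv rfl).elim
    · exact ⟨a, hab, hac, (e1.trans e4).symm⟩
    · exact ⟨b, hbc, hab.symm, (e2.trans e3).symm⟩
    · exact ⟨a, hac, hab, (e2.trans (e3.trans e5)).symm⟩
    · exact (huv rfl).elim
  obtain ⟨w, hwu, hwv, hw⟩ := hstart
  exact main _ w hwu hwv hw.subset rfl

end
end

section
/- There is a constant c > 0 such that for every n ≥ 2, every hereditarily convex intermediate value good drawing of K_n in the sphere has at least n² − c·n·log n empty triangles. -/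
open Set Topology

noncomputable section

namespace HCIV
open Complex

/-- `F` has a continuous logarithm on `K`. -/
def HasLog (K : Set ℂ) (F : ℂ → ℂ) : Prop :=
  ∃ g : ℂ → ℂ, ContinuousOn g K ∧ ∀ z ∈ K, exp (g z) = F z

lemma HasLog.mono {K L : Set ℂ} {F : ℂ → ℂ} (h : HasLog L F) (hKL : K ⊆ L) : HasLog K F := by
  obtain ⟨g, hg, hF⟩ := h
  exact ⟨g, hg.mono hKL, fun z hz => hF z (hKL hz)⟩

lemma exp_eq_one_small {w : ℂ} (h : exp w = 1) (hw : ‖w‖ < 6) : w = 0 := by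
  obtain ⟨n, hn⟩ := exp_eq_one_iff.mp h
  have hn0 : n = 0 := by
    by_contra hne
    have h1 : (1 : ℝ) ≤ |(n : ℝ)| := by
      have := Int.one_le_abs hne
      exact_mod_cast this
    have h2 : ‖w‖ = |(n : ℝ)| * (2 * Real.pi) := by
      rw [hn]
      simp [abs_of_pos Real.pi_pos]
    have := Real.pi_gt_three
    nlinarith
  rw [hn, hn0]; simp

lemma isDiscrete_exp_fiber (c : ℂ) : IsDiscrete {w : ℂ | exp w = c} := by
  constructor
  refine DiscreteTopology.of_forall_le_dist (r := 6) (by norm_num) ?_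
  rintro ⟨x, hx⟩ ⟨y, hy⟩ hne
  by_contra hlt
  push Not at hlt
  apply hne
  have h1 : exp (x - y) = 1 := by
    have hx' : exp x = c := hx
    have hy' : exp y = c := hy
    rw [exp_sub, hx', hy', div_self]
    rw [← hx']; exact exp_ne_zero _
  have h2 : ‖x - y‖ < 6 := by
    rw [← dist_eq_norm]; exact hlt
  have := exp_eq_one_small h1 h2
  exact Subtype.ext (sub_eq_zero.mp this)

lemma const_of_exp {X : Type*} [TopologicalSpace X] {S : Set X} (hS : IsPreconnected S)
    {f : X → ℂ} (hf : ContinuousOn f S) {c : ℂ} (hc : ∀ x ∈ S, exp (f x) = c) {x y : X}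
    (hx : x ∈ S) (hy : y ∈ S) : f x = f y :=
  hS.constant_of_mapsTo (isDiscrete_exp_fiber c) hf (fun z hz => hc z hz) hx hy

/-- A function to `2πiℤ` is locally constant where it is continuous. -/
lemma eventually_const_of_exp {X : Type*} [TopologicalSpace X] {x : X}
    {f : X → ℂ} (hf : ContinuousAt f x) {c : ℂ} (hc : ∀ᶠ y in 𝓝 x, exp (f y) = c) :
    ∀ᶠ y in 𝓝 x, f y = f x := by
  have h1 : ∀ᶠ y in 𝓝 x, dist (f y) (f x) < 6 :=
    hf.eventually (Metric.ball_mem_nhds _ (by norm_num))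
  have hx := hc.self_of_nhds
  filter_upwards [h1, hc] with y hy hyc
  have h2 : exp (f y - f x) = 1 := by
    rw [exp_sub, hyc, hx, div_self]
    rw [← hx]; exact exp_ne_zero _
  rw [dist_eq_norm] at hy
  exact sub_eq_zero.mp (exp_eq_one_small h2 hy)

lemma global_log {X : Type*} [TopologicalSpace X] [SimplyConnectedSpace X]
    [LocallyPathConnectedSpace X] {h : X → ℂ} (hc : Continuous h) (h0 : ∀ x, h x ≠ 0) :
    ∃ G : X → ℂ, Continuous G ∧ ∀ x, exp (G x) = h x := by
  obtain ⟨x0⟩ : Nonempty X := inferInstance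
  obtain ⟨F, ⟨-, hF⟩, -⟩ := isCoveringMapOn_exp.existsUnique_continuousMap_lifts
    ⟨h, hc⟩ (exp_log (h0 x0)) (fun x => h0 x)
  exact ⟨F, F.continuous, fun x => congrFun hF x⟩

lemma path_log {f : ℝ → ℂ} (hf : ContinuousOn f (Icc 0 1)) (h0 : ∀ t ∈ Icc (0 : ℝ) 1, f t ≠ 0) :
    ∃ g : ℝ → ℂ, Continuous g ∧ ∀ t ∈ Icc (0 : ℝ) 1, exp (g t) = f t := by
  have hc : Continuous (IccExtend (zero_le_one' ℝ) ((Icc (0:ℝ) 1).domRestrict f)) :=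
    (continuousOn_iff_continuous_domRestrict.mp hf).Icc_extend'
  obtain ⟨G, hG, hGe⟩ := global_log hc (fun x => by
    simp only [IccExtend, Function.comp]
    exact h0 _ (projIcc _ _ _ x).2)
  refine ⟨G, hG, fun t ht => ?_⟩
  rw [hGe, IccExtend_of_mem _ _ ht]
  rfl

/-- `(z - p)^m` has no continuous logarithm on a circle around `p` unless `m = 0`. -/
lemma no_log_circle {G : ℂ → ℂ} {p : ℂ} {R : ℝ} (hR : 0 < R) {m : ℤ}
    (hG : ContinuousOn G (Metric.sphere p R))
    (hGe : ∀ z ∈ Metric.sphere p R, exp (G z) = (z - p) ^ m) : m = 0 := by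
  set c : ℝ → ℂ := fun t => p + R * exp (t * I) with hc
  have hcs : ∀ t, c t ∈ Metric.sphere p R := by
    intro t
    simp [hc, norm_exp_ofReal_mul_I, abs_of_pos hR]
  have hcc : Continuous c := by fun_prop
  have hcont : Continuous (fun t : ℝ => G (c t) - m * (t * I)) := by
    have : Continuous (fun t => G (c t)) := hG.comp_continuous hcc hcs
    exact this.sub (by fun_prop)
  have hconst := const_of_exp (X := ℝ) isPreconnected_univ hcont.continuousOn (c := (R : ℂ) ^ m)
    (x := 0) (y := 2 * Real.pi) (by
      intro t _
      rw [exp_sub, hGe _ (hcs t), exp_int_mul]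
      simp only [hc, add_sub_cancel_left, mul_zpow]
      rw [mul_div_assoc, div_self (zpow_ne_zero _ (exp_ne_zero _)), mul_one])
    (mem_univ _) (mem_univ _)
  have h2 : c (2 * Real.pi) = c 0 := by
    simp [hc, exp_two_pi_mul_I]
  simp only [h2] at hconst
  have h3 : (m : ℂ) * (2 * Real.pi * I) = 0 := by
    push_cast at hconst
    linear_combination hconst
  have : (2 * Real.pi * I : ℂ) ≠ 0 := two_pi_I_ne_zero
  have h4 := (mul_eq_zero.mp h3).resolve_right this
  exact_mod_cast h4

lemma tietze {K : Set ℂ} (hK : IsClosed K) {g : ℂ → ℂ} (hg : ContinuousOn g K) :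
    ∃ G : ℂ → ℂ, Continuous G ∧ ∀ z ∈ K, G z = g z := by
  obtain ⟨F, hF⟩ := ContinuousMap.exists_restrict_eq (Y := ℝ × ℝ) hK
    ⟨fun z : K => ((g z).re, (g z).im), by
      have := continuousOn_iff_continuous_domRestrict.mp hg
      have h' : Continuous fun z : K => g z := this
      exact (continuous_re.comp h').prodMk (continuous_im.comp h')⟩
  refine ⟨fun z => ((F z).1 : ℂ) + (F z).2 * I, by fun_prop, fun z hz => ?_⟩
  have := congrArg (fun q : C(K, ℝ × ℝ) => q ⟨z, hz⟩) hF
  simp only [ContinuousMap.restrict_apply, ContinuousMap.coe_mk] at this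
  simp only [this]
  exact re_add_im (g z)

/-- Eilenberg's criterion. -/
lemma eilenberg {U : Set ℂ} (hU : IsOpen U) (hb : Bornology.IsBounded U) {p : ℂ} (hp : p ∈ U)
    {H g : ℂ → ℂ} {m : ℤ} (hH : ContinuousOn H (closure U)) (hH0 : ∀ z ∈ closure U, H z ≠ 0)
    (hg : ContinuousOn g (frontier U))
    (he : ∀ z ∈ frontier U, exp (g z) = (z - p) ^ m * H z) : m = 0 := by
  classical
  obtain ⟨G, hG, hGe⟩ := tietze isClosed_frontier hg
  set h : ℂ → ℂ := fun z => if z ∈ closure U then exp (G z) / H z else (z - p) ^ m with hh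
  have hfr : frontier (closure U) ⊆ frontier U := frontier_closure_subset
  have hcont : Continuous h := by
    refine continuous_if' ?_ ?_ ?_ ?_
    · intro a ha
      have haf : a ∈ frontier U := hfr ha
      have hac : a ∈ closure U := frontier_subset_closure haf
      have : exp (G a) / H a = (a - p) ^ m := by
        rw [hGe a haf, he a haf, mul_div_assoc, div_self (hH0 a hac), mul_one]
      have e : (if a ∈ closure U then exp (G a) / H a else (a - p) ^ m) = exp (G a) / H a :=
        if_pos hac
      rw [e]
      exact ((hG.cexp.continuousOn.div hH hH0) a hac)
    · intro a ha
      have haf : a ∈ frontier U := hfr ha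
      have hac : a ∈ closure U := frontier_subset_closure haf
      have hap : a ≠ p := by
        rintro rfl
        exact (hU.inter_frontier_eq ▸ (⟨hp, haf⟩ : a ∈ U ∩ frontier U) : a ∈ (∅ : Set ℂ))
      have : exp (G a) / H a = (a - p) ^ m := by
        rw [hGe a haf, he a haf, mul_div_assoc, div_self (hH0 a hac), mul_one]
      have e : (if a ∈ closure U then exp (G a) / H a else (a - p) ^ m) = (a - p) ^ m := by
        rw [if_pos hac, this]
      rw [e]
      refine (ContinuousAt.continuousWithinAt ?_).tendsto
      exact ContinuousAt.zpow₀ (by fun_prop) _ (Or.inl (sub_ne_zero.mpr hap))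
    · exact hG.cexp.continuousOn.div hH hH0
    · intro a ha
      have hap : a ≠ p := by
        rintro rfl
        exact ha (subset_closure hp)
      refine ContinuousAt.continuousWithinAt ?_
      exact ContinuousAt.zpow₀ (by fun_prop) _ (Or.inl (sub_ne_zero.mpr hap))
  have hne : ∀ z, h z ≠ 0 := by
    intro z
    simp only [hh]
    split_ifs with hz
    · exact div_ne_zero (exp_ne_zero _) (hH0 z hz)
    · have hap : z ≠ p := by
        rintro rfl
        exact hz (subset_closure hp)
      exact zpow_ne_zero _ (sub_ne_zero.mpr hap)
  obtain ⟨L, hL, hLe⟩ := global_log hcont hne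
  obtain ⟨R, hR⟩ := hb.closure.subset_closedBall p
  have hR0 : 0 ≤ R := by
    have := hR (subset_closure hp)
    simpa using this
  refine no_log_circle (R := R + 1) (p := p) (by linarith) hL.continuousOn ?_
  intro z hz
  rw [hLe]
  simp only [hh]
  rw [if_neg]
  intro hzc
  have h1 := hR hzc
  rw [Metric.mem_closedBall] at h1
  rw [Metric.mem_sphere] at hz
  linarith

lemma isPreconnected_norm_gt {R : ℝ} (hR : 0 ≤ R) : IsPreconnected {z : ℂ | R < ‖z‖} := by
  have : {z : ℂ | R < ‖z‖} = (fun q : ℝ × ℝ => (q.1 : ℂ) * exp (q.2 * I)) '' (Ioi R ×ˢ univ) := by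
    ext z
    simp only [mem_ofPred_eq, mem_image, mem_prod, mem_Ioi, mem_univ, and_true, Prod.exists]
    constructor
    · intro hz
      exact ⟨‖z‖, arg z, hz, norm_mul_exp_arg_mul_I z⟩
    · rintro ⟨r, t, hr, rfl⟩
      have : 0 < r := lt_of_le_of_lt hR hr
      simpa [norm_exp_ofReal_mul_I, abs_of_pos this] using hr
  rw [this]
  exact (isPreconnected_Ioi.prod isPreconnected_univ).image _ (by fun_prop)

end HCIV

namespace HCIV
open Complex

/-- A compact connected set on which every nonvanishing function has a logarithm. -/
structure LogArc (A : Set ℂ) : Prop where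
  compact : IsCompact A
  conn : IsPreconnected A
  log : ∀ F : ℂ → ℂ, ContinuousOn F A → (∀ z ∈ A, F z ≠ 0) → HasLog A F

lemma continuousOn_invFunOn {X : Type*} [TopologicalSpace X] [T2Space X]
    {f : ℝ → X} {s : Set ℝ} (hs : IsCompact s) (hf : ContinuousOn f s)
    (hi : InjOn f s) : ContinuousOn (Function.invFunOn f s) (f '' s) := by
  rw [continuousOn_iff_isClosed]
  intro t ht
  refine ⟨f '' (s ∩ t), ((hs.inter_right ht).image_of_continuousOn
    (hf.mono inter_subset_left)).isClosed, ?_⟩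
  ext x
  constructor
  · rintro ⟨hx, y, hy, rfl⟩
    rw [mem_preimage, hi.leftInvOn_invFunOn hy] at hx
    exact ⟨⟨y, ⟨hy, hx⟩, rfl⟩, ⟨y, hy, rfl⟩⟩
  · rintro ⟨⟨y, ⟨hy, hyt⟩, rfl⟩, -⟩
    refine ⟨?_, ⟨y, hy, rfl⟩⟩
    rw [mem_preimage, hi.leftInvOn_invFunOn hy]
    exact hyt

lemma logArc_of_path {f : ℝ → ℂ} (hf : ContinuousOn f (Icc 0 1)) (hi : InjOn f (Icc 0 1)) :
    LogArc (f '' Icc 0 1) := by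
  refine ⟨isCompact_Icc.image_of_continuousOn hf, isPreconnected_Icc.image _ hf, ?_⟩
  intro F hF hF0
  obtain ⟨g, hg, hge⟩ := path_log (f := F ∘ f) (hF.comp hf (mapsTo_image _ _))
    (fun t ht => hF0 _ ⟨t, ht, rfl⟩)
  refine ⟨g ∘ Function.invFunOn f (Icc 0 1),
    hg.comp_continuousOn (continuousOn_invFunOn isCompact_Icc hf hi), ?_⟩
  rintro _ ⟨t, ht, rfl⟩
  simp only [Function.comp, hi.leftInvOn_invFunOn ht]
  exact hge t ht

lemma logArc_of_path' {f : ℝ → ℂ} {s t : ℝ} (hst : s ≤ t) (hf : ContinuousOn f (Icc s t))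
    (hi : InjOn f (Icc s t)) : LogArc (f '' Icc s t) := by
  rcases hst.eq_or_lt with rfl | hlt
  · simp only [Icc_self, image_singleton]
    refine ⟨isCompact_singleton, isPreconnected_singleton, fun F _ h0 => ?_⟩
    refine ⟨fun z => log (F z), continuousOn_singleton _ _, fun z hz => exp_log (h0 z hz)⟩
  · have him : (fun u : ℝ => s + (t - s) * u) '' Icc 0 1 = Icc s t := by
      ext x
      constructor
      · rintro ⟨u, ⟨h0, h1⟩, rfl⟩
        constructor <;> simp only <;> nlinarith
      · rintro ⟨h0, h1⟩
        have hp : 0 < t - s := by linarith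
        refine ⟨(x - s) / (t - s), ⟨div_nonneg (by linarith) hp.le, ?_⟩, ?_⟩
        · rw [div_le_one hp]; linarith
        · simp only; field_simp; ring
    have := logArc_of_path (f := f ∘ fun u : ℝ => s + (t - s) * u) ?_ ?_
    · rwa [image_comp, him] at this
    · refine hf.comp (by fun_prop) ?_
      rw [← him]; exact mapsTo_image _ _
    · refine InjOn.comp hi ?_ ?_ (t := Icc s t)
      · intro u _ v _ h
        have hp : t - s ≠ 0 := by linarith
        simp only [add_right_inj] at h
        exact mul_left_cancel₀ hp h
      · rw [← him]; exact mapsTo_image _ _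

/-- Variation of `log (z - p)` along `A` from `a` to `b`. -/
def ell (A : Set ℂ) (a b p : ℂ) : ℂ := by
  classical
  exact if h : HasLog A (fun z => z - p) then h.choose b - h.choose a else 0

lemma ell_symm (A : Set ℂ) (a b p : ℂ) : ell A b a p = - ell A a b p := by
  unfold ell
  split_ifs <;> simp

lemma ell_eq {A : Set ℂ} (hA : LogArc A) {a b p : ℂ} (ha : a ∈ A) (hb : b ∈ A)
    {g : ℂ → ℂ} (hg : ContinuousOn g A) (hge : ∀ z ∈ A, exp (g z) = z - p) :
    ell A a b p = g b - g a := by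
  have h : HasLog A (fun z => z - p) := ⟨g, hg, hge⟩
  unfold ell
  rw [dif_pos h]
  obtain ⟨h1, h2⟩ := h.choose_spec
  have := const_of_exp hA.conn (h1.sub hg) (c := 1) (by
    intro x hx
    rw [Pi.sub_apply, exp_sub, h2 x hx, hge x hx, div_self]
    change x - p ≠ 0
    rw [← hge x hx]; exact exp_ne_zero _) ha hb
  simp only [Pi.sub_apply] at this
  linear_combination -this

lemma LogArc.log_sub {A : Set ℂ} (hA : LogArc A) {p : ℂ} (hp : p ∉ A) :
    HasLog A (fun z => z - p) :=
  hA.log _ (by fun_prop) (fun z hz h => hp (by rw [sub_eq_zero] at h; rwa [← h]))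

lemma ell_exp {A : Set ℂ} (hA : LogArc A) {a b p : ℂ} (ha : a ∈ A) (hb : b ∈ A) (hp : p ∉ A) :
    exp (ell A a b p) = (b - p) / (a - p) := by
  obtain ⟨g, hg, hge⟩ := hA.log_sub hp
  rw [ell_eq hA ha hb hg hge, exp_sub, hge a ha, hge b hb]

lemma ell_continuousAt {A : Set ℂ} (hA : LogArc A) {a b p : ℂ} (ha : a ∈ A) (hb : b ∈ A)
    (hp : p ∉ A) : ContinuousAt (ell A a b) p := by
  obtain ⟨g, hg, hge⟩ := hA.log_sub hp
  obtain ⟨δ, hδ, hball⟩ := Metric.isOpen_iff.mp hA.compact.isClosed.isOpen_compl p hp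
  have hfar : ∀ z ∈ A, δ ≤ ‖z - p‖ := by
    intro z hz
    by_contra h
    push Not at h
    exact hball (by rwa [Metric.mem_ball, dist_eq_norm]) hz
  have hne : ∀ z ∈ A, z - p ≠ 0 := fun z hz => norm_pos_iff.mp (lt_of_lt_of_le hδ (hfar z hz))
  have hslit : ∀ q, ‖q - p‖ < δ → ∀ z ∈ A, 1 - (q - p) / (z - p) ∈ slitPlane := by
    intro q hq z hz
    rw [sub_eq_add_neg]
    apply mem_slitPlane_of_norm_lt_one
    rw [norm_neg, norm_div, div_lt_one (lt_of_lt_of_le hδ (hfar z hz))]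
    exact lt_of_lt_of_le hq (hfar z hz)
  have key : ∀ q, ‖q - p‖ < δ → ell A a b q =
      (g b + log (1 - (q - p) / (b - p))) - (g a + log (1 - (q - p) / (a - p))) := by
    intro q hq
    refine ell_eq hA ha hb (g := fun z => g z + log (1 - (q - p) / (z - p))) ?_ ?_
    · refine hg.add (ContinuousOn.clog ?_ (hslit q hq))
      exact continuousOn_const.sub (continuousOn_const.div (by fun_prop) hne)
    · intro z hz
      rw [exp_add, hge z hz, exp_log (slitPlane_ne_zero (hslit q hq z hz))]
      have := hne z hz
      field_simp
      ring
  have hev : ∀ᶠ q in 𝓝 p, ell A a b q =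
      (g b + log (1 - (q - p) / (b - p))) - (g a + log (1 - (q - p) / (a - p))) := by
    filter_upwards [Metric.ball_mem_nhds p hδ] with q hq
    exact key q (by rwa [Metric.mem_ball, dist_eq_norm] at hq)
  refine ContinuousAt.congr ?_ (hev.mono fun q h => h.symm)
  have hl : ∀ z ∈ A, ContinuousAt (fun q => log (1 - (q - p) / (z - p))) p := by
    intro z hz
    refine ContinuousAt.clog (by fun_prop) ?_
    exact hslit p (by simpa using hδ) z hz
  exact (continuousAt_const.add (hl b hb)).sub (continuousAt_const.add (hl a ha))

lemma ell_far {A : Set ℂ} (hA : LogArc A) {a b p : ℂ} (ha : a ∈ A) (hb : b ∈ A) {R : ℝ}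
    (hR : 0 ≤ R) (hAR : ∀ z ∈ A, ‖z‖ ≤ R) (hp : R < ‖p‖) :
    ell A a b p = log (1 - b / p) - log (1 - a / p) := by
  have hp0 : p ≠ 0 := norm_pos_iff.mp (lt_of_le_of_lt hR hp)
  have hslit : ∀ z ∈ A, 1 - z / p ∈ slitPlane := by
    intro z hz
    rw [sub_eq_add_neg]
    apply mem_slitPlane_of_norm_lt_one
    rw [norm_neg, norm_div, div_lt_one (lt_of_le_of_lt hR hp)]
    exact lt_of_le_of_lt (hAR z hz) hp
  rw [ell_eq hA ha hb (g := fun z => log (1 - z / p) + log (-p))]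
  · ring
  · refine (ContinuousOn.clog (by fun_prop) hslit).add continuousOn_const
  · intro z hz
    rw [exp_add, exp_log (slitPlane_ne_zero (hslit z hz)), exp_log (neg_ne_zero.mpr hp0)]
    field_simp
    ring

/-- Gluing logarithms along at most one common point. -/
lemma HasLog.glue {A B : Set ℂ} (hA : IsClosed A) (hB : IsClosed B) {F : ℂ → ℂ} {x : ℂ}
    (hAB : A ∩ B ⊆ {x}) (h1 : HasLog A F) (h2 : HasLog B F) : HasLog (A ∪ B) F := by
  classical
  obtain ⟨g, hg, hge⟩ := h1
  obtain ⟨h, hh, hhe⟩ := h2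
  obtain ⟨k, hk, hke, hkx⟩ : ∃ k : ℂ → ℂ, ContinuousOn k B ∧ (∀ z ∈ B, exp (k z) = F z) ∧
      ∀ z ∈ A ∩ B, k z = g z := by
    by_cases hx : x ∈ A ∩ B
    · refine ⟨fun z => h z + (g x - h x), hh.add continuousOn_const, ?_, ?_⟩
      · intro z hz
        rw [exp_add, exp_sub, hge x hx.1, hhe x hx.2, hhe z hz, div_self, mul_one]
        rw [← hge x hx.1]; exact exp_ne_zero _
      · intro z hz
        have : z = x := hAB hz
        subst this
        ring
    · refine ⟨h, hh, hhe, fun z hz => ?_⟩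
      have : z = x := hAB hz
      subst this
      exact absurd hz hx
  refine ⟨fun z => if z ∈ A then g z else k z, ?_, ?_⟩
  · refine ContinuousOn.union_of_isClosed ?_ ?_ hA hB
    · exact hg.congr fun z hz => if_pos hz
    · refine hk.congr fun z hz => ?_
      by_cases hzA : z ∈ A
      · simp only [if_pos hzA]; exact (hkx z ⟨hzA, hz⟩).symm
      · simp only [if_neg hzA]
  · rintro z (hz | hz)
    · simp only [if_pos hz]; exact hge z hz
    · by_cases hzA : z ∈ A
      · simp only [if_pos hzA]; exact hge z hzA
      · simp only [if_neg hzA]; exact hke z hz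

/-- Three arcs forming a closed curve. -/
structure Tri (A₁ A₂ A₃ : Set ℂ) (a b c : ℂ) : Prop where
  l₁ : LogArc A₁
  l₂ : LogArc A₂
  l₃ : LogArc A₃
  i₁₂ : A₁ ∩ A₂ = {b}
  i₂₃ : A₂ ∩ A₃ = {c}
  i₃₁ : A₃ ∩ A₁ = {a}
  hab : a ≠ b

/-- (2πi times) the winding number. -/
def wnd (A₁ A₂ A₃ : Set ℂ) (a b c p : ℂ) : ℂ := ell A₁ a b p + ell A₂ b c p + ell A₃ c a p

namespace Tri
variable {A₁ A₂ A₃ : Set ℂ} {a b c : ℂ}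

lemma a₁ (T : Tri A₁ A₂ A₃ a b c) : a ∈ A₁ := (T.i₃₁.symm ▸ rfl : a ∈ A₃ ∩ A₁).2
lemma a₃ (T : Tri A₁ A₂ A₃ a b c) : a ∈ A₃ := (T.i₃₁.symm ▸ rfl : a ∈ A₃ ∩ A₁).1
lemma b₁ (T : Tri A₁ A₂ A₃ a b c) : b ∈ A₁ := (T.i₁₂.symm ▸ rfl : b ∈ A₁ ∩ A₂).1
lemma b₂ (T : Tri A₁ A₂ A₃ a b c) : b ∈ A₂ := (T.i₁₂.symm ▸ rfl : b ∈ A₁ ∩ A₂).2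
lemma c₂ (T : Tri A₁ A₂ A₃ a b c) : c ∈ A₂ := (T.i₂₃.symm ▸ rfl : c ∈ A₂ ∩ A₃).1
lemma c₃ (T : Tri A₁ A₂ A₃ a b c) : c ∈ A₃ := (T.i₂₃.symm ▸ rfl : c ∈ A₂ ∩ A₃).2

lemma isCompact (T : Tri A₁ A₂ A₃ a b c) : IsCompact (A₁ ∪ A₂ ∪ A₃) :=
  (T.l₁.compact.union T.l₂.compact).union T.l₃.compact

lemma isClosed (T : Tri A₁ A₂ A₃ a b c) : IsClosed (A₁ ∪ A₂ ∪ A₃) := T.isCompact.isClosed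

lemma exp_wnd (T : Tri A₁ A₂ A₃ a b c) {p : ℂ} (hp : p ∉ A₁ ∪ A₂ ∪ A₃) : exp (wnd A₁ A₂ A₃ a b c p) = 1 := by
  simp only [mem_union, not_or] at hp
  have hne : ∀ A : Set ℂ, ∀ z ∈ A, p ∉ A → z - p ≠ 0 := fun A z hz h h0 =>
    h (by rw [sub_eq_zero] at h0; rwa [← h0])
  have h1 := hne _ _ T.a₁ hp.1.1
  have h2 := hne _ _ T.b₁ hp.1.1
  have h3 := hne _ _ T.c₂ hp.1.2
  rw [wnd, exp_add, exp_add, ell_exp T.l₁ T.a₁ T.b₁ hp.1.1, ell_exp T.l₂ T.b₂ T.c₂ hp.1.2,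
    ell_exp T.l₃ T.c₃ T.a₃ hp.2]
  field_simp

lemma continuousAt_wnd (T : Tri A₁ A₂ A₃ a b c) {p : ℂ} (hp : p ∉ A₁ ∪ A₂ ∪ A₃) :
    ContinuousAt (wnd A₁ A₂ A₃ a b c) p := by
  simp only [mem_union, not_or] at hp
  exact ((ell_continuousAt T.l₁ T.a₁ T.b₁ hp.1.1).add
    (ell_continuousAt T.l₂ T.b₂ T.c₂ hp.1.2)).add (ell_continuousAt T.l₃ T.c₃ T.a₃ hp.2)

lemma exists_bound (T : Tri A₁ A₂ A₃ a b c) : ∃ R : ℝ, 0 ≤ R ∧ ∀ z ∈ A₁ ∪ A₂ ∪ A₃, ‖z‖ ≤ R := by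
  obtain ⟨R, hR⟩ := T.isCompact.isBounded.exists_norm_le
  exact ⟨max R 0, le_max_right _ _, fun z hz => (hR z hz).trans (le_max_left _ _)⟩

lemma wnd_far (T : Tri A₁ A₂ A₃ a b c) {R : ℝ} (hR : 0 ≤ R) (hK : ∀ z ∈ A₁ ∪ A₂ ∪ A₃, ‖z‖ ≤ R) {p : ℂ} (hp : R < ‖p‖) :
    wnd A₁ A₂ A₃ a b c p = 0 := by
  rw [wnd, ell_far T.l₁ T.a₁ T.b₁ hR (fun z hz => hK z (by simp [hz])) hp,
    ell_far T.l₂ T.b₂ T.c₂ hR (fun z hz => hK z (by simp [hz])) hp,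
    ell_far T.l₃ T.c₃ T.a₃ hR (fun z hz => hK z (by simp [hz])) hp]
  ring

lemma wnd_const (T : Tri A₁ A₂ A₃ a b c) {p q : ℂ} {S : Set ℂ} (hS : IsPreconnected S) (hSK : S ⊆ (A₁ ∪ A₂ ∪ A₃)ᶜ)
    (hp : p ∈ S) (hq : q ∈ S) : wnd A₁ A₂ A₃ a b c p = wnd A₁ A₂ A₃ a b c q :=
  const_of_exp hS (fun _ hz => (T.continuousAt_wnd (hSK hz)).continuousWithinAt)
    (fun _ hz => T.exp_wnd (hSK hz)) hp hq

lemma eventually_wnd (T : Tri A₁ A₂ A₃ a b c) {p : ℂ} (hp : p ∉ A₁ ∪ A₂ ∪ A₃) :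
    ∀ᶠ q in 𝓝 p, wnd A₁ A₂ A₃ a b c q = wnd A₁ A₂ A₃ a b c p :=
  eventually_const_of_exp (T.continuousAt_wnd hp) (c := 1) (by
    filter_upwards [T.isClosed.isOpen_compl.mem_nhds hp] with q hq using T.exp_wnd hq)

lemma hasLog (T : Tri A₁ A₂ A₃ a b c) {p q : ℂ} (hp : p ∉ A₁ ∪ A₂ ∪ A₃) (hq : q ∉ A₁ ∪ A₂ ∪ A₃) {m n : ℤ}
    (h : m * wnd A₁ A₂ A₃ a b c p + n * wnd A₁ A₂ A₃ a b c q = 0) :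
    HasLog (A₁ ∪ A₂ ∪ A₃) (fun z => (z - p) ^ m * (z - q) ^ n) := by
  classical
  simp only [mem_union, not_or] at hp hq
  obtain ⟨g₁, hg₁, hge₁⟩ := T.l₁.log_sub hp.1.1
  obtain ⟨g₂, hg₂, hge₂⟩ := T.l₂.log_sub hp.1.2
  obtain ⟨g₃, hg₃, hge₃⟩ := T.l₃.log_sub hp.2
  obtain ⟨k₁, hk₁, hke₁⟩ := T.l₁.log_sub hq.1.1
  obtain ⟨k₂, hk₂, hke₂⟩ := T.l₂.log_sub hq.1.2
  obtain ⟨k₃, hk₃, hke₃⟩ := T.l₃.log_sub hq.2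
  rw [wnd, wnd, ell_eq T.l₁ T.a₁ T.b₁ hg₁ hge₁, ell_eq T.l₂ T.b₂ T.c₂ hg₂ hge₂,
    ell_eq T.l₃ T.c₃ T.a₃ hg₃ hge₃, ell_eq T.l₁ T.a₁ T.b₁ hk₁ hke₁, ell_eq T.l₂ T.b₂ T.c₂ hk₂ hke₂,
    ell_eq T.l₃ T.c₃ T.a₃ hk₃ hke₃] at h
  set F : ℂ → ℂ := fun z => (z - p) ^ m * (z - q) ^ n with hF
  set G₁ : ℂ → ℂ := fun z => m * g₁ z + n * k₁ z with hG₁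
  set G₂ : ℂ → ℂ := fun z => m * g₂ z + n * k₂ z with hG₂
  set G₃ : ℂ → ℂ := fun z => m * g₃ z + n * k₃ z with hG₃
  have e₁ : ∀ z ∈ A₁, exp (G₁ z) = F z := fun z hz => by
    simp only [hG₁, hF, exp_add, exp_int_mul, hge₁ z hz, hke₁ z hz]
  have e₂ : ∀ z ∈ A₂, exp (G₂ z) = F z := fun z hz => by
    simp only [hG₂, hF, exp_add, exp_int_mul, hge₂ z hz, hke₂ z hz]
  have e₃ : ∀ z ∈ A₃, exp (G₃ z) = F z := fun z hz => by
    simp only [hG₃, hF, exp_add, exp_int_mul, hge₃ z hz, hke₃ z hz]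
  have c₁ : ContinuousOn G₁ A₁ := (continuousOn_const.mul hg₁).add (continuousOn_const.mul hk₁)
  have c₂ : ContinuousOn G₂ A₂ := (continuousOn_const.mul hg₂).add (continuousOn_const.mul hk₂)
  have c₃ : ContinuousOn G₃ A₃ := (continuousOn_const.mul hg₃).add (continuousOn_const.mul hk₃)
  have hsum : (G₁ b - G₁ a) + (G₂ c - G₂ b) + (G₃ a - G₃ c) = 0 := by
    simp only [hG₁, hG₂, hG₃]
    linear_combination h
  set d₂ : ℂ := G₁ b - G₂ b with hd₂
  set d₃ : ℂ := G₁ a - G₃ a with hd₃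
  have ed₂ : exp d₂ = 1 := by
    rw [hd₂, exp_sub, e₁ b T.b₁, e₂ b T.b₂, div_self]
    rw [← e₁ b T.b₁]; exact exp_ne_zero _
  have ed₃ : exp d₃ = 1 := by
    rw [hd₃, exp_sub, e₁ a T.a₁, e₃ a T.a₃, div_self]
    rw [← e₁ a T.a₁]; exact exp_ne_zero _
  set g : ℂ → ℂ := fun z => if z ∈ A₁ then G₁ z else if z ∈ A₂ then G₂ z + d₂ else G₃ z + d₃
  have f₁ : ∀ z ∈ A₁, g z = G₁ z := fun z hz => if_pos hz
  have f₂ : ∀ z ∈ A₂, g z = G₂ z + d₂ := fun z hz => by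
    by_cases h1 : z ∈ A₁
    · have : z = b := by
        have : z ∈ A₁ ∩ A₂ := ⟨h1, hz⟩
        rwa [T.i₁₂] at this
      rw [f₁ z h1, this, hd₂]; ring
    · simp only [g, if_neg h1, if_pos hz]
  have f₃ : ∀ z ∈ A₃, g z = G₃ z + d₃ := fun z hz => by
    by_cases h1 : z ∈ A₁
    · have : z = a := by
        have : z ∈ A₃ ∩ A₁ := ⟨hz, h1⟩
        rwa [T.i₃₁] at this
      rw [f₁ z h1, this, hd₃]; ring
    · by_cases h2 : z ∈ A₂
      · have : z = c := by
          have : z ∈ A₂ ∩ A₃ := ⟨h2, hz⟩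
          rwa [T.i₂₃] at this
        rw [f₂ z h2, this, hd₃, hd₂]; linear_combination hsum
      · simp only [g, if_neg h1, if_neg h2]
  refine ⟨g, ?_, ?_⟩
  · refine ContinuousOn.union_of_isClosed (ContinuousOn.union_of_isClosed ?_ ?_
      T.l₁.compact.isClosed T.l₂.compact.isClosed) ?_
      (T.l₁.compact.union T.l₂.compact).isClosed T.l₃.compact.isClosed
    · exact c₁.congr f₁
    · exact (c₂.add continuousOn_const).congr f₂
    · exact (c₃.add continuousOn_const).congr f₃
  · rintro z ((hz | hz) | hz)
    · rw [f₁ z hz, e₁ z hz]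
    · rw [f₂ z hz, exp_add, e₂ z hz, ed₂, mul_one]
    · rw [f₃ z hz, exp_add, e₃ z hz, ed₃, mul_one]

end Tri
end HCIV

namespace HCIV
open Complex

namespace Tri
variable {A₁ A₂ A₃ : Set ℂ} {a b c : ℂ}

/-- An open set of constant type has frontier in the curve. -/
lemma frontier_wnd_subset (T : Tri A₁ A₂ A₃ a b c) (P : ℂ → Prop) :
    frontier {p | p ∉ A₁ ∪ A₂ ∪ A₃ ∧ P (wnd A₁ A₂ A₃ a b c p)} ⊆ A₁ ∪ A₂ ∪ A₃ := by
  intro x hx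
  by_contra hxK
  have h1 := T.eventually_wnd hxK
  have h2 := T.isClosed.isOpen_compl.mem_nhds hxK
  rw [frontier_eq_closure_inter_closure] at hx
  have hcl := hx.1
  have hcl' := hx.2
  rw [mem_closure_iff_frequently] at hcl hcl'
  obtain ⟨y, hy, hy1, -⟩ := (hcl.and_eventually (h1.and h2)).exists
  obtain ⟨z, hz, hz1, hz2⟩ := (hcl'.and_eventually (h1.and h2)).exists
  apply hz
  refine ⟨hz2, ?_⟩
  rw [hz1, ← hy1]
  exact hy.2

lemma isOpen_wnd (T : Tri A₁ A₂ A₃ a b c) (P : ℂ → Prop) :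
    IsOpen {p | p ∉ A₁ ∪ A₂ ∪ A₃ ∧ P (wnd A₁ A₂ A₃ a b c p)} := by
  rw [isOpen_iff_mem_nhds]
  rintro x ⟨hx, hP⟩
  filter_upwards [T.eventually_wnd hx, T.isClosed.isOpen_compl.mem_nhds hx] with q h1 h2
  refine ⟨h2, ?_⟩
  rw [h1]; exact hP

lemma frontier_comp (T : Tri A₁ A₂ A₃ a b c) (p : ℂ) :
    closure (connectedComponentIn (A₁ ∪ A₂ ∪ A₃)ᶜ p) ⊆
      connectedComponentIn (A₁ ∪ A₂ ∪ A₃)ᶜ p ∪ (A₁ ∪ A₂ ∪ A₃) := by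
  intro x hx
  by_contra hn
  have hxK : x ∉ A₁ ∪ A₂ ∪ A₃ := fun h => hn (Or.inr h)
  have hxU : x ∉ connectedComponentIn (A₁ ∪ A₂ ∪ A₃)ᶜ p := fun h => hn (Or.inl h)
  have ho : IsOpen (connectedComponentIn (A₁ ∪ A₂ ∪ A₃)ᶜ x) :=
    T.isClosed.isOpen_compl.connectedComponentIn
  obtain ⟨y, hy1, hy2⟩ := mem_closure_iff.mp hx _ ho (mem_connectedComponentIn hxK)
  have e1 := connectedComponentIn_eq hy1
  have e2 := connectedComponentIn_eq hy2
  apply hxU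
  rw [e2, ← e1]
  exact mem_connectedComponentIn hxK

lemma bounded_of_wnd_ne (T : Tri A₁ A₂ A₃ a b c) :
    Bornology.IsBounded {p | p ∉ A₁ ∪ A₂ ∪ A₃ ∧ wnd A₁ A₂ A₃ a b c p ≠ 0} := by
  obtain ⟨R, hR, hK⟩ := T.exists_bound
  refine (Metric.isBounded_closedBall (x := (0 : ℂ)) (r := R)).subset ?_
  rintro p ⟨-, hp⟩
  rw [mem_closedBall_zero_iff]
  by_contra h
  push Not at h
  exact hp (T.wnd_far hR hK h)

/-- All points with nonzero winding number lie in one component. -/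
lemma comp_of_ne (T : Tri A₁ A₂ A₃ a b c) {p q : ℂ} (hp : p ∉ A₁ ∪ A₂ ∪ A₃)
    (hq : q ∉ A₁ ∪ A₂ ∪ A₃) (hpw : wnd A₁ A₂ A₃ a b c p ≠ 0) (hqw : wnd A₁ A₂ A₃ a b c q ≠ 0) :
    q ∈ connectedComponentIn (A₁ ∪ A₂ ∪ A₃)ᶜ p := by
  by_contra hqU
  obtain ⟨m, hm⟩ := exp_eq_one_iff.mp (T.exp_wnd hp)
  obtain ⟨n, hn⟩ := exp_eq_one_iff.mp (T.exp_wnd hq)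
  have hn0 : n ≠ 0 := by
    rintro rfl
    simp at hn
    exact hqw hn
  set U := connectedComponentIn (A₁ ∪ A₂ ∪ A₃)ᶜ p with hU
  have hUo : IsOpen U := T.isClosed.isOpen_compl.connectedComponentIn
  have hUK : U ⊆ (A₁ ∪ A₂ ∪ A₃)ᶜ := connectedComponentIn_subset _ _
  have hpU : p ∈ U := mem_connectedComponentIn hp
  have hUb : Bornology.IsBounded U := by
    refine T.bounded_of_wnd_ne.subset fun x hx => ⟨hUK hx, ?_⟩
    rwa [T.wnd_const isPreconnected_connectedComponentIn hUK hx hpU]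
  have hcl := T.frontier_comp p
  have hqcl : q ∉ closure U := fun h => (hcl h).elim hqU hq
  have hfr : frontier U ⊆ A₁ ∪ A₂ ∪ A₃ := by
    intro x hx
    rcases hcl (frontier_subset_closure hx) with h | h
    · exact ((hUo.inter_frontier_eq ▸ (⟨h, hx⟩ : x ∈ U ∩ frontier U) : x ∈ (∅ : Set ℂ))).elim
    · exact h
  obtain ⟨g, hg, hge⟩ := (T.hasLog hp hq (m := n) (n := -m) (by
    rw [hm, hn]; push_cast; ring)).mono hfr
  have hne : ∀ z ∈ closure U, z - q ≠ 0 := fun z hz h => hqcl (by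
    rw [sub_eq_zero] at h; rwa [← h])
  refine hn0 (eilenberg hUo hUb hpU (H := fun z => (z - q) ^ (-m)) ?_ ?_ hg hge)
  · exact ContinuousOn.zpow₀ (by fun_prop) _ (fun z hz => Or.inl (hne z hz))
  · exact fun z hz => zpow_ne_zero _ (hne z hz)

/-- All points with zero winding number lie in one component. -/
lemma comp_of_eq (T : Tri A₁ A₂ A₃ a b c) {p q : ℂ} (hp : p ∉ A₁ ∪ A₂ ∪ A₃)
    (hq : q ∉ A₁ ∪ A₂ ∪ A₃) (hpw : wnd A₁ A₂ A₃ a b c p = 0) (hqw : wnd A₁ A₂ A₃ a b c q = 0) :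
    q ∈ connectedComponentIn (A₁ ∪ A₂ ∪ A₃)ᶜ p := by
  obtain ⟨R, hR, hK⟩ := T.exists_bound
  have key : ∀ r, r ∉ A₁ ∪ A₂ ∪ A₃ → wnd A₁ A₂ A₃ a b c r = 0 →
      ∃ x ∈ connectedComponentIn (A₁ ∪ A₂ ∪ A₃)ᶜ r, R < ‖x‖ := by
    intro r hr hrw
    by_contra hcon
    push Not at hcon
    set U := connectedComponentIn (A₁ ∪ A₂ ∪ A₃)ᶜ r with hU
    have hUo : IsOpen U := T.isClosed.isOpen_compl.connectedComponentIn
    have hrU : r ∈ U := mem_connectedComponentIn hr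
    have hUb : Bornology.IsBounded U :=
      (Metric.isBounded_closedBall (x := (0 : ℂ)) (r := R)).subset
        fun x hx => mem_closedBall_zero_iff.mpr (hcon x hx)
    have hcl := T.frontier_comp r
    have hfr : frontier U ⊆ A₁ ∪ A₂ ∪ A₃ := by
      intro x hx
      rcases hcl (frontier_subset_closure hx) with h | h
      · exact ((hUo.inter_frontier_eq ▸ (⟨h, hx⟩ : x ∈ U ∩ frontier U) : x ∈ (∅ : Set ℂ))).elim
      · exact h
    obtain ⟨g, hg, hge⟩ := (T.hasLog hr hr (m := 1) (n := 0) (by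
      rw [hrw]; simp)).mono hfr
    have := eilenberg hUo hUb hrU (H := fun z => (z - r) ^ (0 : ℤ)) (m := 1)
      (by simpa using continuousOn_const) (by simp) hg hge
    exact one_ne_zero this
  obtain ⟨x, hx, hxR⟩ := key p hp hpw
  obtain ⟨y, hy, hyR⟩ := key q hq hqw
  have hsub : {z : ℂ | R < ‖z‖} ⊆ (A₁ ∪ A₂ ∪ A₃)ᶜ := fun z hz hzK =>
    absurd (hK z hzK) (not_le.mpr hz)
  have h1 := (isPreconnected_norm_gt hR).subset_connectedComponentIn
    (x := x) hxR hsub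
  have h2 : y ∈ connectedComponentIn (A₁ ∪ A₂ ∪ A₃)ᶜ p := by
    rw [connectedComponentIn_eq hx]
    exact h1 hyR
  rw [connectedComponentIn_eq h2, ← connectedComponentIn_eq hy]
  exact mem_connectedComponentIn hq

/-- The curve separates. -/
lemma exists_wnd_ne (T : Tri A₁ A₂ A₃ a b c) :
    ∃ p, p ∉ A₁ ∪ A₂ ∪ A₃ ∧ wnd A₁ A₂ A₃ a b c p ≠ 0 := by
  classical
  by_contra hcon
  push Not at hcon
  set L : ℂ → ℂ := fun z => if z ∉ A₁ then ell A₁ a b z else -(ell A₂ b c z + ell A₃ c a z)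
  have hL1 : ∀ z ∈ A₁ᶜ, L z = ell A₁ a b z := fun z hz => if_pos hz
  have hL2 : ∀ z ∈ (A₂ ∪ A₃)ᶜ, L z = -(ell A₂ b c z + ell A₃ c a z) := by
    intro z hz
    by_cases h : z ∈ A₁
    · simp only [L, not_not.mpr h, if_false]
    · rw [hL1 z h]
      have := hcon z (by
        simp only [mem_union, mem_compl_iff, not_or] at hz ⊢
        exact ⟨⟨h, hz.1⟩, hz.2⟩)
      rw [wnd] at this
      linear_combination this
  have hcov : ∀ z, z ≠ a → z ≠ b → z ∈ A₁ᶜ ∪ (A₂ ∪ A₃)ᶜ := by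
    intro z hza hzb
    by_cases h1 : z ∈ A₁
    · right
      rintro (h2 | h2)
      · have : z ∈ A₁ ∩ A₂ := ⟨h1, h2⟩
        rw [T.i₁₂] at this
        exact hzb this
      · have : z ∈ A₃ ∩ A₁ := ⟨h2, h1⟩
        rw [T.i₃₁] at this
        exact hza this
    · exact Or.inl h1
  have hcL : ContinuousOn L (A₁ᶜ ∪ (A₂ ∪ A₃)ᶜ) := by
    refine ContinuousOn.union_of_isOpen ?_ ?_ T.l₁.compact.isClosed.isOpen_compl
      (T.l₂.compact.union T.l₃.compact).isClosed.isOpen_compl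
    · refine ContinuousOn.congr ?_ hL1
      exact fun z hz => (ell_continuousAt T.l₁ T.a₁ T.b₁ hz).continuousWithinAt
    · refine ContinuousOn.congr ?_ hL2
      intro z hz
      simp only [mem_union, mem_compl_iff, not_or] at hz
      exact ((ell_continuousAt T.l₂ T.b₂ T.c₂ hz.1).add
        (ell_continuousAt T.l₃ T.c₃ T.a₃ hz.2)).neg.continuousWithinAt
  have heL : ∀ z ∈ A₁ᶜ ∪ (A₂ ∪ A₃)ᶜ, exp (L z) = (b - z) / (a - z) := by
    rintro z (hz | hz)
    · rw [hL1 z hz, ell_exp T.l₁ T.a₁ T.b₁ hz]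
    · rw [hL2 z hz]
      simp only [mem_union, mem_compl_iff, not_or] at hz
      have hne : c - z ≠ 0 := fun h => hz.1 (by rw [sub_eq_zero] at h; rw [← h]; exact T.c₂)
      rw [exp_neg, exp_add, ell_exp T.l₂ T.b₂ T.c₂ hz.1, ell_exp T.l₃ T.c₃ T.a₃ hz.2]
      field_simp
  have hd : 0 < ‖b - a‖ := norm_pos_iff.mpr (sub_ne_zero.mpr T.hab.symm)
  have hba : b - a ≠ 0 := sub_ne_zero.mpr T.hab.symm
  have hslit : ∀ z ∈ Metric.sphere a (‖b - a‖ / 2), 1 - (z - a) / (b - a) ∈ slitPlane := by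
    intro z hz
    rw [mem_sphere_iff_norm] at hz
    rw [sub_eq_add_neg]
    apply mem_slitPlane_of_norm_lt_one
    rw [norm_neg, norm_div, div_lt_one hd, hz]
    linarith
  have hzne : ∀ z ∈ Metric.sphere a (‖b - a‖ / 2), z ≠ a ∧ z ≠ b := by
    intro z hz
    rw [mem_sphere_iff_norm] at hz
    constructor
    · rintro rfl; simp at hz; linarith
    · rintro rfl; linarith
  have := no_log_circle (p := a) (R := ‖b - a‖ / 2) (by linarith) (m := -1)
    (G := fun z => L z - log (1 - (z - a) / (b - a)) - log (a - b)) ?_ ?_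
  · norm_num at this
  · refine (ContinuousOn.sub ?_ ?_).sub continuousOn_const
    · exact hcL.mono fun z hz => hcov z (hzne z hz).1 (hzne z hz).2
    · exact ContinuousOn.clog (by fun_prop) hslit
  · intro z hz
    have h1 := hslit z hz
    obtain ⟨h2, h3⟩ := hzne z hz
    have h2' : a - z ≠ 0 := sub_ne_zero.mpr h2.symm
    have h2'' : z - a ≠ 0 := sub_ne_zero.mpr h2
    have h3' : b - z ≠ 0 := sub_ne_zero.mpr h3.symm
    have h4 : 1 - (z - a) / (b - a) = (b - z) / (b - a) := by field_simp; ring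
    have hab' : a - b ≠ 0 := sub_ne_zero.mpr T.hab
    rw [exp_sub, exp_sub, heL z (hcov z h2 h3), exp_log (slitPlane_ne_zero h1),
      exp_log hab', h4, zpow_neg_one]
    field_simp
    ring

/-- No bounded open set has its frontier in the curve minus a point. -/
lemma frontier_obstruction (T : Tri A₁ A₂ A₃ a b c) {B B' : Set ℂ} {x : ℂ} (hB : LogArc B)
    (hB' : LogArc B') (hBB : B ∪ B' = A₁) (hx : B ∩ B' = {x}) (haB : a ∈ B) (hbB : b ∈ B')
    (hxa : x ≠ a) (hxb : x ≠ b) {Ω : Set ℂ} (hΩ : IsOpen Ω) (hΩb : Bornology.IsBounded Ω)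
    (hfr : frontier Ω ⊆ A₁ ∪ A₂ ∪ A₃) (hxf : x ∉ frontier Ω) {p : ℂ} (hpΩ : p ∈ Ω)
    (hp : p ∉ A₁ ∪ A₂ ∪ A₃) : False := by
  simp only [mem_union, not_or] at hp
  have hB1 : B ⊆ A₁ := hBB ▸ subset_union_left
  have hB1' : B' ⊆ A₁ := hBB ▸ subset_union_right
  have haB' : a ∉ B' := fun h => hxa (by
    have : a ∈ B ∩ B' := ⟨haB, h⟩
    rw [hx] at this; exact this.symm)
  have hbB' : b ∉ B := fun h => hxb (by
    have : b ∈ B ∩ B' := ⟨h, hbB⟩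
    rw [hx] at this; exact this.symm)
  have e12 : ∀ z, z ∈ A₁ → z ∈ A₂ → z = b := fun z h1 h2 => by
    have : z ∈ A₁ ∩ A₂ := ⟨h1, h2⟩
    rwa [T.i₁₂] at this
  have e23 : ∀ z, z ∈ A₂ → z ∈ A₃ → z = c := fun z h1 h2 => by
    have : z ∈ A₂ ∩ A₃ := ⟨h1, h2⟩
    rwa [T.i₂₃] at this
  have e31 : ∀ z, z ∈ A₃ → z ∈ A₁ → z = a := fun z h1 h2 => by
    have : z ∈ A₃ ∩ A₁ := ⟨h1, h2⟩
    rwa [T.i₃₁] at this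
  have exx : ∀ z, z ∈ B → z ∈ B' → z = x := fun z h1 h2 => by
    have : z ∈ B ∩ B' := ⟨h1, h2⟩
    rwa [hx] at this
  set K := frontier Ω
  have hKc : IsClosed K := isClosed_frontier
  have cB := hB.compact.isClosed.inter hKc
  have cB' := hB'.compact.isClosed.inter hKc
  have c2 := T.l₂.compact.isClosed.inter hKc
  have c3 := T.l₃.compact.isClosed.inter hKc
  have lB := (hB.log_sub (fun h => hp.1.1 (hB1 h))).mono (inter_subset_left (t := K))
  have lB' := (hB'.log_sub (fun h => hp.1.1 (hB1' h))).mono (inter_subset_left (t := K))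
  have l2 := (T.l₂.log_sub hp.1.2).mono (inter_subset_left (t := K))
  have l3 := (T.l₃.log_sub hp.2).mono (inter_subset_left (t := K))
  have s1 := HasLog.glue cB' c2 (x := b) (by
    rintro z ⟨⟨h1, -⟩, h2, -⟩
    exact e12 z (hB1' h1) h2) lB' l2
  have s2 := HasLog.glue (cB'.union c2) c3 (x := c) (by
    rintro z ⟨⟨h1, -⟩ | ⟨h1, -⟩, h2, -⟩
    · have := e31 z h2 (hB1' h1)
      subst this
      exact absurd h1 haB'
    · exact e23 z h1 h2) s1 l3
  have s3 := HasLog.glue ((cB'.union c2).union c3) cB (x := a) (by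
    rintro z ⟨(⟨h1, h1K⟩ | ⟨h1, -⟩) | ⟨h1, -⟩, h2, -⟩
    · have := exx z h2 h1
      subst this
      exact absurd h1K hxf
    · have := e12 z (hB1 h2) h1
      subst this
      exact absurd h2 hbB'
    · exact e31 z h1 (hB1 h2)) s2 lB
  obtain ⟨g, hg, hge⟩ := s3.mono (K := K) (by
    intro z hz
    rcases hfr hz with (h | h) | h
    · rw [← hBB] at h
      rcases h with h | h
      · exact Or.inr ⟨h, hz⟩
      · exact Or.inl (Or.inl (Or.inl ⟨h, hz⟩))
    · exact Or.inl (Or.inl (Or.inr ⟨h, hz⟩))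
    · exact Or.inl (Or.inr ⟨h, hz⟩))
  have := eilenberg hΩ hΩb hpΩ (H := fun _ => 1) (m := 1) continuousOn_const (by simp) hg
    (by intro z hz; rw [hge z hz]; simp)
  exact one_ne_zero this

/-- Both sides accumulate at each interior point of the arc `A₁`. -/
lemma accessible (T : Tri A₁ A₂ A₃ a b c) {B B' : Set ℂ} {x : ℂ} (hB : LogArc B)
    (hB' : LogArc B') (hBB : B ∪ B' = A₁) (hx : B ∩ B' = {x}) (haB : a ∈ B) (hbB : b ∈ B')
    (hxa : x ≠ a) (hxb : x ≠ b) {N : Set ℂ} (hN : N ∈ 𝓝 x) :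
    (∃ p ∈ N, p ∉ A₁ ∪ A₂ ∪ A₃ ∧ wnd A₁ A₂ A₃ a b c p ≠ 0) ∧
    (∃ p ∈ N, p ∉ A₁ ∪ A₂ ∪ A₃ ∧ wnd A₁ A₂ A₃ a b c p = 0) := by
  obtain ⟨p0, hp0, hw0⟩ := T.exists_wnd_ne
  constructor
  · by_contra hcon
    push Not at hcon
    set Ω := {p | p ∉ A₁ ∪ A₂ ∪ A₃ ∧ wnd A₁ A₂ A₃ a b c p ≠ 0} with hΩ
    have hΩo : IsOpen Ω := T.isOpen_wnd (fun w => w ≠ 0)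
    have hΩf : frontier Ω ⊆ A₁ ∪ A₂ ∪ A₃ := T.frontier_wnd_subset (fun w => w ≠ 0)
    have hΩb : Bornology.IsBounded Ω := T.bounded_of_wnd_ne
    have hpΩ : p0 ∈ Ω := ⟨hp0, hw0⟩
    refine T.frontier_obstruction hB hB' hBB hx haB hbB hxa hxb (Ω := Ω) (p := p0)
      hΩo hΩb hΩf ?_ hpΩ hp0
    intro hxf
    obtain ⟨y, hy, hyN⟩ := ((mem_closure_iff_frequently.mp
      (frontier_subset_closure hxf)).and_eventually hN).exists
    exact hy.2 (hcon y hyN hy.1)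
  · by_contra hcon
    push Not at hcon
    set Ω' := {p | p ∉ A₁ ∪ A₂ ∪ A₃ ∧ wnd A₁ A₂ A₃ a b c p = 0} with hΩ'
    have hΩo : IsOpen Ω' := T.isOpen_wnd (fun w => w = 0)
    have hxcl : x ∉ closure Ω' := by
      intro hxf
      obtain ⟨y, hy, hyN⟩ := ((mem_closure_iff_frequently.mp hxf).and_eventually hN).exists
      exact hcon y hyN hy.1 hy.2
    have hΩf : frontier Ω' ⊆ A₁ ∪ A₂ ∪ A₃ := T.frontier_wnd_subset (fun w => w = 0)
    have hfr : frontier (closure Ω')ᶜ ⊆ frontier Ω' := by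
      rw [frontier_compl]; exact frontier_closure_subset
    refine T.frontier_obstruction hB hB' hBB hx haB hbB hxa hxb (Ω := (closure Ω')ᶜ)
      isClosed_closure.isOpen_compl ?_ (hfr.trans hΩf) ?_ (p := p0)
      ?_ hp0
    · obtain ⟨R, hR, hK⟩ := T.exists_bound
      refine (Metric.isBounded_closedBall (x := (0 : ℂ)) (r := R)).subset ?_
      intro p hp
      rw [mem_closedBall_zero_iff]
      by_contra h
      push Not at h
      exact hp (subset_closure ⟨fun hpK => absurd (hK p hpK) (not_le.mpr h), T.wnd_far hR hK h⟩)
    · exact fun h => hxcl (frontier_subset_closure (hfr h))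
    · intro h
      obtain ⟨y, hy1, hy2⟩ := mem_closure_iff.mp h _ (T.isOpen_wnd (fun w => w ≠ 0)) ⟨hp0, hw0⟩
      exact hy1.2 hy2.2

/-- The winding number takes only one nonzero value. -/
lemma wnd_eq_of_ne (T : Tri A₁ A₂ A₃ a b c) {p q : ℂ} (hp : p ∉ A₁ ∪ A₂ ∪ A₃)
    (hq : q ∉ A₁ ∪ A₂ ∪ A₃) (hpw : wnd A₁ A₂ A₃ a b c p ≠ 0) (hqw : wnd A₁ A₂ A₃ a b c q ≠ 0) :
    wnd A₁ A₂ A₃ a b c p = wnd A₁ A₂ A₃ a b c q :=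
  T.wnd_const isPreconnected_connectedComponentIn (connectedComponentIn_subset _ p)
    (mem_connectedComponentIn hp) (T.comp_of_ne hp hq hpw hqw)

end Tri
end HCIV

namespace HCIV
open Complex

/-- A chart of the sphere minus a point. -/
structure Chart (N : SpherePt) (h : SpherePt → ℂ) (g : ℂ → SpherePt) : Prop where
  ch : ContinuousOn h {N}ᶜ
  cg : Continuous g
  gh : ∀ z, z ≠ N → g (h z) = z
  hg : ∀ w, h (g w) = w
  gN : ∀ w, g w ≠ N

lemma exists_chart (N : SpherePt) : ∃ h g, Chart N h g := by
  have : Fact (Module.finrank ℝ (EuclideanSpace ℝ (Fin 3)) = 2 + 1) := ⟨by simp⟩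
  let φ := stereographic' 2 N
  let e : ℂ ≃ₗᵢ[ℝ] EuclideanSpace ℝ (Fin 2) := Complex.orthonormalBasisOneI.repr
  have hs : φ.source = {N}ᶜ := stereographic'_source N
  have ht : φ.target = univ := stereographic'_target N
  refine ⟨fun z => e.symm (φ z), fun w => φ.symm (e w), ?_, ?_, ?_, ?_, ?_⟩
  · have := φ.continuousOn
    rw [hs] at this
    exact e.symm.continuous.comp_continuousOn this
  · have := φ.continuousOn_symm
    rw [ht] at this
    exact (continuousOn_univ.mp this).comp e.continuous
  · intro z hz
    simp only [LinearIsometryEquiv.apply_symm_apply]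
    exact φ.left_inv (by rw [hs]; exact hz)
  · intro w
    change e.symm (φ (φ.symm (e w))) = w
    rw [φ.right_inv (by rw [ht]; trivial)]
    simp
  · intro w
    have := φ.map_target (x := e w) (by rw [ht]; trivial)
    rw [hs] at this
    exact this

lemma arc_interior {f : ℝ → SpherePt} (hf : ContinuousOn f (Icc 0 1)) (hi : InjOn f (Icc 0 1)) :
    interior (f '' Icc 0 1) = ∅ := by
  by_contra hne
  obtain ⟨x, hx⟩ := nonempty_iff_ne_empty.mpr hne
  obtain ⟨N, hN⟩ : ∃ N : SpherePt, N ≠ x := by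
    refine ⟨-x, fun h => ?_⟩
    have h1 : -(x : EuclideanSpace ℝ (Fin 3)) = x := congrArg Subtype.val h
    have h2 : (x : EuclideanSpace ℝ (Fin 3)) = 0 := by
      have h4 : (2 : ℝ) • (x : EuclideanSpace ℝ (Fin 3)) = 0 := by
        rw [two_smul]
        nth_rewrite 1 [← h1]
        exact neg_add_cancel _
      exact (smul_eq_zero.mp h4).resolve_left two_ne_zero
    have h3 := x.2
    rw [h2] at h3
    simp at h3
  obtain ⟨h, g, C⟩ := exists_chart N
  have hc := continuousOn_invFunOn isCompact_Icc hf hi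
  have hopen : IsOpen (g ⁻¹' interior (f '' Icc 0 1)) := isOpen_interior.preimage C.cg
  obtain ⟨δ, hδ, hball⟩ := Metric.isOpen_iff.mp hopen (h x) (by
    rw [mem_preimage, C.gh x hN.symm]; exact hx)
  have hin : ∀ θ : ℝ, g (h x + ((δ / 2 : ℝ) : ℂ) * exp (θ * I)) ∈ f '' Icc 0 1 := by
    intro θ
    refine interior_subset (hball ?_)
    rw [mem_ball_iff_norm, add_sub_cancel_left, norm_mul, Complex.norm_exp_ofReal_mul_I, mul_one,
      Complex.norm_real, Real.norm_eq_abs, abs_of_pos (by positivity)]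
    linarith
  let φ : ℝ → ℝ := fun θ =>
    Function.invFunOn f (Icc 0 1) (g (h x + ((δ / 2 : ℝ) : ℂ) * exp (θ * I)))
  have hφ : Continuous φ := by
    refine hc.comp_continuous (C.cg.comp ?_) hin
    fun_prop
  have hper : φ (Real.pi + Real.pi) = φ 0 := by
    simp only [φ]
    have : exp (((Real.pi + Real.pi : ℝ) : ℂ) * I) = exp (((0 : ℝ) : ℂ) * I) := by
      push_cast
      rw [show ((Real.pi : ℂ) + Real.pi) * I = 2 * Real.pi * I by ring, exp_two_pi_mul_I]
      simp
    rw [this]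
  obtain ⟨θ, hθ⟩ : ∃ θ, φ (θ + Real.pi) - φ θ = 0 := by
    have hψ : Continuous fun θ => φ (θ + Real.pi) - φ θ := by fun_prop
    have e : φ (Real.pi + Real.pi) - φ Real.pi = -(φ (0 + Real.pi) - φ 0) := by
      rw [hper, zero_add]; ring
    rcases le_total (φ (0 + Real.pi) - φ 0) 0 with h0 | h0
    · exact mem_range_of_exists_le_of_exists_ge hψ ⟨0, h0⟩ ⟨Real.pi, by rw [e]; linarith⟩
    · exact mem_range_of_exists_le_of_exists_ge hψ ⟨Real.pi, by rw [e]; linarith⟩ ⟨0, h0⟩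
  have hinv : ∀ y ∈ f '' Icc 0 1, f (Function.invFunOn f (Icc 0 1) y) = y := fun y hy =>
    Function.invFunOn_eq hy
  have h1 := hinv _ (hin (θ + Real.pi))
  have h2 := hinv _ (hin θ)
  have h3 : φ (θ + Real.pi) = φ θ := by linarith
  simp only [φ] at h3
  rw [h3, h2] at h1
  have h4 := congrArg h h1
  rw [C.hg, C.hg] at h4
  push_cast at h4
  rw [add_mul, exp_add, exp_pi_mul_I] at h4
  have h5 : ((δ : ℂ) / 2) * exp (θ * I) = 0 := by linear_combination h4 / 2
  rcases mul_eq_zero.mp h5 with h6 | h6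
  · have : (δ : ℂ) = 0 := by linear_combination 2 * h6
    exact hδ.ne' (by exact_mod_cast this)
  · exact exp_ne_zero _ h6

lemma arc_isCompact {n : ℕ} (D : GoodDrawing n SpherePt) {u v : Fin n} (huv : u ≠ v) :
    IsCompact (D.arc u v) := by
  obtain ⟨f, hf, hi, -, -, he⟩ := D.isArc u v huv
  rw [he]
  exact isCompact_Icc.image_of_continuousOn hf

lemma exists_off {n : ℕ} (D : GoodDrawing n SpherePt) :
    ∃ N, ∀ u v, u ≠ v → N ∉ D.arc u v := by
  classical
  by_contra hcon
  push Not at hcon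
  let F : Fin n × Fin n → Set SpherePt := fun p => if p.1 = p.2 then ∅ else D.arc p.1 p.2
  have hF : ∀ p, IsClosed (F p) := by
    intro p
    simp only [F]
    split_ifs with h
    · exact isClosed_empty
    · exact (arc_isCompact D h).isClosed
  have hU : ⋃ p, F p = univ := by
    rw [eq_univ_iff_forall]
    intro N
    obtain ⟨u, v, huv, hN⟩ := hcon N
    rw [mem_iUnion]
    refine ⟨(u, v), ?_⟩
    simp only [F, huv, if_false]
    exact hN
  have : Nonempty SpherePt := ⟨⟨EuclideanSpace.single 0 1, by simp⟩⟩
  obtain ⟨p, hp⟩ := nonempty_interior_of_iUnion_of_closed hF hU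
  simp only [F] at hp
  split_ifs at hp with h
  · simp at hp
  · obtain ⟨f, hf, hi, -, -, he⟩ := D.isArc p.1 p.2 h
    rw [he, arc_interior hf hi] at hp
    exact not_nonempty_empty hp

end HCIV

namespace HCIV
open Complex

namespace Chart
variable {N : SpherePt} {h : SpherePt → ℂ} {g : ℂ → SpherePt}

lemma hinj (C : Chart N h g) : InjOn h {N}ᶜ := fun x hx y hy e => by
  rw [← C.gh x hx, e, C.gh y hy]

lemma mem_image_iff (C : Chart N h g) {A : Set SpherePt} (hA : N ∉ A) {z : SpherePt}
    (hz : z ≠ N) : h z ∈ h '' A ↔ z ∈ A := by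
  refine ⟨?_, fun h' => ⟨z, h', rfl⟩⟩
  rintro ⟨y, hy, e⟩
  have hyN : y ≠ N := fun e' => hA (e' ▸ hy)
  rwa [← C.hinj hyN hz e]

lemma continuousAt (C : Chart N h g) {z : SpherePt} (hz : z ≠ N) : ContinuousAt h z :=
  C.ch.continuousAt (isOpen_compl_singleton.mem_nhds hz)

lemma image_inter (C : Chart N h g) {A B : Set SpherePt} (hA : N ∉ A) (hB : N ∉ B) {x : SpherePt}
    (hAB : A ∩ B = {x}) : h '' A ∩ h '' B = {h x} := by
  rw [← C.hinj.image_inter (fun z hz e => hA (by rw [← mem_singleton_iff.mp e]; exact hz))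
    (fun z hz e => hB (by rw [← mem_singleton_iff.mp e]; exact hz)), hAB, image_singleton]

lemma eventually_far (C : Chart N h g) (R : ℝ) : ∀ᶠ z in 𝓝 N, z ≠ N → R < ‖h z‖ := by
  have hc : IsCompact (g '' Metric.closedBall 0 R) :=
    (isCompact_closedBall (0 : ℂ) R).image C.cg
  have hN : N ∉ g '' Metric.closedBall 0 R := by
    rintro ⟨w, -, e⟩
    exact C.gN w e
  filter_upwards [hc.isClosed.isOpen_compl.mem_nhds hN] with z hz hzN
  by_contra hcon
  exact hz ⟨h z, by simpa using hcon, C.gh z hzN⟩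

lemma mem_closure_far (C : Chart N h g) (R : ℝ) : N ∈ closure (g '' {w | R < ‖w‖}) := by
  rw [mem_closure_iff]
  intro V hV hNV
  have hc : IsCompact (h '' Vᶜ) :=
    (hV.isClosed_compl.isCompact).image_of_continuousOn (C.ch.mono fun z hz e => hz (by
      rw [mem_singleton_iff.mp e]; exact hNV))
  obtain ⟨R', hR'⟩ := hc.isBounded.exists_norm_le
  let r : ℝ := max R R' + 1
  have hr : max R R' < |r| := lt_of_lt_of_le (lt_add_one _) (le_abs_self _)
  refine ⟨g (r : ℂ), ?_, (r : ℂ), ?_, rfl⟩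
  · by_contra hcon
    have := hR' _ ⟨_, hcon, rfl⟩
    rw [C.hg, Complex.norm_real, Real.norm_eq_abs] at this
    linarith [le_max_right R R']
  · change R < ‖(r : ℂ)‖
    rw [Complex.norm_real, Real.norm_eq_abs]
    linarith [le_max_left R R']

end Chart

section
variable {n : ℕ} (D : GoodDrawing n SpherePt) (N : SpherePt) (h : SpherePt → ℂ)

/-- The winding function of a drawn triangle, on the sphere. -/
def sw (a b c : Fin n) (z : SpherePt) : ℂ := by
  classical
  exact if z = N then 0 else
    wnd (h '' D.arc a b) (h '' D.arc b c) (h '' D.arc c a) (h (D.vtx a)) (h (D.vtx b))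
      (h (D.vtx c)) (h z)

lemma sw_N (a b c : Fin n) : sw D N h a b c N = 0 := by
  unfold sw
  simp

lemma sw_ne (a b c : Fin n) {z : SpherePt} (hz : z ≠ N) : sw D N h a b c z =
    wnd (h '' D.arc a b) (h '' D.arc b c) (h '' D.arc c a) (h (D.vtx a)) (h (D.vtx b))
      (h (D.vtx c)) (h z) := by
  unfold sw
  simp [hz]

lemma sw_swap (a b c : Fin n) (z : SpherePt) : sw D N h b a c z = - sw D N h a b c z := by
  by_cases hz : z = N
  · subst hz; simp [sw_N]
  · rw [sw_ne _ _ _ _ _ _ hz, sw_ne _ _ _ _ _ _ hz, wnd, wnd, D.arc_symm b a, D.arc_symm a c,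
      D.arc_symm c b, ell_symm _ (h (D.vtx a)) (h (D.vtx b)), ell_symm _ (h (D.vtx b)) (h (D.vtx c)),
      ell_symm _ (h (D.vtx c)) (h (D.vtx a))]
    ring

lemma sw_rot (a b c : Fin n) (z : SpherePt) : sw D N h b c a z = sw D N h a b c z := by
  by_cases hz : z = N
  · subst hz; simp [sw_N]
  · rw [sw_ne _ _ _ _ _ _ hz, sw_ne _ _ _ _ _ _ hz, wnd, wnd]
    ring

variable {D N h} {g : ℂ → SpherePt}

lemma logArc_arc (C : Chart N h g) (hN : ∀ u v, u ≠ v → N ∉ D.arc u v) {u v : Fin n}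
    (huv : u ≠ v) : LogArc (h '' D.arc u v) := by
  obtain ⟨f, hf, hi, -, -, he⟩ := D.isArc u v huv
  have hm : MapsTo f (Icc 0 1) {N}ᶜ := fun t ht e => hN u v huv (by
    rw [he]; exact ⟨t, ht, e⟩)
  rw [he, ← image_comp]
  exact logArc_of_path (C.ch.comp hf hm) (C.hinj.comp hi hm)

lemma exists_tri (C : Chart N h g) (hN : ∀ u v, u ≠ v → N ∉ D.arc u v) {a b c : Fin n}
    (hab : a ≠ b) (hac : a ≠ c) (hbc : b ≠ c) :
    Tri (h '' D.arc a b) (h '' D.arc b c) (h '' D.arc c a) (h (D.vtx a)) (h (D.vtx b))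
      (h (D.vtx c)) where
  l₁ := logArc_arc C hN hab
  l₂ := logArc_arc C hN hbc
  l₃ := logArc_arc C hN hac.symm
  i₁₂ := C.image_inter (hN _ _ hab) (hN _ _ hbc) (by
    rw [D.arc_symm a b]; exact D.adj_arcs b a c hab.symm hbc hac)
  i₂₃ := C.image_inter (hN _ _ hbc) (hN _ _ hac.symm) (by
    rw [D.arc_symm b c]; exact D.adj_arcs c b a hbc.symm hac.symm hab.symm)
  i₃₁ := C.image_inter (hN _ _ hac.symm) (hN _ _ hab) (by
    rw [D.arc_symm c a]; exact D.adj_arcs a c b hac hab hbc.symm)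
  hab := by
    have hv : ∀ u v, u ≠ v → D.vtx u ≠ N := by
      intro u v huv e
      obtain ⟨f, hf, hi, h0, h1, he⟩ := D.isArc u v huv
      apply hN u v huv
      rw [he, ← e, ← h0]
      exact ⟨0, by simp, rfl⟩
    intro e
    exact hab (D.vtx_inj (C.hinj (hv a b hab) (hv b a hab.symm) e))

lemma tri_image (a b c : Fin n) : h '' D.arc a b ∪ h '' D.arc b c ∪ h '' D.arc c a =
    h '' D.tri a b c := by
  rw [GoodDrawing.tri, image_union, image_union, D.arc_symm c a]

lemma N_notMem_tri (hN : ∀ u v, u ≠ v → N ∉ D.arc u v) {a b c : Fin n}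
    (hab : a ≠ b) (hac : a ≠ c) (hbc : b ≠ c) : N ∉ D.tri a b c := by
  rintro ((h1 | h1) | h1)
  · exact hN _ _ hab h1
  · exact hN _ _ hbc h1
  · exact hN _ _ hac h1

lemma sw_eventually (C : Chart N h g) (hN : ∀ u v, u ≠ v → N ∉ D.arc u v) {a b c : Fin n}
    (hab : a ≠ b) (hac : a ≠ c) (hbc : b ≠ c) {p : SpherePt} (hp : p ∉ D.tri a b c) :
    ∀ᶠ q in 𝓝 p, sw D N h a b c q = sw D N h a b c p := by
  have T := exists_tri C hN hab hac hbc
  by_cases hpN : p = N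
  · subst hpN
    obtain ⟨R, hR, hK⟩ := T.exists_bound
    filter_upwards [C.eventually_far R] with q hq
    by_cases hqN : q = p
    · rw [hqN]
    · rw [sw_N, sw_ne _ _ _ _ _ _ hqN, T.wnd_far hR hK (hq hqN)]
  · have hp' : h p ∉ h '' D.arc a b ∪ h '' D.arc b c ∪ h '' D.arc c a := by
      rw [tri_image, C.mem_image_iff (N_notMem_tri hN hab hac hbc) hpN]
      exact hp
    filter_upwards [(C.continuousAt hpN).eventually (T.eventually_wnd hp'),
      isOpen_compl_singleton.mem_nhds hpN] with q hq hqN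
    rw [sw_ne _ _ _ _ _ _ hqN, sw_ne _ _ _ _ _ _ hpN, hq]

lemma sw_comp (C : Chart N h g) (hN : ∀ u v, u ≠ v → N ∉ D.arc u v) {a b c : Fin n}
    (hab : a ≠ b) (hac : a ≠ c) (hbc : b ≠ c) {p q : SpherePt} (hp : p ∉ D.tri a b c)
    (hq : q ∉ D.tri a b c) (hpq : sw D N h a b c p = sw D N h a b c q) :
    q ∈ connectedComponentIn (D.tri a b c)ᶜ p := by
  have T := exists_tri C hN hab hac hbc
  have hNt := N_notMem_tri hN hab hac hbc
  have hoff : ∀ z, z ≠ N → z ∉ D.tri a b c →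
      h z ∉ h '' D.arc a b ∪ h '' D.arc b c ∪ h '' D.arc c a := by
    intro z hz hzt
    rw [tri_image, C.mem_image_iff hNt hz]
    exact hzt
  have hgoff : ∀ w, w ∉ h '' D.arc a b ∪ h '' D.arc b c ∪ h '' D.arc c a →
      g w ∈ (D.tri a b c)ᶜ := by
    intro w hw hgw
    rw [tri_image] at hw
    exact hw ⟨g w, hgw, C.hg w⟩
  -- the case of two points different from `N`
  have main : ∀ p q, p ≠ N → q ≠ N → p ∉ D.tri a b c → q ∉ D.tri a b c →
      sw D N h a b c p = sw D N h a b c q → q ∈ connectedComponentIn (D.tri a b c)ᶜ p := by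
    intro p q hpN hqN hp hq hpq
    rw [sw_ne _ _ _ _ _ _ hpN, sw_ne _ _ _ _ _ _ hqN] at hpq
    have hmem : h q ∈ connectedComponentIn
        (h '' D.arc a b ∪ h '' D.arc b c ∪ h '' D.arc c a)ᶜ (h p) := by
      by_cases h0 : wnd (h '' D.arc a b) (h '' D.arc b c) (h '' D.arc c a) (h (D.vtx a))
          (h (D.vtx b)) (h (D.vtx c)) (h p) = 0
      · exact T.comp_of_eq (hoff p hpN hp) (hoff q hqN hq) h0 (hpq ▸ h0)
      · exact T.comp_of_ne (hoff p hpN hp) (hoff q hqN hq) h0 (hpq ▸ h0)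
    have hpre := (isPreconnected_connectedComponentIn (x := h p)
      (F := (h '' D.arc a b ∪ h '' D.arc b c ∪ h '' D.arc c a)ᶜ)).image g C.cg.continuousOn
    refine hpre.subset_connectedComponentIn ⟨h p, mem_connectedComponentIn (hoff p hpN hp),
      C.gh p hpN⟩ ?_ ⟨h q, hmem, C.gh q hqN⟩
    rintro _ ⟨w, hw, rfl⟩
    exact hgoff w (connectedComponentIn_subset _ _ hw)
  have main2 : ∀ q, q ≠ N → q ∉ D.tri a b c → sw D N h a b c q = 0 →
      q ∈ connectedComponentIn (D.tri a b c)ᶜ N := by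
    intro q hqN hq hq0
    obtain ⟨R, hR, hK⟩ := T.exists_bound
    have hsub : g '' {w | R < ‖w‖} ⊆ (D.tri a b c)ᶜ := by
      rintro _ ⟨w, hw, rfl⟩
      exact hgoff w fun hwK => absurd (hK w hwK) (not_le.mpr hw)
    have hpre : IsPreconnected (insert N (g '' {w | R < ‖w‖})) :=
      ((isPreconnected_norm_gt hR).image g C.cg.continuousOn).subset_closure
        (subset_insert _ _) (insert_subset (C.mem_closure_far R) subset_closure)
    have h1 := hpre.subset_connectedComponentIn (mem_insert _ _) (insert_subset hNt hsub)
    have hx : R < ‖(((R + 1 : ℝ)) : ℂ)‖ := by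
      rw [Complex.norm_real, Real.norm_eq_abs, abs_of_nonneg (by linarith)]
      linarith
    have hgx : g ((R + 1 : ℝ) : ℂ) ∈ g '' {w | R < ‖w‖} := ⟨_, hx, rfl⟩
    have h2 := h1 (mem_insert_of_mem _ hgx)
    rw [connectedComponentIn_eq h2]
    refine main _ q (C.gN _) hqN (hsub hgx) hq ?_
    rw [hq0, sw_ne _ _ _ _ _ _ (C.gN _), C.hg]
    exact T.wnd_far hR hK hx
  by_cases hpN : p = N
  · by_cases hqN : q = N
    · rw [hpN, hqN]; exact mem_connectedComponentIn hNt
    · rw [hpN]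
      rw [hpN, sw_N] at hpq
      exact main2 q hqN hq hpq.symm
  · by_cases hqN : q = N
    · rw [hqN, sw_N] at hpq
      have := main2 p hpN hp hpq
      rw [hqN, ← connectedComponentIn_eq this]
      exact mem_connectedComponentIn hNt
    · exact main p q hpN hqN hp hq hpq

lemma sw_eq_of_ne (C : Chart N h g) (hN : ∀ u v, u ≠ v → N ∉ D.arc u v) {a b c : Fin n}
    (hab : a ≠ b) (hac : a ≠ c) (hbc : b ≠ c) {p q : SpherePt} (hp : p ∉ D.tri a b c)
    (hq : q ∉ D.tri a b c) (hp0 : sw D N h a b c p ≠ 0) (hq0 : sw D N h a b c q ≠ 0) :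
    sw D N h a b c p = sw D N h a b c q := by
  have T := exists_tri C hN hab hac hbc
  have hNt := N_notMem_tri hN hab hac hbc
  have hpN : p ≠ N := by rintro rfl; exact hp0 (sw_N ..)
  have hqN : q ≠ N := by rintro rfl; exact hq0 (sw_N ..)
  rw [sw_ne _ _ _ _ _ _ hpN] at hp0 ⊢
  rw [sw_ne _ _ _ _ _ _ hqN] at hq0 ⊢
  refine T.wnd_eq_of_ne ?_ ?_ hp0 hq0
  · rwa [tri_image, C.mem_image_iff hNt hpN]
  · rwa [tri_image, C.mem_image_iff hNt hqN]

lemma sw_accessible (C : Chart N h g) (hN : ∀ u v, u ≠ v → N ∉ D.arc u v) {a b c : Fin n}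
    (hab : a ≠ b) (hac : a ≠ c) (hbc : b ≠ c) {x : SpherePt} (hx : x ∈ D.arc a b)
    (hxa : x ≠ D.vtx a) (hxb : x ≠ D.vtx b) {V : Set SpherePt} (hV : V ∈ 𝓝 x) :
    (∃ p ∈ V, p ∉ D.tri a b c ∧ sw D N h a b c p ≠ 0) ∧
    (∃ p ∈ V, p ∉ D.tri a b c ∧ sw D N h a b c p = 0) := by
  have T := exists_tri C hN hab hac hbc
  have hNt := N_notMem_tri hN hab hac hbc
  have hxN : x ≠ N := by rintro rfl; exact hN a b hab hx
  obtain ⟨f, hf, hi, h0, h1, he⟩ := D.isArc a b hab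
  have hm : MapsTo f (Icc 0 1) {N}ᶜ := fun t ht e => hN a b hab (by
    rw [he]; exact ⟨t, ht, e⟩)
  have hcf := C.ch.comp hf hm
  have hif := C.hinj.comp hi hm
  rw [he] at hx
  obtain ⟨s, hs, rfl⟩ := hx
  have hs0 : Icc 0 s ⊆ Icc (0 : ℝ) 1 := Icc_subset_Icc le_rfl hs.2
  have hs1 : Icc s 1 ⊆ Icc (0 : ℝ) 1 := Icc_subset_Icc hs.1 le_rfl
  have key := T.accessible (B := (h ∘ f) '' Icc 0 s) (B' := (h ∘ f) '' Icc s 1) (x := h (f s))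
    (logArc_of_path' hs.1 (hcf.mono hs0) (hif.mono hs0))
    (logArc_of_path' hs.2 (hcf.mono hs1) (hif.mono hs1))
    (by rw [← image_union, Icc_union_Icc_eq_Icc hs.1 hs.2, he, image_comp])
    (by
      rw [← hif.image_inter hs0 hs1, Icc_inter_Icc_eq_singleton hs.1 hs.2, image_singleton]
      rfl)
    ⟨0, ⟨le_rfl, hs.1⟩, by simp [h0]⟩ ⟨1, ⟨hs.2, le_rfl⟩, by simp [h1]⟩
    (fun e => hxa (by
      have := hif hs (⟨le_rfl, zero_le_one⟩ : (0 : ℝ) ∈ Icc 0 1) (by simpa [h0] using e)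
      rw [this, h0]))
    (fun e => hxb (by
      have := hif hs (⟨zero_le_one, le_rfl⟩ : (1 : ℝ) ∈ Icc 0 1) (by simpa [h1] using e)
      rw [this, h1]))
    (N := g ⁻¹' V) (C.cg.continuousAt.preimage_mem_nhds (by rw [C.gh _ hxN]; exact hV))
  have tr : ∀ w, w ∉ h '' D.arc a b ∪ h '' D.arc b c ∪ h '' D.arc c a → g w ∉ D.tri a b c := by
    intro w hw
    rwa [tri_image, ← C.hg w, C.mem_image_iff hNt (C.gN w)] at hw
  obtain ⟨⟨p, hpV, hpK, hpw⟩, q, hqV, hqK, hqw⟩ := key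
  refine ⟨⟨g p, hpV, tr p hpK, ?_⟩, g q, hqV, tr q hqK, ?_⟩
  · rwa [sw_ne _ _ _ _ _ _ (C.gN _), C.hg]
  · rwa [sw_ne _ _ _ _ _ _ (C.gN _), C.hg]

lemma sw_diff (C : Chart N h g) (hN : ∀ u v, u ≠ v → N ∉ D.arc u v) {a b c d : Fin n}
    (hab : a ≠ b) (hac : a ≠ c) (hbc : b ≠ c) (had : a ≠ d) (hbd : b ≠ d)
    {x : SpherePt} (hx : x ∈ D.arc a b)
    (hxa : x ≠ D.vtx a) (hxb : x ≠ D.vtx b) :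
    ∃ k : ℂ, ∀ᶠ p in 𝓝 x, p ∉ D.tri a b c → p ∉ D.tri a b d →
      sw D N h a b c p - sw D N h a b d p = k := by
  have T := exists_tri C hN hab hac hbc
  have S := exists_tri C hN hab had hbd
  have hxN : x ≠ N := by rintro rfl; exact hN a b hab hx
  have hmem : ∀ e, a ≠ e → b ≠ e → x ∉ D.arc b e ∧ x ∉ D.arc e a := by
    intro e hae hbe
    constructor
    · intro hxe
      have : x ∈ D.arc b a ∩ D.arc b e := ⟨D.arc_symm a b ▸ hx, hxe⟩
      rw [D.adj_arcs b a e hab.symm hbe hae] at this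
      exact hxb this
    · intro hxe
      have : x ∈ D.arc a b ∩ D.arc a e := ⟨hx, D.arc_symm e a ▸ hxe⟩
      rw [D.adj_arcs a b e hab hae hbe] at this
      exact hxa this
  obtain ⟨hc1, hc2⟩ := hmem c hac hbc
  obtain ⟨hd1, hd2⟩ := hmem d had hbd
  have m1 : h x ∉ h '' D.arc b c := by rwa [C.mem_image_iff (hN _ _ hbc) hxN]
  have m2 : h x ∉ h '' D.arc c a := by rwa [C.mem_image_iff (hN _ _ hac.symm) hxN]
  have m3 : h x ∉ h '' D.arc b d := by rwa [C.mem_image_iff (hN _ _ hbd) hxN]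
  have m4 : h x ∉ h '' D.arc d a := by rwa [C.mem_image_iff (hN _ _ had.symm) hxN]
  let G : ℂ → ℂ := fun w => (ell (h '' D.arc b c) (h (D.vtx b)) (h (D.vtx c)) w +
    ell (h '' D.arc c a) (h (D.vtx c)) (h (D.vtx a)) w) -
    (ell (h '' D.arc b d) (h (D.vtx b)) (h (D.vtx d)) w +
    ell (h '' D.arc d a) (h (D.vtx d)) (h (D.vtx a)) w)
  have hG : ContinuousAt G (h x) :=
    ((ell_continuousAt T.l₂ T.b₂ T.c₂ m1).add (ell_continuousAt T.l₃ T.c₃ T.a₃ m2)).sub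
      ((ell_continuousAt S.l₂ S.b₂ S.c₂ m3).add (ell_continuousAt S.l₃ S.c₃ S.a₃ m4))
  have hGe : ∀ᶠ w in 𝓝 (h x), exp (G w) = 1 := by
    filter_upwards [T.l₂.compact.isClosed.isOpen_compl.mem_nhds m1,
      T.l₃.compact.isClosed.isOpen_compl.mem_nhds m2,
      S.l₂.compact.isClosed.isOpen_compl.mem_nhds m3,
      S.l₃.compact.isClosed.isOpen_compl.mem_nhds m4] with w w1 w2 w3 w4
    have hne : ∀ A : Set ℂ, ∀ z ∈ A, w ∉ A → z - w ≠ 0 := fun A z hz h h0 =>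
      h (by rw [sub_eq_zero] at h0; rwa [← h0])
    have n1 := hne _ _ T.b₂ w1
    have n2 := hne _ _ T.c₂ w1
    have n3 := hne _ _ T.a₃ w2
    have n4 := hne _ _ S.c₂ w3
    simp only [G]
    rw [exp_sub, exp_add, exp_add, ell_exp T.l₂ T.b₂ T.c₂ w1, ell_exp T.l₃ T.c₃ T.a₃ w2,
      ell_exp S.l₂ S.b₂ S.c₂ w3, ell_exp S.l₃ S.c₃ S.a₃ w4]
    field_simp
  refine ⟨G (h x), ?_⟩
  filter_upwards [(C.continuousAt hxN).eventually (eventually_const_of_exp hG hGe),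
    isOpen_compl_singleton.mem_nhds hxN] with p hp hpN _ _
  rw [sw_ne _ _ _ _ _ _ hpN, sw_ne _ _ _ _ _ _ hpN, ← hp, wnd, wnd]
  simp only [G]
  ring

end
end HCIV

namespace HCIV
open Complex

/-- A hereditarily convex drawing with its selected discs and a chart. -/
structure HC {n : ℕ} (D : GoodDrawing n SpherePt) (Dc : Fin n → Fin n → Fin n → Set SpherePt)
    (N : SpherePt) (h : SpherePt → ℂ) (g : ℂ → SpherePt) : Prop where
  C : Chart N h g
  hN : ∀ u v, u ≠ v → N ∉ D.arc u v
  side : ∀ a b c : Fin n, a ≠ b → a ≠ c → b ≠ c → IsClosedSide (D.tri a b c) (Dc a b c)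
  conv : ∀ a b c : Fin n, a ≠ b → a ≠ c → b ≠ c → D.ConvexDisc (Dc a b c)
  symm₁ : ∀ a b c : Fin n, Dc a b c = Dc b a c
  symm₂ : ∀ a b c : Fin n, Dc a b c = Dc a c b
  her : ∀ a b c a' b' c' : Fin n, a ≠ b → a ≠ c → b ≠ c →
          a' ≠ b' → a' ≠ c' → b' ≠ c' →
          D.tri a' b' c' ⊆ Dc a b c → Dc a' b' c' ⊆ Dc a b c

/-- The open selected side. -/
def US {n : ℕ} (D : GoodDrawing n SpherePt) (Dc : Fin n → Fin n → Fin n → Set SpherePt)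
    (a b c : Fin n) : Set SpherePt := Dc a b c \ D.tri a b c

section
variable {n : ℕ} {D : GoodDrawing n SpherePt} {Dc : Fin n → Fin n → Fin n → Set SpherePt}
  {N : SpherePt} {h : SpherePt → ℂ} {g : ℂ → SpherePt} {a b c x : Fin n}

lemma tri_swap (a b c : Fin n) : D.tri b a c = D.tri a b c := by
  simp only [GoodDrawing.tri, D.arc_symm b a]
  rw [union_assoc, union_assoc, union_comm (D.arc a c)]

lemma tri_swap' (a b c : Fin n) : D.tri a c b = D.tri a b c := by
  simp only [GoodDrawing.tri, D.arc_symm c b]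
  rw [union_assoc, union_comm, union_comm (D.arc b c)]

lemma vtx_mem_arc {u v : Fin n} (huv : u ≠ v) : D.vtx u ∈ D.arc u v := by
  obtain ⟨f, hf, hi, h0, h1, he⟩ := D.isArc u v huv
  rw [he, ← h0]
  exact ⟨0, by simp, rfl⟩

lemma vtx_mem_tri (hab : a ≠ b) (hbc : b ≠ c) (hac : a ≠ c) (hx : x = a ∨ x = b ∨ x = c) :
    D.vtx x ∈ D.tri a b c := by
  rcases hx with rfl | rfl | rfl
  · exact Or.inl (Or.inl (vtx_mem_arc hab))
  · exact Or.inl (Or.inr (vtx_mem_arc hbc))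
  · exact Or.inr (D.arc_symm _ _ ▸ vtx_mem_arc hac.symm)

lemma vtx_notMem_tri (hab : a ≠ b) (hac : a ≠ c) (hbc : b ≠ c) (ha : x ≠ a) (hb : x ≠ b)
    (hc : x ≠ c) : D.vtx x ∉ D.tri a b c := by
  rintro ((h | h) | h)
  · exact D.vtx_not_mem _ _ _ hab ha hb h
  · exact D.vtx_not_mem _ _ _ hbc hb hc h
  · exact D.vtx_not_mem _ _ _ hac ha hc h

lemma tri_isClosed (hab : a ≠ b) (hac : a ≠ c) (hbc : b ≠ c) : IsClosed (D.tri a b c) :=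
  ((arc_isCompact D hab).isClosed.union (arc_isCompact D hbc).isClosed).union
    (arc_isCompact D hac).isClosed

lemma sw_isOpen (C : Chart N h g) (hN : ∀ u v, u ≠ v → N ∉ D.arc u v)
    (hab : a ≠ b) (hac : a ≠ c) (hbc : b ≠ c) (P : ℂ → Prop) :
    IsOpen {p | p ∉ D.tri a b c ∧ P (sw D N h a b c p)} := by
  rw [isOpen_iff_mem_nhds]
  rintro p ⟨hp, hP⟩
  filter_upwards [sw_eventually C hN hab hac hbc hp,
    (tri_isClosed hab hac hbc).isOpen_compl.mem_nhds hp] with q h1 h2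
  exact ⟨h2, by rw [h1]; exact hP⟩

lemma comp_eq (C : Chart N h g) (hN : ∀ u v, u ≠ v → N ∉ D.arc u v)
    (hab : a ≠ b) (hac : a ≠ c) (hbc : b ≠ c) {q : SpherePt} (hq : q ∉ D.tri a b c) :
    connectedComponentIn (D.tri a b c)ᶜ q =
      {p | p ∉ D.tri a b c ∧ sw D N h a b c p = sw D N h a b c q} := by
  apply Subset.antisymm
  · refine isPreconnected_connectedComponentIn.subset_left_of_subset_union
      (sw_isOpen C hN hab hac hbc (fun w => w = sw D N h a b c q))
      (sw_isOpen C hN hab hac hbc (fun w => w ≠ sw D N h a b c q)) ?_ ?_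
      ⟨q, mem_connectedComponentIn hq, hq, rfl⟩
    · rw [Set.disjoint_left]
      rintro p ⟨-, h1⟩ ⟨-, h2⟩
      exact h2 h1
    · intro p hp
      have := connectedComponentIn_subset _ _ hp
      by_cases hw : sw D N h a b c p = sw D N h a b c q
      · exact Or.inl ⟨this, hw⟩
      · exact Or.inr ⟨this, hw⟩
  · rintro p ⟨hp, hw⟩
    exact sw_comp C hN hab hac hbc hq hp hw.symm

namespace HC

lemma exists_val (H : HC D Dc N h g) (hab : a ≠ b) (hac : a ≠ c) (hbc : b ≠ c) :
    ∃ q, q ∉ D.tri a b c ∧ US D Dc a b c = connectedComponentIn (D.tri a b c)ᶜ q ∧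
      US D Dc a b c = {p | p ∉ D.tri a b c ∧ sw D N h a b c p = sw D N h a b c q} := by
  obtain ⟨q, hq, he⟩ := H.side a b c hab hac hbc
  have : US D Dc a b c = connectedComponentIn (D.tri a b c)ᶜ q := by
    rw [US, he, union_sdiff_right]
    exact sdiff_eq_left.mpr (Set.disjoint_left.mpr (connectedComponentIn_subset _ _))
  exact ⟨q, hq, this, this.trans (comp_eq H.C H.hN hab hac hbc hq)⟩

lemma tri_subset (H : HC D Dc N h g) (hab : a ≠ b) (hac : a ≠ c) (hbc : b ≠ c) :
    D.tri a b c ⊆ Dc a b c := by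
  obtain ⟨q, hq, he⟩ := H.side a b c hab hac hbc
  rw [he]
  exact subset_union_right

lemma isOpen_US (H : HC D Dc N h g) (hab : a ≠ b) (hac : a ≠ c) (hbc : b ≠ c) :
    IsOpen (US D Dc a b c) := by
  obtain ⟨q, -, -, he⟩ := H.exists_val hab hac hbc
  rw [he]
  exact sw_isOpen H.C H.hN hab hac hbc (fun w => w = sw D N h a b c q)

lemma access (H : HC D Dc N h g) (hab : a ≠ b) (hac : a ≠ c) (hbc : b ≠ c)
    {z : SpherePt} (hz : z ∈ D.arc a b)
    (hza : z ≠ D.vtx a) (hzb : z ≠ D.vtx b) {V : Set SpherePt} (hV : V ∈ 𝓝 z) :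
    (∃ p ∈ V, p ∈ US D Dc a b c) ∧ (∃ p ∈ V, p ∉ Dc a b c) := by
  obtain ⟨⟨p, hpV, hpt, hp⟩, q, hqV, hqt, hq⟩ := sw_accessible H.C H.hN hab hac hbc hz hza hzb hV
  obtain ⟨r, hr, -, he⟩ := H.exists_val hab hac hbc
  have hm : ∀ y, y ∉ D.tri a b c → (y ∈ Dc a b c ↔ sw D N h a b c y = sw D N h a b c r) := by
    intro y hy
    have : y ∈ US D Dc a b c ↔ y ∈ {p | p ∉ D.tri a b c ∧ sw D N h a b c p = sw D N h a b c r} := by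
      rw [he]
    constructor
    · intro h1
      exact (this.mp ⟨h1, hy⟩).2
    · intro h1
      exact (this.mpr ⟨hy, h1⟩).1
  by_cases h0 : sw D N h a b c r = 0
  · refine ⟨⟨q, hqV, (hm q hqt).mpr (hq.trans h0.symm), hqt⟩, p, hpV, fun hh => hp ?_⟩
    rw [(hm p hpt).mp hh, h0]
  · refine ⟨⟨p, hpV, (hm p hpt).mpr (sw_eq_of_ne H.C H.hN hab hac hbc hpt hr hp h0), hpt⟩,
      q, hqV, fun hh => h0 ?_⟩
    rw [← (hm q hqt).mp hh, hq]

lemma exists_mid {u v : Fin n} (D : GoodDrawing n SpherePt) (huv : u ≠ v) {V : Set SpherePt}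
    (hV : V ∈ 𝓝 (D.vtx u)) : ∃ z ∈ V, z ∈ D.arc u v ∧ z ≠ D.vtx u ∧ z ≠ D.vtx v := by
  obtain ⟨f, hf, hi, h0, h1, he⟩ := D.isArc u v huv
  have hc : Filter.Tendsto f (𝓝[Icc 0 1] 0) (𝓝 (D.vtx u)) := by
    rw [← h0]; exact hf 0 (by simp)
  have hc' : Filter.Tendsto f (𝓝[>] 0) (𝓝 (D.vtx u)) := by
    refine hc.mono_left ?_
    rw [← nhdsWithin_Ioo_eq_nhdsGT (zero_lt_one : (0 : ℝ) < 1)]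
    exact nhdsWithin_mono _ Ioo_subset_Icc_self
  have hI : Ioo (0 : ℝ) 1 ∈ 𝓝[>] (0 : ℝ) := Ioo_mem_nhdsGT zero_lt_one
  obtain ⟨t, ht, hti⟩ := ((hc'.eventually hV).and hI).exists
  have htI : t ∈ Icc (0 : ℝ) 1 := Ioo_subset_Icc_self hti
  refine ⟨f t, ht, he ▸ ⟨t, htI, rfl⟩, ?_, ?_⟩
  · rw [← h0]
    intro e
    have := hi htI (by simp) e
    exact hti.1.ne' this
  · rw [← h1]
    intro e
    have := hi htI (by simp) e
    exact hti.2.ne this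

lemma exists_chi (H : HC D Dc N h g) (hab : a ≠ b) (hac : a ≠ c) (hbc : b ≠ c) :
    ∃ χ : ℂ, χ ≠ 0 ∧ ∀ p ∈ US D Dc a b c, ∀ q, q ∉ Dc a b c →
      sw D N h a b c p - sw D N h a b c q = χ := by
  obtain ⟨z, -, hz, hza, hzb⟩ := exists_mid D hab Filter.univ_mem
  obtain ⟨⟨p, -, hp⟩, q, -, hq⟩ := H.access hab hac hbc hz hza hzb Filter.univ_mem
  obtain ⟨r, hr, -, he⟩ := H.exists_val hab hac hbc
  have hin : ∀ y ∈ US D Dc a b c, y ∉ D.tri a b c ∧ sw D N h a b c y = sw D N h a b c r := by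
    intro y hy
    rw [he] at hy
    exact hy
  have hout : ∀ y, y ∉ Dc a b c → y ∉ D.tri a b c ∧ sw D N h a b c y ≠ sw D N h a b c r := by
    intro y hy
    have hyt : y ∉ D.tri a b c := fun h' => hy (H.tri_subset hab hac hbc h')
    refine ⟨hyt, fun h' => hy ?_⟩
    have : y ∈ US D Dc a b c := by
      rw [he]; exact ⟨hyt, h'⟩
    exact this.1
  refine ⟨sw D N h a b c p - sw D N h a b c q, ?_, ?_⟩
  · rw [sub_ne_zero, (hin p hp).2]
    exact (hout q hq).2.symm
  · intro p' hp' q' hq'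
    rw [(hin p hp).2, (hin p' hp').2]
    congr 1
    obtain ⟨q1, q2⟩ := hout q hq
    obtain ⟨q1', q2'⟩ := hout q' hq'
    by_cases h0 : sw D N h a b c q = 0
    · by_cases h0' : sw D N h a b c q' = 0
      · rw [h0, h0']
      · have hr0 : sw D N h a b c r ≠ 0 := fun e => q2 (by rw [h0, e])
        exact absurd (sw_eq_of_ne H.C H.hN hab hac hbc q1' hr h0' hr0) q2'
    · by_cases h0' : sw D N h a b c q' = 0
      · have hr0 : sw D N h a b c r ≠ 0 := fun e => q2' (by rw [h0', e])
        exact absurd (sw_eq_of_ne H.C H.hN hab hac hbc q1 hr h0 hr0) q2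
      · exact sw_eq_of_ne H.C H.hN hab hac hbc q1' q1 h0' h0

lemma exists_in_out (H : HC D Dc N h g) (hab : a ≠ b) (hac : a ≠ c) (hbc : b ≠ c) :
    (∃ p, p ∈ US D Dc a b c) ∧ ∃ q, q ∉ Dc a b c := by
  obtain ⟨z, -, hz, hza, hzb⟩ := exists_mid D hab Filter.univ_mem
  obtain ⟨⟨p, -, hp⟩, q, -, hq⟩ := H.access hab hac hbc hz hza hzb Filter.univ_mem
  exact ⟨⟨p, hp⟩, q, hq⟩

lemma US_swap (H : HC D Dc N h g) (a b c : Fin n) : US D Dc b a c = US D Dc a b c := by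
  rw [US, US, H.symm₁ b a, tri_swap]

lemma US_swap' (H : HC D Dc N h g) (a b c : Fin n) : US D Dc a c b = US D Dc a b c := by
  rw [US, US, H.symm₂ a c, tri_swap']

lemma ne_of_mem (hab : a ≠ b) (hac : a ≠ c) (hbc : b ≠ c) (hx : D.vtx x ∈ US D Dc a b c) :
    x ≠ a ∧ x ≠ b ∧ x ≠ c := by
  have := hx.2
  refine ⟨?_, ?_, ?_⟩
  · exact fun e => this (vtx_mem_tri hab hbc hac (Or.inl e))
  · exact fun e => this (vtx_mem_tri hab hbc hac (Or.inr (Or.inl e)))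
  · exact fun e => this (vtx_mem_tri hab hbc hac (Or.inr (Or.inr e)))

lemma sub_of_mem (H : HC D Dc N h g) (hab : a ≠ b) (hac : a ≠ c) (hbc : b ≠ c)
    (hx : D.vtx x ∈ US D Dc a b c) : Dc a b x ⊆ Dc a b c := by
  obtain ⟨hxa, hxb, hxc⟩ := ne_of_mem hab hac hbc hx
  have hT := H.tri_subset hab hac hbc
  refine H.her a b c a b x hab hac hbc hab hxa.symm hxb.symm ?_
  have ha := hT (vtx_mem_tri (x := a) hab hbc hac (Or.inl rfl))
  have hb := hT (vtx_mem_tri (x := b) hab hbc hac (Or.inr (Or.inl rfl)))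
  have hcv := H.conv a b c hab hac hbc
  rintro z ((hz | hz) | hz)
  · exact hcv a b hab ha hb hz
  · exact hcv b x hxb.symm hb hx.1 hz
  · exact hcv a x hxa.symm ha hx.1 hz

lemma notMem_of_mem (H : HC D Dc N h g) (hab : a ≠ b) (hac : a ≠ c) (hbc : b ≠ c)
    (hx : D.vtx x ∈ US D Dc a b c) : D.vtx c ∉ US D Dc a b x := by
  obtain ⟨hxa, hxb, hxc⟩ := ne_of_mem hab hac hbc hx
  intro hc
  obtain ⟨z, hzU, hz, hzc, hza⟩ := exists_mid D hac.symm
    ((H.isOpen_US hab hxa.symm hxb.symm).mem_nhds hc)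
  obtain ⟨-, q, hq, hqn⟩ := H.access (a := c) (b := a) (c := b) hac.symm hbc.symm hab hz hzc hza
    ((H.isOpen_US hab hxa.symm hxb.symm).mem_nhds hzU)
  apply hqn
  rw [H.symm₁ c a b, H.symm₂ a c b]
  exact H.sub_of_mem hab hac hbc hx hq.1

/-- Nesting of vertex sets. -/
lemma nest (H : HC D Dc N h g) (hab : a ≠ b) (hac : a ≠ c) (hbc : b ≠ c)
    (hx : D.vtx x ∈ US D Dc a b c) {y : Fin n} (hy : D.vtx y ∈ US D Dc a b x) :
    D.vtx y ∈ US D Dc a b c := by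
  obtain ⟨hxa, hxb, hxc⟩ := ne_of_mem hab hac hbc hx
  obtain ⟨hya, hyb, hyx⟩ := ne_of_mem hab hxa.symm hxb.symm hy
  refine ⟨H.sub_of_mem hab hac hbc hx hy.1, vtx_notMem_tri hab hac hbc hya hyb ?_⟩
  rintro rfl
  exact H.notMem_of_mem hab hac hbc hx hy

lemma chi_eq (H : HC D Dc N h g) (hab : a ≠ b) (hac : a ≠ c) (hbc : b ≠ c)
    (hx : D.vtx x ∈ US D Dc a b c) {χ χ' : ℂ}
    (hχ : ∀ p ∈ US D Dc a b c, ∀ q, q ∉ Dc a b c →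
      sw D N h a b c p - sw D N h a b c q = χ)
    (hχ' : ∀ p ∈ US D Dc a b x, ∀ q, q ∉ Dc a b x →
      sw D N h a b x p - sw D N h a b x q = χ') : χ' = χ := by
  obtain ⟨hxa, hxb, hxc⟩ := ne_of_mem hab hac hbc hx
  have hsub := H.sub_of_mem hab hac hbc hx
  obtain ⟨z, -, hz, hza, hzb⟩ := exists_mid D hab Filter.univ_mem
  obtain ⟨k, hk⟩ := sw_diff H.C H.hN hab hac hbc hxa.symm hxb.symm hz hza hzb
  have hz1 : z ∉ D.arc b c := by
    intro hze
    have : z ∈ D.arc b a ∩ D.arc b c := ⟨D.arc_symm a b ▸ hz, hze⟩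
    rw [D.adj_arcs b a c hab.symm hbc hac] at this
    exact hzb this
  have hz2 : z ∉ D.arc a c := by
    intro hze
    have : z ∈ D.arc a b ∩ D.arc a c := ⟨hz, hze⟩
    rw [D.adj_arcs a b c hab hac hbc] at this
    exact hza this
  have hV := Filter.inter_mem (Filter.inter_mem hk
    ((arc_isCompact D hbc).isClosed.isOpen_compl.mem_nhds hz1))
    ((arc_isCompact D hac).isClosed.isOpen_compl.mem_nhds hz2)
  obtain ⟨-, q, hqV, hq⟩ := H.access hab hac hbc hz hza hzb hV
  obtain ⟨⟨p, hpV, hp⟩, -⟩ := H.access hab hxa.symm hxb.symm hz hza hzb hV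
  have hpt : p ∉ D.tri a b c := by
    rintro ((h1 | h1) | h1)
    · exact hp.2 (Or.inl (Or.inl h1))
    · exact hpV.1.2 h1
    · exact hpV.2 h1
  have hqx : q ∉ Dc a b x := fun h' => hq (hsub h')
  have e1 := hqV.1.1 (fun h' => hq (H.tri_subset hab hac hbc h'))
    (fun h' => hqx (H.tri_subset hab hxa.symm hxb.symm h'))
  have e2 := hpV.1.1 hpt hp.2
  have e3 := hχ p ⟨hsub hp.1, hpt⟩ q hq
  have e4 := hχ' p hp q hqx
  linear_combination e3 - e4 + e1 - e2

/-- The combinatorial data extracted from the drawing. -/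
lemma exists_data (H : HC D Dc N h g) : ∃ χ : Fin n → Fin n → Fin n → ℂ,
    ∀ a b c, a ≠ b → a ≠ c → b ≠ c → χ a b c ≠ 0 ∧ χ b a c = - χ a b c ∧ χ b c a = χ a b c ∧
      ∀ x, D.vtx x ∈ US D Dc a b c → χ a b x = χ a b c := by
  classical
  have : ∀ a b c, ∃ χ : ℂ, a ≠ b → a ≠ c → b ≠ c → (χ ≠ 0 ∧ ∀ p ∈ US D Dc a b c,
      ∀ q, q ∉ Dc a b c → sw D N h a b c p - sw D N h a b c q = χ) := by
    intro a b c
    by_cases hd : a ≠ b ∧ a ≠ c ∧ b ≠ c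
    · obtain ⟨χ, hχ⟩ := H.exists_chi hd.1 hd.2.1 hd.2.2
      exact ⟨χ, fun _ _ _ => hχ⟩
    · exact ⟨0, fun h1 h2 h3 => absurd ⟨h1, h2, h3⟩ hd⟩
  choose χ hχ using this
  refine ⟨χ, fun a b c hab hac hbc => ?_⟩
  obtain ⟨⟨p, hp⟩, q, hq⟩ := H.exists_in_out hab hac hbc
  have e := (hχ a b c hab hac hbc).2 p hp q hq
  refine ⟨(hχ a b c hab hac hbc).1, ?_, ?_, ?_⟩
  · have := (hχ b a c hab.symm hbc hac).2 p (by rw [H.US_swap]; exact hp) q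
      (by rw [H.symm₁]; exact hq)
    rw [← this, ← e, sw_swap D N h a b c, sw_swap D N h a b c]
    ring
  · have := (hχ b c a hbc hab.symm hac.symm).2 p
      (by rw [H.US_swap', H.US_swap]; exact hp) q
      (by rw [H.symm₂, H.symm₁]; exact hq)
    rw [← this, ← e, sw_rot D N h a b c, sw_rot D N h a b c]
  · intro x hx
    obtain ⟨hxa, hxb, hxc⟩ := ne_of_mem hab hac hbc hx
    exact H.chi_eq hab hac hbc hx (hχ a b c hab hac hbc).2 (hχ a b x hab hxa.symm hxb.symm).2

lemma mem_empty (H : HC D Dc N h g) (hab : a ≠ b) (hac : a ≠ c) (hbc : b ≠ c)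
    (he : ∀ x, D.vtx x ∉ US D Dc a b c) :
    (({a, b, c} : Finset (Fin n)), US D Dc a b c) ∈ D.emptyTriangles := by
  obtain ⟨q, hq, h1, -⟩ := H.exists_val hab hac hbc
  exact ⟨a, b, c, hab, hac, hbc, rfl, ⟨q, hq, h1⟩, he⟩

end HC

/-- Finiteness of the set of empty triangles. -/
lemma emptyTriangles_finite (C : Chart N h g) (hN : ∀ u v, u ≠ v → N ∉ D.arc u v) :
    D.emptyTriangles.Finite := by
  classical
  have key : ∀ a b c : Fin n, a ≠ b → a ≠ c → b ≠ c →
      ({S | IsOpenSide (D.tri a b c) S} : Set (Set SpherePt)).Finite := by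
    intro a b c hab hac hbc
    by_cases hex : ∃ r, r ∉ D.tri a b c ∧ sw D N h a b c r ≠ 0
    · obtain ⟨r, hr, hr0⟩ := hex
      refine Set.Finite.subset (Set.toFinite
        {{p | p ∉ D.tri a b c ∧ sw D N h a b c p = 0},
          {p | p ∉ D.tri a b c ∧ sw D N h a b c p = sw D N h a b c r}}) ?_
      rintro S ⟨q, hq, rfl⟩
      rw [comp_eq C hN hab hac hbc hq]
      by_cases hq0 : sw D N h a b c q = 0
      · left; rw [hq0]
      · right
        rw [mem_singleton_iff, sw_eq_of_ne C hN hab hac hbc hq hr hq0 hr0]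
    · push Not at hex
      refine Set.Finite.subset (Set.finite_singleton
        {p | p ∉ D.tri a b c ∧ sw D N h a b c p = 0}) ?_
      rintro S ⟨q, hq, rfl⟩
      rw [comp_eq C hN hab hac hbc hq, hex q hq]
      rfl
  have hfin : (⋃ t : Fin n × Fin n × Fin n, {S : Set SpherePt | t.1 ≠ t.2.1 ∧ t.1 ≠ t.2.2 ∧
      t.2.1 ≠ t.2.2 ∧ IsOpenSide (D.tri t.1 t.2.1 t.2.2) S}).Finite := by
    refine Set.finite_iUnion fun t => ?_
    by_cases hd : t.1 ≠ t.2.1 ∧ t.1 ≠ t.2.2 ∧ t.2.1 ≠ t.2.2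
    · exact (key _ _ _ hd.1 hd.2.1 hd.2.2).subset fun S hS => hS.2.2.2
    · exact Set.finite_empty.subset fun S hS => hd ⟨hS.1, hS.2.1, hS.2.2.1⟩
  refine ((Set.finite_univ (α := Finset (Fin n))).prod hfin).subset ?_
  rintro ⟨T, S⟩ ⟨a, b, c, hab, hac, hbc, -, hS, -⟩
  refine ⟨mem_univ _, mem_iUnion.mpr ⟨(a, b, c), hab, hac, hbc, hS⟩⟩

end
end HCIV

namespace HCIV

/-- The combinatorial data: `In a b c x` says that `x` is inside the triangle `abc`. -/
structure Comb {n : ℕ} (In : Fin n → Fin n → Fin n → Fin n → Prop)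
    (χ : Fin n → Fin n → Fin n → ℂ) : Prop where
  sw₁ : ∀ a b c x, In a b c x → In b a c x
  sw₂ : ∀ a b c x, In a b c x → In a c b x
  ne : ∀ a b c x, a ≠ b → a ≠ c → b ≠ c → In a b c x → x ≠ a ∧ x ≠ b ∧ x ≠ c
  nest : ∀ a b c x y, a ≠ b → a ≠ c → b ≠ c → In a b c x → In a b x y → In a b c y
  chi0 : ∀ a b c, a ≠ b → a ≠ c → b ≠ c → χ a b c ≠ 0
  chis : ∀ a b c, a ≠ b → a ≠ c → b ≠ c → χ b a c = - χ a b c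
  chir : ∀ a b c, a ≠ b → a ≠ c → b ≠ c → χ b c a = χ a b c
  chiS : ∀ a b c x, a ≠ b → a ≠ c → b ≠ c → In a b c x → χ a b x = χ a b c
  iv : ∀ a b c x, a ≠ b → a ≠ c → b ≠ c → In a b c x →
    (a < x ∨ b < x ∨ c < x) ∧ (x < a ∨ x < b ∨ x < c)

namespace Comb
variable {n : ℕ} {In : Fin n → Fin n → Fin n → Fin n → Prop} {χ : Fin n → Fin n → Fin n → ℂ}

lemma chis' (H : Comb In χ) {a b c : Fin n} (hab : a ≠ b) (hac : a ≠ c) (hbc : b ≠ c) :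
    χ a c b = - χ a b c := by
  rw [H.chir b a c hab.symm hbc hac, H.chis a b c hab hac hbc]

/-- The sign argument. -/
lemma sign (H : Comb In χ) {i j j' k k' : Fin n} (hij : i ≠ j) (hij' : i ≠ j') (hjj' : j ≠ j')
    (hik : i ≠ k) (hjk : j ≠ k)
    (h1 : In i j j' k') (h2 : k' = k ∨ In i k' j k) : χ i k j = - χ i k' j' := by
  obtain ⟨hki, hkj, hkj'⟩ := H.ne _ _ _ _ hij hij' hjj' h1
  have e1 := H.chiS _ _ _ _ hij hij' hjj' h1
  have e2 := H.chiS _ _ _ _ hij' hij hjj'.symm (H.sw₂ _ _ _ _ h1)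
  have e3 := H.chis' hij hij' hjj'
  have e4 := H.chis' hij' hki.symm hkj'.symm
  have e5 := H.chis' hij hki.symm hkj.symm
  have e6 : χ i k j = χ i k' j := by
    rcases h2 with rfl | h2
    · rfl
    · have e7 := H.chiS _ _ _ _ hij hki.symm hkj.symm (H.sw₂ _ _ _ _ h2)
      have e8 := H.chis' hij hik hjk
      rw [e8, e5, e7]
  rw [e6, e5, e1, e4, e2, e3]
  ring

/-- The middle vertices of the empty triangles with extremes `i`, `j`. -/
def E (In : Fin n → Fin n → Fin n → Fin n → Prop) (i j : Fin n) : Finset (Fin n) := by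
  classical
  exact Finset.univ.filter fun k => i < k ∧ k < j ∧ ∀ x, ¬ In i k j x

lemma mem_E {i j k : Fin n} : k ∈ E In i j ↔ i < k ∧ k < j ∧ ∀ x, ¬ In i k j x := by
  simp [E]

lemma between (H : Comb In χ) {i l j x : Fin n} (hil : i < l) (hlj : l < j) (hx : In i l j x) :
    i < x ∧ x < j := by
  have hij := hil.trans hlj
  obtain ⟨h1, h2⟩ := H.iv _ _ _ _ hil.ne hij.ne hlj.ne hx
  constructor
  · rcases h1 with h | h | h
    · exact h
    · exact hil.trans h
    · exact hij.trans h
  · rcases h2 with h | h | h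
    · exact h.trans hij
    · exact h.trans hlj
    · exact h

lemma nest' (H : Comb In χ) {i l j x y : Fin n} (hil : i < l) (hlj : l < j) (hx : In i l j x)
    (hy : In i x j y) : In i l j y :=
  H.sw₂ _ _ _ _ (H.nest i j l x y (hil.trans hlj).ne hil.ne hlj.ne' (H.sw₂ _ _ _ _ hx)
    (H.sw₂ _ _ _ _ hy))

lemma exists_E (H : Comb In χ) {i j : Fin n} : ∀ (N : ℕ) (l : Fin n), i < l → l < j →
    {x | In i l j x}.ncard ≤ N → ∃ k ∈ E In i j, k = l ∨ In i l j k := by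
  intro N
  induction N with
  | zero =>
    intro l hil hlj hN
    have : {x | In i l j x} = ∅ := (Set.ncard_eq_zero (Set.toFinite _)).mp (by omega)
    refine ⟨l, mem_E.mpr ⟨hil, hlj, fun x hx => ?_⟩, Or.inl rfl⟩
    have : x ∈ {x | In i l j x} := hx
    simp_all
  | succ N ih =>
    intro l hil hlj hN
    by_cases hem : ∃ x, In i l j x
    · obtain ⟨x, hx⟩ := hem
      obtain ⟨hix, hxj⟩ := H.between hil hlj hx
      have hlt : {y | In i x j y}.ncard < {y | In i l j y}.ncard := by
        refine Set.ncard_lt_ncard ⟨fun y hy => H.nest' hil hlj hx hy, fun hh => ?_⟩ (Set.toFinite _)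
        have : In i x j x := hh hx
        exact (H.ne _ _ _ _ hix.ne (hix.trans hxj).ne hxj.ne this).2.1 rfl
      obtain ⟨k, hk, hkx⟩ := ih x hix hxj (by omega)
      refine ⟨k, hk, Or.inr ?_⟩
      rcases hkx with rfl | hkx
      · exact hx
      · exact H.nest' hil hlj hx hkx
    · push Not at hem
      exact ⟨l, mem_E.mpr ⟨hil, hlj, hem⟩, Or.inl rfl⟩

/-- The pair `i`, `j` has a unique empty triangle, with middle vertex `k`. -/
def Bad (In : Fin n → Fin n → Fin n → Fin n → Prop) (i j k : Fin n) : Prop :=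
  i < k ∧ k < j ∧ ∀ l, i < l → l < j → l = k ∨ In i l j k

lemma two_le (H : Comb In χ) {i j : Fin n} (hadj : ∃ l, i < l ∧ l < j)
    (hbad : ¬ ∃ k, Bad In i j k) : 2 ≤ (E In i j).card := by
  obtain ⟨l, hil, hlj⟩ := hadj
  obtain ⟨k, hk, -⟩ := H.exists_E _ l hil hlj le_rfl
  by_contra hlt
  have h1 : (E In i j).card = 1 := by
    have := Finset.card_pos.mpr ⟨k, hk⟩
    omega
  obtain ⟨k', hk'⟩ := Finset.card_eq_one.mp h1
  apply hbad
  have hm := mem_E.mp (hk' ▸ Finset.mem_singleton_self k' : k' ∈ E In i j)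
  refine ⟨k', hm.1, hm.2.1, fun l h1 h2 => ?_⟩
  obtain ⟨k'', h3, h4⟩ := H.exists_E _ l h1 h2 le_rfl
  rw [hk', Finset.mem_singleton] at h3
  subst h3
  rcases h4 with h | h
  · exact Or.inl h.symm
  · exact Or.inr h

lemma bad_left (H : Comb In χ) {i j j' k k' : Fin n} (hb : Bad In i j k) (hb' : Bad In i j' k')
    (hkj : k' < j) (hjj : j < j') : χ i k j = - χ i k' j' := by
  obtain ⟨h1, h2, h3⟩ := hb
  obtain ⟨h1', h2', h3'⟩ := hb'
  have hij := h1.trans h2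
  refine H.sign hij.ne (hij.trans hjj).ne hjj.ne h1.ne h2.ne' ?_ (h3 k' h1' hkj)
  exact (h3' j hij hjj).resolve_left hkj.ne'

lemma bad_left' (H : Comb In χ) {i j j' k k' : Fin n} (hb : Bad In i j k) (hb' : Bad In i j' k')
    (hkj : k' < j) (hkj' : k < j') (hjj : j ≠ j') : χ i k j = - χ i k' j' := by
  rcases lt_or_gt_of_ne hjj with h | h
  · exact H.bad_left hb hb' hkj h
  · rw [H.bad_left hb' hb hkj' h]
    ring

lemma bad_right (H : Comb In χ) {i i' j k k' : Fin n} (hb : Bad In i j k) (hb' : Bad In i' j k')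
    (hkj : i < k') (hii : i' < i) : χ j k i = - χ j k' i' := by
  obtain ⟨h1, h2, h3⟩ := hb
  obtain ⟨h1', h2', h3'⟩ := hb'
  have hij := h1.trans h2
  refine H.sign hij.ne' (hii.trans hij).ne' hii.ne' h2.ne' h1.ne ?_ ?_
  · have := (h3' i hii hij).resolve_left hkj.ne
    exact H.sw₁ _ _ _ _ (H.sw₂ _ _ _ _ (H.sw₁ _ _ _ _ this))
  · rcases h3 k' hkj h2' with h | h
    · exact Or.inl h
    · exact Or.inr (H.sw₁ _ _ _ _ (H.sw₂ _ _ _ _ (H.sw₁ _ _ _ _ h)))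

lemma bad_right' (H : Comb In χ) {i i' j k k' : Fin n} (hb : Bad In i j k) (hb' : Bad In i' j k')
    (hkj : i < k') (hkj' : i' < k) (hii : i ≠ i') : χ j k i = - χ j k' i' := by
  rcases lt_or_gt_of_ne hii with h | h
  · rw [H.bad_right hb' hb hkj' h]
    ring
  · exact H.bad_right hb hb' hkj h

open Classical in
/-- Bad pairs within an interval. -/
def B (In : Fin n → Fin n → Fin n → Fin n → Prop) (lo hi : ℕ) : Finset (Fin n × Fin n) :=
  Finset.univ.filter fun p => lo ≤ p.1.val ∧ p.2.val < hi ∧ ∃ k, Bad In p.1 p.2 k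

open Classical in
def BL (In : Fin n → Fin n → Fin n → Fin n → Prop) (lo mid hi : ℕ) : Finset (Fin n × Fin n) :=
  Finset.univ.filter fun p => lo ≤ p.1.val ∧ p.1.val < mid ∧ mid ≤ p.2.val ∧ p.2.val < hi ∧
    ∃ k, Bad In p.1 p.2 k ∧ k.val < mid

open Classical in
def BR (In : Fin n → Fin n → Fin n → Fin n → Prop) (lo mid hi : ℕ) : Finset (Fin n × Fin n) :=
  Finset.univ.filter fun p => lo ≤ p.1.val ∧ p.1.val < mid ∧ mid ≤ p.2.val ∧ p.2.val < hi ∧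
    ∃ k, Bad In p.1 p.2 k ∧ mid ≤ k.val

lemma card_of_val {S : Finset (Fin n)} {lo hi : ℕ} (hS : ∀ x ∈ S, lo ≤ x.val ∧ x.val < hi) :
    S.card ≤ hi - lo := by
  rw [← Nat.card_Ico lo hi]
  refine Finset.card_le_card_of_injOn Fin.val (fun x hx => ?_) (Fin.val_injective.injOn)
  exact Finset.mem_coe.mpr (Finset.mem_Ico.mpr (hS x hx))

lemma card_BL (H : Comb In χ) (lo mid hi : ℕ) : (BL In lo mid hi).card ≤ 2 * (mid - lo) := by
  classical
  refine (Finset.card_le_mul_card_image (f := Prod.fst) _ 2 ?_).trans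
    (Nat.mul_le_mul_left 2 (card_of_val (hi := mid) (lo := lo) ?_))
  · intro i _
    by_contra hcon
    push Not at hcon
    obtain ⟨p, q, r, hp, hq, hr, hpq, hpr, hqr⟩ := Finset.two_lt_card_iff.mp hcon
    simp only [Finset.mem_filter, BL, Finset.mem_univ, true_and] at hp hq hr
    obtain ⟨i1, j1⟩ := p
    obtain ⟨i2, j2⟩ := q
    obtain ⟨i3, j3⟩ := r
    obtain ⟨⟨-, -, m1, -, k1, b1, l1⟩, rfl⟩ := hp
    obtain ⟨⟨-, -, m2, -, k2, b2, l2⟩, e2⟩ := hq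
    obtain ⟨⟨-, -, m3, -, k3, b3, l3⟩, e3⟩ := hr
    simp only at e2 e3 m1 m2 m3 b1 b2 b3
    subst e2
    subst e3
    have n12 : j1 ≠ j2 := fun e => hpq (by rw [e])
    have n13 : j1 ≠ j3 := fun e => hpr (by rw [e])
    have n23 : j2 ≠ j3 := fun e => hqr (by rw [e])
    have c12 := H.bad_left' b1 b2 (Fin.lt_def.mpr (by omega)) (Fin.lt_def.mpr (by omega)) n12
    have c13 := H.bad_left' b1 b3 (Fin.lt_def.mpr (by omega)) (Fin.lt_def.mpr (by omega)) n13
    have c23 := H.bad_left' b2 b3 (Fin.lt_def.mpr (by omega)) (Fin.lt_def.mpr (by omega)) n23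
    refine H.chi0 _ k1 j1 b1.1.ne (b1.1.trans b1.2.1).ne b1.2.1.ne ?_
    linear_combination (c12 + c13 - c23) / 2
  · intro x hx
    obtain ⟨p, hp, rfl⟩ := Finset.mem_image.mp hx
    simp only [Finset.mem_filter, BL, Finset.mem_univ, true_and] at hp
    exact ⟨hp.1, hp.2.1⟩

lemma card_BR (H : Comb In χ) (lo mid hi : ℕ) : (BR In lo mid hi).card ≤ 2 * (hi - mid) := by
  classical
  refine (Finset.card_le_mul_card_image (f := Prod.snd) _ 2 ?_).trans
    (Nat.mul_le_mul_left 2 (card_of_val (hi := hi) (lo := mid) ?_))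
  · intro i _
    by_contra hcon
    push Not at hcon
    obtain ⟨p, q, r, hp, hq, hr, hpq, hpr, hqr⟩ := Finset.two_lt_card_iff.mp hcon
    simp only [Finset.mem_filter, BR, Finset.mem_univ, true_and] at hp hq hr
    obtain ⟨i1, j1⟩ := p
    obtain ⟨i2, j2⟩ := q
    obtain ⟨i3, j3⟩ := r
    obtain ⟨⟨-, m1, -, -, k1, b1, l1⟩, rfl⟩ := hp
    obtain ⟨⟨-, m2, -, -, k2, b2, l2⟩, e2⟩ := hq
    obtain ⟨⟨-, m3, -, -, k3, b3, l3⟩, e3⟩ := hr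
    simp only at e2 e3 m1 m2 m3 b1 b2 b3
    subst e2
    subst e3
    have n12 : i1 ≠ i2 := fun e => hpq (by rw [e])
    have n13 : i1 ≠ i3 := fun e => hpr (by rw [e])
    have n23 : i2 ≠ i3 := fun e => hqr (by rw [e])
    have c12 := H.bad_right' b1 b2 (Fin.lt_def.mpr (by omega)) (Fin.lt_def.mpr (by omega)) n12
    have c13 := H.bad_right' b1 b3 (Fin.lt_def.mpr (by omega)) (Fin.lt_def.mpr (by omega)) n13
    have c23 := H.bad_right' b2 b3 (Fin.lt_def.mpr (by omega)) (Fin.lt_def.mpr (by omega)) n23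
    refine H.chi0 _ k1 i1 b1.2.1.ne' (b1.1.trans b1.2.1).ne' b1.1.ne' ?_
    linear_combination (c12 + c13 - c23) / 2
  · intro x hx
    obtain ⟨p, hp, rfl⟩ := Finset.mem_image.mp hx
    simp only [Finset.mem_filter, BR, Finset.mem_univ, true_and] at hp
    exact ⟨hp.2.2.1, hp.2.2.2.1⟩

lemma card_B (H : Comb In χ) (m : ℕ) : ∀ lo : ℕ, (B In lo (lo + 2 ^ m)).card ≤ 2 * m * 2 ^ m := by
  classical
  induction m with
  | zero =>
    intro lo
    have : B In lo (lo + 2 ^ 0) = ∅ := by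
      rw [Finset.eq_empty_iff_forall_notMem]
      intro p hp
      simp only [B, Finset.mem_filter, Finset.mem_univ, true_and] at hp
      obtain ⟨h1, h2, k, h3, h4, -⟩ := hp
      have := Fin.lt_def.mp (h3.trans h4)
      omega
    rw [this]
    simp
  | succ m ih =>
    intro lo
    have hsub : B In lo (lo + 2 ^ (m + 1)) ⊆
        (B In lo (lo + 2 ^ m) ∪ B In (lo + 2 ^ m) (lo + 2 ^ m + 2 ^ m)) ∪
        (BL In lo (lo + 2 ^ m) (lo + 2 ^ m + 2 ^ m) ∪
          BR In lo (lo + 2 ^ m) (lo + 2 ^ m + 2 ^ m)) := by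
      intro p hp
      have e : lo + 2 ^ (m + 1) = lo + 2 ^ m + 2 ^ m := by ring
      rw [e] at hp
      simp only [B, BL, BR, Finset.mem_filter, Finset.mem_univ, true_and,
        Finset.mem_union] at hp ⊢
      obtain ⟨h1, h2, k, hk⟩ := hp
      by_cases c1 : p.2.val < lo + 2 ^ m
      · exact Or.inl (Or.inl ⟨h1, c1, k, hk⟩)
      by_cases c2 : lo + 2 ^ m ≤ p.1.val
      · exact Or.inl (Or.inr ⟨c2, h2, k, hk⟩)
      right
      by_cases c3 : k.val < lo + 2 ^ m
      · exact Or.inl ⟨h1, not_le.mp c2, not_lt.mp c1, h2, k, hk, c3⟩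
      · exact Or.inr ⟨h1, not_le.mp c2, not_lt.mp c1, h2, k, hk, not_lt.mp c3⟩
    have h1 := ih lo
    have h2 := ih (lo + 2 ^ m)
    have h3 := H.card_BL lo (lo + 2 ^ m) (lo + 2 ^ m + 2 ^ m)
    have h4 := H.card_BR lo (lo + 2 ^ m) (lo + 2 ^ m + 2 ^ m)
    rw [Nat.add_sub_cancel_left] at h3 h4
    have h5 := (Finset.card_le_card hsub).trans ((Finset.card_union_le _ _).trans
      (add_le_add (Finset.card_union_le _ _) (Finset.card_union_le _ _)))
    calc _ ≤ _ := h5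
      _ ≤ (2 * m * 2 ^ m + 2 * m * 2 ^ m) + (2 * 2 ^ m + 2 * 2 ^ m) :=
        add_le_add (add_le_add h1 h2) (add_le_add h3 h4)
      _ = 2 * (m + 1) * 2 ^ (m + 1) := by ring

open Classical in
/-- The empty selected triangles. -/
def ET (In : Fin n → Fin n → Fin n → Fin n → Prop) : Finset (Fin n × Fin n × Fin n) :=
  Finset.univ.filter fun t => t.1 < t.2.1 ∧ t.2.1 < t.2.2 ∧ ∀ x, ¬ In t.1 t.2.1 t.2.2 x

open Classical in
lemma card_ET (In : Fin n → Fin n → Fin n → Fin n → Prop) :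
    (ET In).card = ∑ p ∈ Finset.univ.filter (fun p : Fin n × Fin n => p.1 < p.2),
      (E In p.1 p.2).card := by
  rw [Finset.card_eq_sum_card_fiberwise (f := fun t => (t.1, t.2.2))
    (t := Finset.univ.filter (fun p : Fin n × Fin n => p.1 < p.2))]
  · refine Finset.sum_congr rfl fun p hp => ?_
    refine Finset.card_bij (fun t _ => t.2.1) ?_ ?_ ?_
    · rintro ⟨i, k, j⟩ ht
      simp only [Finset.mem_filter, ET, Finset.mem_univ, true_and] at ht
      obtain ⟨h1, rfl⟩ := ht
      exact mem_E.mpr h1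
    · rintro ⟨i, k, j⟩ ht ⟨i', k', j'⟩ ht' e
      simp only [Finset.mem_filter, ET, Finset.mem_univ, true_and] at ht ht'
      obtain ⟨h1, rfl⟩ := ht
      obtain ⟨h1', e'⟩ := ht'
      simp only [Prod.mk.injEq] at e e' ⊢
      exact ⟨e'.1.symm, e, e'.2.symm⟩
    · intro k hk
      refine ⟨(p.1, k, p.2), ?_, rfl⟩
      simp only [Finset.mem_filter, ET, Finset.mem_univ, true_and]
      exact ⟨mem_E.mp hk, trivial⟩
  · intro t ht
    have ht' : t ∈ ET In := ht
    simp only [Finset.mem_filter, ET, Finset.mem_univ, true_and] at ht'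
    simp only [Finset.coe_filter, Finset.mem_univ, true_and]
    exact ht'.1.trans ht'.2.1

lemma card_pairs (n : ℕ) :
    2 * (Finset.univ.filter (fun p : Fin n × Fin n => p.1 < p.2)).card + n = n ^ 2 := by
  classical
  have h1 : (Finset.univ.filter (fun p : Fin n × Fin n => p.1 < p.2)).card =
      (Finset.univ.filter (fun p : Fin n × Fin n => p.2 < p.1)).card := by
    refine Finset.card_bij (fun p _ => p.swap) ?_ ?_ ?_
    · intro p hp
      simpa using hp
    · intro p _ q _ e
      exact Prod.swap_injective e
    · intro p hp
      exact ⟨p.swap, by simpa using hp, by simp⟩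
  have h2 : (Finset.univ.filter (fun p : Fin n × Fin n => p.1 = p.2)).card = n := by
    have := Finset.diag_card (Finset.univ : Finset (Fin n))
    rw [Finset.card_univ, Fintype.card_fin] at this
    refine Eq.trans (congrArg Finset.card ?_) this
    ext p
    simp
  have h3 : (Finset.univ : Finset (Fin n × Fin n)) =
      (Finset.univ.filter (fun p : Fin n × Fin n => p.1 < p.2) ∪
      Finset.univ.filter (fun p : Fin n × Fin n => p.2 < p.1)) ∪
      Finset.univ.filter (fun p : Fin n × Fin n => p.1 = p.2) := by
    ext p
    simp only [Finset.mem_univ, Finset.mem_union, Finset.mem_filter, true_and, true_iff]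
    rcases lt_trichotomy p.1 p.2 with h | h | h
    · exact Or.inl (Or.inl h)
    · exact Or.inr h
    · exact Or.inl (Or.inr h)
  have h4 := congrArg Finset.card h3
  rw [Finset.card_union_of_disjoint, Finset.card_union_of_disjoint, h2, ← h1, Finset.card_univ,
    Fintype.card_prod, Fintype.card_fin] at h4
  · rw [sq, h4]; ring
  · rw [Finset.disjoint_left]
    intro p hp hq
    simp only [Finset.mem_filter, Finset.mem_univ, true_and] at hp hq
    exact lt_asymm hp hq
  · rw [Finset.disjoint_left]
    intro p hp hq
    simp only [Finset.mem_filter, Finset.mem_univ, true_and, Finset.mem_union] at hp hq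
    rcases hp with h | h
    · exact h.ne hq
    · exact h.ne' hq

lemma bound (H : Comb In χ) {m : ℕ} (hm : n ≤ 2 ^ m) :
    n ^ 2 ≤ (ET In).card + 3 * n + 2 * m * 2 ^ m := by
  classical
  set P := Finset.univ.filter (fun p : Fin n × Fin n => p.1 < p.2) with hP
  set Adj := P.filter (fun p => ¬ ∃ l, p.1 < l ∧ l < p.2) with hAdj
  set Bd := P.filter (fun p => ∃ k, Bad In p.1 p.2 k) with hBd
  have hA : Adj.card ≤ n := by
    have : (Finset.univ : Finset (Fin n)).card = n := by simp
    refine le_of_le_of_eq ?_ this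
    refine Finset.card_le_card_of_injOn Prod.fst (fun _ _ => Finset.mem_coe.mpr (Finset.mem_univ _)) ?_
    rintro ⟨i, j⟩ hp ⟨i', j'⟩ hq e
    simp only [hAdj, hP, Finset.coe_filter, Finset.mem_filter, Finset.mem_univ, true_and,
      mem_ofPred_eq, not_exists, not_and, not_lt] at hp hq e
    subst e
    have h1 := hp.2 j' hq.1
    have h2 := hq.2 j hp.1
    rw [le_antisymm h1 h2]
  have hB : Bd.card ≤ 2 * m * 2 ^ m := by
    refine (Finset.card_le_card ?_).trans (H.card_B m 0)
    intro p hp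
    simp only [hBd, hP, B, Finset.mem_filter, Finset.mem_univ, true_and] at hp ⊢
    exact ⟨Nat.zero_le _, by have := p.2.isLt; omega, hp.2⟩
  have hsum : ∑ p ∈ P, 2 ≤ ∑ p ∈ P, ((E In p.1 p.2).card +
      2 * (if ¬ ∃ l, p.1 < l ∧ l < p.2 then 1 else 0) +
      (if ∃ k, Bad In p.1 p.2 k then 1 else 0)) := by
    refine Finset.sum_le_sum fun p hp => ?_
    by_cases h1 : ∃ l, p.1 < l ∧ l < p.2
    · by_cases h2 : ∃ k, Bad In p.1 p.2 k
      · obtain ⟨l, hl1, hl2⟩ := h1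
        obtain ⟨k, hk, -⟩ := H.exists_E _ l hl1 hl2 le_rfl
        have := Finset.card_pos.mpr ⟨k, hk⟩
        rw [if_pos h2]
        omega
      · have := H.two_le h1 h2
        omega
    · rw [if_pos h1]
      omega
  rw [Finset.sum_add_distrib, Finset.sum_add_distrib, ← card_ET, ← Finset.mul_sum,
    ← Finset.card_filter, ← Finset.card_filter, Finset.sum_const, smul_eq_mul] at hsum
  have hc := card_pairs n
  rw [← hP] at hc
  rw [← hAdj, ← hBd] at hsum
  omega

lemma real_bound (H : Comb In χ) (hn : 2 ≤ n) :
    (n : ℝ) ^ 2 - 20 * n * Real.log n ≤ ((ET In).card : ℝ) := by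
  have h1 : n ≤ 2 ^ (Nat.log 2 n + 1) := (Nat.lt_pow_succ_log_self one_lt_two n).le
  have h2 := H.bound h1
  have h3 : 2 ^ Nat.log 2 n ≤ n := Nat.pow_log_le_self 2 (by omega)
  set L := Nat.log 2 n with hL
  have h4 : ((n : ℝ)) ^ 2 ≤ (ET In).card + 3 * n + 2 * (L + 1) * (2 ^ (L + 1)) := by
    exact_mod_cast h2
  have h5 : (2 : ℝ) ^ L ≤ n := by exact_mod_cast h3
  have hn' : (2 : ℝ) ≤ n := by exact_mod_cast hn
  have h6 : (L : ℝ) * Real.log 2 ≤ Real.log n := by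
    rw [← Real.log_pow]
    exact Real.log_le_log (by positivity) h5
  have h7 : Real.log 2 ≤ Real.log n := Real.log_le_log (by norm_num) hn'
  have h8 := Real.log_two_gt_d9
  have h9 : (L : ℝ) ≤ 1.5 * Real.log n := by nlinarith [(Nat.cast_nonneg L : (0 : ℝ) ≤ L)]
  have h10 : (1 : ℝ) ≤ 1.5 * Real.log n := by linarith
  have h11 : 2 * ((L : ℝ) + 1) * (2 ^ (L + 1)) ≤ 4 * (L + 1) * n := by
    rw [pow_succ]
    nlinarith [(Nat.cast_nonneg L : (0 : ℝ) ≤ L)]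
  nlinarith

end Comb
end HCIV

/-- A hereditarily convex intermediate value drawing of `K_n` has at least
`n² − c·n·log n` empty triangles. -/
theorem emptyTriangles_of_hereditarily_convex_IV :
    ∃ c : ℝ, 0 < c ∧ ∀ n : ℕ, 2 ≤ n → ∀ D : GoodDrawing n SpherePt,
      ∀ Δch : Fin n → Fin n → Fin n → Set SpherePt,
        (∀ a b c' : Fin n, a ≠ b → a ≠ c' → b ≠ c' →
          IsClosedSide (D.tri a b c') (Δch a b c') ∧ D.ConvexDisc (Δch a b c')) →
        (∀ a b c' : Fin n, Δch a b c' = Δch b a c' ∧ Δch a b c' = Δch a c' b) →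
        (∀ a b c' a' b' c'' : Fin n, a ≠ b → a ≠ c' → b ≠ c' →
          a' ≠ b' → a' ≠ c'' → b' ≠ c'' →
          D.tri a' b' c'' ⊆ Δch a b c' → Δch a' b' c'' ⊆ Δch a b c') →
      ∀ π : Equiv.Perm (Fin n),
        (∀ a b c' : Fin n, a ≠ b → a ≠ c' → b ≠ c' →
          ∀ Δ : Set SpherePt, IsClosedSide (D.tri a b c') Δ → D.ConvexDisc Δ →
            ∀ x : Fin n, D.vtx x ∈ interior Δ →
              (∃ y ∈ ({a, b, c'} : Set (Fin n)), π y < π x) ∧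
              (∃ y ∈ ({a, b, c'} : Set (Fin n)), π x < π y)) →
        (n : ℝ) ^ 2 - c * n * Real.log n ≤ (D.emptyTriangles.ncard : ℝ) := by
  refine ⟨20, by norm_num, ?_⟩
  intro n hn D Dc hside hsymm hher π hIV
  obtain ⟨N, hN⟩ := HCIV.exists_off D
  obtain ⟨h, g, C⟩ := HCIV.exists_chart N
  have H : HCIV.HC D Dc N h g :=
    ⟨C, hN, fun a b c h1 h2 h3 => (hside a b c h1 h2 h3).1,
      fun a b c h1 h2 h3 => (hside a b c h1 h2 h3).2, fun a b c => (hsymm a b c).1,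
      fun a b c => (hsymm a b c).2, hher⟩
  obtain ⟨χ, hχ⟩ := H.exists_data
  have hs : ∀ {x y : Fin n}, x ≠ y → π.symm x ≠ π.symm y := fun hxy e => hxy (π.symm.injective e)
  have HC : HCIV.Comb (fun a b c x => D.vtx (π.symm x) ∈
      HCIV.US D Dc (π.symm a) (π.symm b) (π.symm c))
      (fun a b c => χ (π.symm a) (π.symm b) (π.symm c)) := by
    refine ⟨?_, ?_, ?_, ?_, ?_, ?_, ?_, ?_, ?_⟩
    · intro a b c x hx
      rw [H.US_swap]
      exact hx
    · intro a b c x hx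
      rw [H.US_swap']
      exact hx
    · intro a b c x h1 h2 h3 hx
      obtain ⟨e1, e2, e3⟩ := HCIV.HC.ne_of_mem (hs h1) (hs h2) (hs h3) hx
      exact ⟨fun e => e1 (by rw [e]), fun e => e2 (by rw [e]), fun e => e3 (by rw [e])⟩
    · intro a b c x y h1 h2 h3 hx hy
      exact H.nest (hs h1) (hs h2) (hs h3) hx hy
    · intro a b c h1 h2 h3
      exact (hχ _ _ _ (hs h1) (hs h2) (hs h3)).1
    · intro a b c h1 h2 h3
      exact (hχ _ _ _ (hs h1) (hs h2) (hs h3)).2.1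
    · intro a b c h1 h2 h3
      exact (hχ _ _ _ (hs h1) (hs h2) (hs h3)).2.2.1
    · intro a b c x h1 h2 h3 hx
      exact (hχ _ _ _ (hs h1) (hs h2) (hs h3)).2.2.2 _ hx
    · intro a b c x h1 h2 h3 hx
      obtain ⟨hc1, hc2⟩ := hside _ _ _ (hs h1) (hs h2) (hs h3)
      have hxin : D.vtx (π.symm x) ∈ interior (Dc (π.symm a) (π.symm b) (π.symm c)) :=
        mem_interior.mpr ⟨_, fun z hz => hz.1, H.isOpen_US (hs h1) (hs h2) (hs h3), hx⟩
      obtain ⟨⟨y, hy, hyl⟩, z, hz, hzl⟩ := hIV _ _ _ (hs h1) (hs h2) (hs h3) _ hc1 hc2 _ hxin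
      rw [Equiv.apply_symm_apply] at hyl hzl
      constructor
      · rcases hy with rfl | rfl | rfl
        · rw [Equiv.apply_symm_apply] at hyl; exact Or.inl hyl
        · rw [Equiv.apply_symm_apply] at hyl; exact Or.inr (Or.inl hyl)
        · rw [Equiv.apply_symm_apply] at hyl; exact Or.inr (Or.inr hyl)
      · rcases hz with rfl | rfl | rfl
        · rw [Equiv.apply_symm_apply] at hzl; exact Or.inl hzl
        · rw [Equiv.apply_symm_apply] at hzl; exact Or.inr (Or.inl hzl)
        · rw [Equiv.apply_symm_apply] at hzl; exact Or.inr (Or.inr hzl)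
  refine (HC.real_bound hn).trans ?_
  have hfin := HCIV.emptyTriangles_finite C hN
  rw [Set.ncard_eq_toFinset_card _ hfin]
  norm_cast
  refine Finset.card_le_card_of_injOn (fun t => (({π.symm t.1, π.symm t.2.1, π.symm t.2.2} :
    Finset (Fin n)), HCIV.US D Dc (π.symm t.1) (π.symm t.2.1) (π.symm t.2.2))) ?_ ?_
  · rintro ⟨i, k, j⟩ ht
    have ht' := Finset.mem_coe.mp ht
    simp only [HCIV.Comb.ET, Finset.mem_filter, Finset.mem_univ, true_and] at ht'
    obtain ⟨h1, h2, h3⟩ := ht'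
    rw [Finset.mem_coe, Set.Finite.mem_toFinset]
    refine H.mem_empty (hs h1.ne) (hs (h1.trans h2).ne) (hs h2.ne) fun x hx => ?_
    exact h3 (π x) (by rw [Equiv.symm_apply_apply]; exact hx)
  · rintro ⟨i, k, j⟩ ht ⟨i', k', j'⟩ ht' e
    have ht1 := Finset.mem_coe.mp ht
    have ht1' := Finset.mem_coe.mp ht'
    simp only [HCIV.Comb.ET, Finset.mem_filter, Finset.mem_univ, true_and] at ht1 ht1'
    obtain ⟨h1, h2, -⟩ := ht1
    obtain ⟨h1', h2', -⟩ := ht1'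
    have e' : ({π.symm i, π.symm k, π.symm j} : Finset (Fin n)) =
      {π.symm i', π.symm k', π.symm j'} := congrArg Prod.fst e
    have hm : ∀ x, (x = i ∨ x = k ∨ x = j) ↔ (x = i' ∨ x = k' ∨ x = j') := by
      intro x
      have := Finset.ext_iff.mp e' (π.symm x)
      simpa only [Finset.mem_insert, Finset.mem_singleton, π.symm.injective.eq_iff] using this
    have a1 := (hm i).mp (Or.inl rfl)
    have a2 := (hm k).mp (Or.inr (Or.inl rfl))
    have a3 := (hm j).mp (Or.inr (Or.inr rfl))
    have b1 := (hm i').mpr (Or.inl rfl)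
    have b2 := (hm k').mpr (Or.inr (Or.inl rfl))
    have b3 := (hm j').mpr (Or.inr (Or.inr rfl))
    clear hm e e' ht ht' hχ hIV hher hsymm hside
    simp only [Fin.lt_def, Fin.ext_iff] at *
    simp only [Prod.mk.injEq, Fin.ext_iff]
    omega

end
end
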